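/- Assume the uniform ellipticity condition (D3) and the regularity condition (R2), that the probability measure m on ℝ has a finite first moment, and that its cumulative distribution function H*m is C³ on ℝ, bounded together with its derivatives up to order three, with third derivative β-Hölder continuous (i.e., H*m belongs to the Hölder space H^{3+β}(ℝ)). Then for every finite T > 0, the unique weak solution F in 𝓕 of the Cauchy problem with initial condition H*m is C^{1,2} on [0,T]×ℝ and bounded together with its derivatives ∂_t F, ∂_x F, ∂²_x F; in particular F solves the Cauchy problem in the classical (pointwise) sense. -/

import Mathlib

open MeasureTheory Set Filter Topology Function
open scoped ENNReal

noncomputable section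

/-- `primitive f u = ∫₀^u f(v) dv`. -/
def primitive (f : ℝ → ℝ) : ℝ → ℝ := fun u => ∫ v in (0:ℝ)..u, f v

/-- The cumulative distribution function `H * μ` of a measure `μ` on `ℝ`. -/
def cdfOf (μ : MeasureTheory.Measure ℝ) : ℝ → ℝ := fun x => (μ (Set.Iic x)).toReal

/-- Pseudo-inverse of a cdf: `F⁻¹(u) = inf {x | F x > u}`. -/
def pinv (F : ℝ → ℝ) (u : ℝ) : ℝ := sInf {x : ℝ | u < F x}

/-- Wasserstein distance of order `p` between two cdfs, as an element of `[0,∞]`: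
`W_p(F,G) = (∫₀¹ |F⁻¹(u) - G⁻¹(u)|^p du)^(1/p)`. -/
def Wdist (p : ℝ) (F G : ℝ → ℝ) : ℝ≥0∞ :=
  (∫⁻ u in Set.Ioo (0:ℝ) 1, ENNReal.ofReal (|pinv F u - pinv G u| ^ p)) ^ (1/p)

/-- `F` is a weak solution of `∂ₜ F = (1/2) ∂ₓₓ (A (F)) - ∂ₓ (B (F))` with
initial condition `F₀`. -/
def IsWeakSolution (A B : ℝ → ℝ) (F₀ : ℝ → ℝ) (F : ℝ → ℝ → ℝ) : Prop :=
  ∀ g : ℝ → ℝ → ℝ, ContDiff ℝ (⊤ : ℕ∞) (Function.uncurry g) →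
    HasCompactSupport (Function.uncurry g) →
    ∀ t : ℝ, 0 ≤ t →
      ((∫ x : ℝ, g t x * F t x) - ∫ x : ℝ, g 0 x * F₀ x) =
        ∫ x : ℝ, ∫ s in (0:ℝ)..t,
          ((1/2) * A (F s x) * deriv (deriv (fun y => g s y)) x
            + B (F s x) * deriv (fun y => g s y) x
            + F s x * deriv (fun r => g r x) s)

/-- Membership in the class `𝓕`. -/
def MemF (F : ℝ → ℝ → ℝ) : Prop :=
  ∃ P : ℝ → ProbabilityMeasure ℝ,
    ContinuousOn P (Set.Ici 0) ∧
    (∀ t : ℝ, 0 ≤ t → Integrable (fun x => |x|) (P t : Measure ℝ)) ∧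
    (∀ T : ℝ, 0 < T → IntegrableOn (fun t => ∫ x, |x| ∂(P t : Measure ℝ)) (Set.Icc 0 T)) ∧
    (∀ t : ℝ, 0 ≤ t → ∀ x : ℝ, F t x = ((P t : Measure ℝ) (Set.Iic x)).toReal)

/-! The unknown `w = A(F)` turns the equation into the uniformly parabolic quasilinear equation
`∂ₜw = ½ α(w) ∂ₓₓw - β(w) ∂ₓw` with `α = a ∘ A⁻¹` and `β = b ∘ A⁻¹`. Its explicit finite-difference
scheme averages over the steps of a random walk, and a reflection coupling of two such walks gives
Lipschitz bounds which do not depend on the mesh. Applied to `w` and to its difference quotients in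
space and time, which again solve drift–diffusion schemes, they yield enough compactness to pass to
the limit along an ultrafilter, and the limit `W` is a classical solution. Since `A` is strictly
monotone, the difference of two bounded weak solutions satisfies a weighted energy estimate,
justified by mollification, which forces it to vanish; hence `F = A⁻¹(W)`. -/

/-! ### A Lipschitz estimate for drift–diffusion schemes -/

theorem abs_sub_le_mul_of_adjacent {v : ℤ → ℝ} {L : ℝ} (hv : ∀ i, |v (i + 1) - v i| ≤ L)
    (i : ℤ) (k : ℕ) : |v (i + k) - v i| ≤ L * k := by
  induction k with
  | zero => simp
  | succ k ih =>
    calc |v (i + (k + 1 : ℕ)) - v i| = |(v (i + k + 1) - v (i + k)) + (v (i + k) - v i)| := by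
          push_cast; rw [← add_assoc]; congr 1; ring
      _ ≤ L + L * k := (abs_add_le _ _).trans (add_le_add (hv _) ih)
      _ = L * (k + 1 : ℕ) := by push_cast; ring

theorem abs_sub_le_mul_abs_of_adjacent {v : ℤ → ℝ} {L : ℝ} (hv : ∀ i, |v (i + 1) - v i| ≤ L)
    (i j : ℤ) : |v j - v i| ≤ L * |(j : ℝ) - i| := by
  wlog h : i ≤ j generalizing i j
  · rw [abs_sub_comm, abs_sub_comm (j : ℝ)]
    exact this j i (le_of_not_ge h)
  obtain ⟨k, rfl⟩ := Int.le.dest h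
  simpa using abs_sub_le_mul_of_adjacent hv i k

/-- The concave modulus of continuity `z ↦ M z - K z²` propagated by the scheme. -/
def quadModulus (M K z : ℝ) : ℝ := M * z - K * z ^ 2

theorem half_mul_le_quadModulus {M K δ z : ℝ} (hK : 0 ≤ K) (hM : 4 * δ * K = M) (hz : 0 ≤ z)
    (hzδ : z ≤ 2 * δ) : M * z / 2 ≤ quadModulus M K z := by
  have : K * z * z ≤ K * z * (2 * δ) := by gcongr
  unfold quadModulus
  nlinarith

/-- An explicit scheme on the grid `h ℤ` with time step `r h²` for an equation
`∂ₜ u = a ∂ₓₓ u + b ∂ₓ u + f` : the rates `p` and `q` of jumping to the right and to the left are at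
least `θ`, their difference (the drift) is at most `C h`, and the source `f` is at most `C₁`. -/
structure IsDriftDiffusionScheme (r h θ C C₁ : ℝ) (p q f u : ℕ → ℤ → ℝ) : Prop where
  step : ∀ n i, u (n + 1) i = u n i +
    r * (p n i * (u n (i + 1) - u n i) + q n i * (u n (i - 1) - u n i) + h ^ 2 * f n i)
  le_right : ∀ n i, θ ≤ p n i
  le_left : ∀ n i, θ ≤ q n i
  cfl : ∀ n i, r * (p n i + q n i) ≤ 1 / 2
  drift : ∀ n i, |p n i - q n i| ≤ C * h
  source : ∀ n i, |f n i| ≤ C₁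

namespace IsDriftDiffusionScheme

variable {r h θ C C₁ M K : ℝ} {p q f u : ℕ → ℤ → ℝ}

protected theorem neg (H : IsDriftDiffusionScheme r h θ C C₁ p q f u) :
    IsDriftDiffusionScheme r h θ C C₁ p q (-f) (-u) where
  step n i := by simp only [Pi.neg_apply, H.step]; ring
  le_right := H.le_right
  le_left := H.le_left
  cfl := H.cfl
  drift := H.drift
  source n i := by simpa only [Pi.neg_apply, abs_neg] using H.source n i

theorem drift_add_source_le (H : IsDriftDiffusionScheme r h θ C C₁ p q f u) (hh : 0 ≤ h)
    (hK : 0 ≤ K) (hcond : C * M + C₁ ≤ 3 * θ * K) {z : ℝ} (hz : 0 ≤ z) (hzM : 2 * K * z ≤ M)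
    (n : ℕ) (i j : ℤ) :
    ((p n j - q n j) - (p n i - q n i)) * h * (M - 2 * K * z) + h ^ 2 * (f n j - f n i) ≤
      6 * θ * K * h ^ 2 := by
  have hCh : 0 ≤ C * h := (abs_nonneg _).trans (H.drift n i)
  have hdrift : (p n j - q n j) - (p n i - q n i) ≤ 2 * (C * h) := by
    linarith [(abs_le.1 (H.drift n j)).2, (abs_le.1 (H.drift n i)).1]
  have hsource : f n j - f n i ≤ 2 * C₁ := by
    linarith [(abs_le.1 (H.source n j)).2, (abs_le.1 (H.source n i)).1]
  have hslope : M - 2 * K * z ≤ M := sub_le_self _ (by positivity)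
  calc ((p n j - q n j) - (p n i - q n i)) * h * (M - 2 * K * z) + h ^ 2 * (f n j - f n i)
      = ((p n j - q n j) - (p n i - q n i)) * (h * (M - 2 * K * z)) + h ^ 2 * (f n j - f n i) := by
        ring
    _ ≤ 2 * (C * h) * (h * (M - 2 * K * z)) + h ^ 2 * (2 * C₁) := by gcongr
    _ ≤ 2 * (C * h) * (h * M) + h ^ 2 * (2 * C₁) := by gcongr
    _ = 2 * (C * M + C₁) * h ^ 2 := by ring
    _ ≤ 2 * (3 * θ * K) * h ^ 2 := by gcongr
    _ = 6 * θ * K * h ^ 2 := by ring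

/- Reflection coupling: two walkers at `i` and `j` make a fraction `θ` of their jumps in opposite
directions, which moves their distance by `± 2 h`, and jump independently otherwise. The strict
concavity of the modulus at scale `2 h` pays for the drift and for the source. -/
theorem succ_sub_le_quadModulus (H : IsDriftDiffusionScheme r h θ C C₁ p q f u) (hr : 0 ≤ r)
    (hh : 0 ≤ h) (hθ : 0 ≤ θ) (hK : 0 ≤ K)
    (hcond : C * M + C₁ ≤ 3 * θ * K) {n : ℕ} {i j : ℤ} {z : ℝ} (hz : 0 ≤ z) (hzM : 2 * K * z ≤ M)
    (hin : (1 - r * (p n j + q n j + p n i + q n i - 2 * θ)) * (u n j - u n i) +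
        r * θ * (u n (j - 1) - u n (i + 1)) ≤
      (1 - r * (p n j + q n j + p n i + q n i - 2 * θ)) * quadModulus M K z +
        r * θ * (quadModulus M K (z - 2 * h) + 2 * K * h ^ 2))
    (hout : u n (j + 1) - u n (i - 1) ≤ quadModulus M K (z + 2 * h))
    (hjr : u n (j + 1) - u n i ≤ quadModulus M K (z + h))
    (hil : u n j - u n (i - 1) ≤ quadModulus M K (z + h))
    (hjl : u n (j - 1) - u n i ≤ quadModulus M K (z - h))
    (hir : u n j - u n (i + 1) ≤ quadModulus M K (z - h)) :
    u (n + 1) j - u (n + 1) i ≤ quadModulus M K z := by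
  have hpj := sub_nonneg.2 (H.le_right n j)
  have hqj := sub_nonneg.2 (H.le_left n j)
  have hpi := sub_nonneg.2 (H.le_right n i)
  have hqi := sub_nonneg.2 (H.le_left n i)
  have hconcave : 0 ≤ ((p n j - θ) + (q n j - θ) + (p n i - θ) + (q n i - θ)) * (K * h ^ 2) := by
    positivity
  have hgain := H.drift_add_source_le hh hK hcond hz hzM n i j
  have hsum : (p n j - θ) * (u n (j + 1) - u n i) + (q n i - θ) * (u n j - u n (i - 1)) +
      (q n j - θ) * (u n (j - 1) - u n i) + (p n i - θ) * (u n j - u n (i + 1)) +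
      θ * (u n (j + 1) - u n (i - 1)) ≤
      (p n j - θ) * quadModulus M K (z + h) + (q n i - θ) * quadModulus M K (z + h) +
      (q n j - θ) * quadModulus M K (z - h) + (p n i - θ) * quadModulus M K (z - h) +
      θ * quadModulus M K (z + 2 * h) := by
    gcongr
  calc u (n + 1) j - u (n + 1) i
      = ((1 - r * (p n j + q n j + p n i + q n i - 2 * θ)) * (u n j - u n i) +
          r * θ * (u n (j - 1) - u n (i + 1))) +
        r * ((p n j - θ) * (u n (j + 1) - u n i) + (q n i - θ) * (u n j - u n (i - 1)) +
          (q n j - θ) * (u n (j - 1) - u n i) + (p n i - θ) * (u n j - u n (i + 1)) +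
          θ * (u n (j + 1) - u n (i - 1)) + h ^ 2 * (f n j - f n i)) := by
        rw [H.step, H.step]; ring
    _ ≤ _ := add_le_add hin (mul_le_mul_of_nonneg_left (add_le_add_left hsum _) hr)
    _ = quadModulus M K z + r * (((p n j - q n j) - (p n i - q n i)) * h * (M - 2 * K * z) -
          ((p n j - θ) + (q n j - θ) + (p n i - θ) + (q n i - θ)) * (K * h ^ 2) -
          6 * θ * K * h ^ 2 + h ^ 2 * (f n j - f n i)) := by
        unfold quadModulus; ring
    _ ≤ quadModulus M K z + r * 0 := by gcongr; linarith
    _ = quadModulus M K z := by ring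

theorem succ_sub_le_of_forall_sub_le (H : IsDriftDiffusionScheme r h θ C C₁ p q f u) {δ : ℝ}
    (hr : 0 ≤ r) (hh : 0 ≤ h) (hθ : 0 ≤ θ) (hK : 0 ≤ K) (hcond : C * M + C₁ ≤ 3 * θ * K)
    (hδ : 2 * h ≤ δ) (hMK : 4 * δ * K = M) {n : ℕ}
    (ih : ∀ k : ℕ, k * h ≤ 2 * δ → ∀ i : ℤ, u n (i + k) - u n i ≤ quadModulus M K (k * h))
    (k : ℕ) (hk : (k + 1 : ℕ) * h ≤ δ) (i : ℤ) :
    u (n + 1) (i + (k + 1 : ℕ)) - u (n + 1) i ≤ quadModulus M K ((k + 1 : ℕ) * h) := by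
  replace ih (l : ℕ) (x y : ℤ) (s : ℝ) (hxy : x = y + l) (hs : s = l * h) (hl : l * h ≤ 2 * δ) :
      u n x - u n y ≤ quadModulus M K s := by
    rw [hxy, hs]; exact ih l hl y
  have hkh : (k * h : ℝ) = (k + 1 : ℕ) * h - h := by push_cast; ring
  have hkh₀ : (0 : ℝ) ≤ k * h := by positivity
  refine H.succ_sub_le_quadModulus hr hh hθ hK hcond (by positivity) ?_ ?_
    (ih (k + 3) _ _ _ (by push_cast; ring) (by push_cast; ring) (by push_cast at *; linarith))
    (ih (k + 2) _ _ _ (by push_cast; ring) (by push_cast; ring) (by push_cast at *; linarith))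
    (ih (k + 2) _ _ _ (by push_cast; ring) (by push_cast; ring) (by push_cast at *; linarith))
    (ih k _ _ _ (by push_cast; ring) (by push_cast; ring) (by linarith))
    (ih k _ _ _ (by push_cast; ring) (by push_cast; ring) (by linarith))
  · nlinarith [mul_le_mul_of_nonneg_left hk hK]
  have hself := ih (k + 1) (i + (k + 1 : ℕ)) i _ rfl rfl (by linarith)
  have hrθ : 0 ≤ r * θ := mul_nonneg hr hθ
  have hstay : 0 ≤ 1 - r * (p n (i + (k + 1 : ℕ)) + q n (i + (k + 1 : ℕ)) + p n i + q n i -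
      2 * θ) - r * θ := by
    linarith [H.cfl n (i + (k + 1 : ℕ)), H.cfl n i]
  rcases k with _ | k
  -- Neighbouring walkers swap places when they jump towards each other.
  · have hswap : u n (i + (0 + 1 : ℕ) - 1) - u n (i + 1) = -(u n (i + (0 + 1 : ℕ)) - u n i) := by
      simp
    have hodd : quadModulus M K ((0 + 1 : ℕ) * h - 2 * h) + 2 * K * h ^ 2 =
        -quadModulus M K ((0 + 1 : ℕ) * h) := by
      unfold quadModulus; push_cast; ring
    rw [hswap, hodd]
    linarith [mul_le_mul_of_nonneg_left hself hstay]
  · have hreflect := ih k (i + (k + 1 + 1 : ℕ) - 1) (i + 1) ((k + 1 + 1 : ℕ) * h - 2 * h)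
      (by push_cast; ring) (by push_cast; ring) (by push_cast at *; linarith)
    gcongr
    · linarith
    · nlinarith [mul_nonneg hK (sq_nonneg h)]

theorem sub_le_quadModulus (H : IsDriftDiffusionScheme r h θ C C₁ p q f u) {δ K₀ L₀ : ℝ}
    (hr : 0 ≤ r) (hh : 0 ≤ h) (hθ : 0 ≤ θ) (hK : 0 ≤ K) (hcond : C * M + C₁ ≤ 3 * θ * K)
    (hδ : 2 * h ≤ δ) (hMK : 4 * δ * K = M) (hML : 2 * L₀ ≤ M) (hMδ : 4 * K₀ ≤ M * δ)
    (hK₀ : ∀ n i, |u n i| ≤ K₀) (hL₀ : ∀ i, |u 0 (i + 1) - u 0 i| ≤ L₀ * h) (n k : ℕ)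
    (hk : k * h ≤ 2 * δ) (i : ℤ) : u n (i + k) - u n i ≤ quadModulus M K (k * h) := by
  have hδ₀ : 0 ≤ δ := by linarith
  have hM : 0 ≤ M := hMK ▸ by positivity
  induction n generalizing k i with
  | zero =>
    have hlip := (le_abs_self _).trans (abs_sub_le_mul_of_adjacent hL₀ i k)
    have hmod := half_mul_le_quadModulus hK hMK (by positivity) hk
    linarith [mul_le_mul_of_nonneg_right hML (by positivity : 0 ≤ k * h)]
  | succ n ih =>
    rcases le_or_gt δ (k * h) with hfar | hnear
    · have hmod := half_mul_le_quadModulus hK hMK (by positivity) hk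
      linarith [mul_le_mul_of_nonneg_left hfar hM, (abs_le.1 (hK₀ (n + 1) (i + k))).2,
        (abs_le.1 (hK₀ (n + 1) i)).1]
    rcases k with _ | k
    · simp [quadModulus]
    · exact H.succ_sub_le_of_forall_sub_le hr hh hθ hK hcond hδ hMK
        (fun k hk i => ih k hk i) k hnear.le i

end IsDriftDiffusionScheme

theorem exists_lipschitz_bound_of_isDriftDiffusionScheme {θ C C₁ K₀ L₀ : ℝ} (hθ : 0 < θ)
    (hC : 0 ≤ C) (hC₁ : 0 ≤ C₁) (hK₀ : 0 ≤ K₀) (hL₀ : 0 ≤ L₀) :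
    ∃ M δ : ℝ, 0 ≤ M ∧ 0 < δ ∧ ∀ (r h : ℝ) (p q f u : ℕ → ℤ → ℝ), 0 ≤ r → 0 ≤ h → h ≤ δ →
      IsDriftDiffusionScheme r h θ C C₁ p q f u → (∀ n i, |u n i| ≤ K₀) →
      (∀ i, |u 0 (i + 1) - u 0 i| ≤ L₀ * h) → ∀ n i, |u n (i + 1) - u n i| ≤ M * h := by
  set δ : ℝ := 3 * θ / (4 * (C + 1)) with hδ
  have hδ₀ : 0 < δ := by positivity
  set M : ℝ := C₁ + 2 * L₀ + 4 * K₀ / δ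
  have hK₀δ : 0 ≤ 4 * K₀ / δ := by positivity
  have hM₀ : 0 ≤ M := by positivity
  refine ⟨M, δ / 2, hM₀, by positivity, fun r h p q f u hr hh hhδ H hu hu₀ n i => ?_⟩
  have hcond : C * M + C₁ ≤ 3 * θ * (M / (4 * δ)) := by
    have : 3 * θ * (M / (4 * δ)) = (C + 1) * M := by rw [hδ]; field_simp
    rw [this]; linarith
  have hMδ : 4 * K₀ ≤ M * δ := by
    rw [← div_le_iff₀ hδ₀]; linarith
  have main {f u : ℕ → ℤ → ℝ} (H : IsDriftDiffusionScheme r h θ C C₁ p q f u)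
      (hu : ∀ n i, |u n i| ≤ K₀) (hu₀ : ∀ i, |u 0 (i + 1) - u 0 i| ≤ L₀ * h) :
      u n (i + 1) - u n i ≤ M * h := by
    have := H.sub_le_quadModulus (K := M / (4 * δ)) (M := M) hr hh hθ.le (by positivity) hcond
      (by linarith) (by field_simp) (by linarith) hMδ hu hu₀ n 1 (by push_cast; linarith) i
    have hsq : 0 ≤ M / (4 * δ) * h ^ 2 := by positivity
    simp only [Nat.cast_one, one_mul, quadModulus] at this
    linarith
  refine abs_sub_le_iff.2 ⟨main H hu hu₀, ?_⟩
  have := main H.neg (by simpa using hu) fun i => by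
    simpa only [Pi.neg_apply, neg_sub_neg, abs_sub_comm] using hu₀ i
  simpa only [Pi.neg_apply, neg_sub_neg] using this

/-! ### Uniform estimates for the finite-difference scheme -/

theorem abs_mul_le_mul_of_abs_le {x y a b : ℝ} (hx : |x| ≤ a) (hy : |y| ≤ b) :
    |x * y| ≤ a * b :=
  abs_mul x y ▸ mul_le_mul hx hy (abs_nonneg _) ((abs_nonneg _).trans hx)

/-- The forward difference quotient of a grid function with mesh `h`. -/
def fwdQuot (h : ℝ) (v : ℤ → ℝ) (i : ℤ) : ℝ := (v (i + 1) - v i) / h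

/-- The central difference quotient of a grid function with mesh `h`. -/
def centralQuot (h : ℝ) (v : ℤ → ℝ) (i : ℤ) : ℝ := (v (i + 1) - v (i - 1)) / (2 * h)

/-- The second difference quotient of a grid function with mesh `h`. -/
def secondQuot (h : ℝ) (v : ℤ → ℝ) (i : ℤ) : ℝ := (v (i + 1) - 2 * v i + v (i - 1)) / h ^ 2

section DifferenceQuotients

variable {h C : ℝ} {v : ℤ → ℝ}

theorem abs_fwdQuot_le_iff (hh : 0 < h) {i : ℤ} :
    |fwdQuot h v i| ≤ C ↔ |v (i + 1) - v i| ≤ C * h := by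
  rw [fwdQuot, abs_div, abs_of_pos hh, div_le_iff₀ hh]

theorem centralQuot_eq (h : ℝ) (v : ℤ → ℝ) (i : ℤ) :
    centralQuot h v i = (fwdQuot h v i + fwdQuot h v (i - 1)) / 2 := by
  simp only [centralQuot, fwdQuot, sub_add_cancel]; ring

theorem fwdQuot_succ_sub (hh : h ≠ 0) (i : ℤ) :
    fwdQuot h v (i + 1) - fwdQuot h v i = h * secondQuot h v (i + 1) := by
  simp only [secondQuot, fwdQuot, add_sub_cancel_right]; field_simp; ring

theorem centralQuot_succ_sub (hh : h ≠ 0) (i : ℤ) :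
    centralQuot h v (i + 1) - centralQuot h v i =
      h / 2 * (secondQuot h v (i + 1) + secondQuot h v i) := by
  simp only [centralQuot, secondQuot, add_sub_cancel_right]; field_simp; ring

theorem abs_centralQuot_le (hh : 0 < h) (hv : ∀ i, |v (i + 1) - v i| ≤ C * h) (i : ℤ) :
    |centralQuot h v i| ≤ C := by
  have hr := abs_le.1 ((abs_fwdQuot_le_iff hh).2 (hv i))
  have hl := abs_le.1 ((abs_fwdQuot_le_iff hh).2 (hv (i - 1)))
  rw [centralQuot_eq, abs_le]
  constructor <;> linarith

theorem abs_centralQuot_succ_sub_le (hh : 0 < h) (hv : ∀ i, |secondQuot h v i| ≤ C) (i : ℤ) :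
    |centralQuot h v (i + 1) - centralQuot h v i| ≤ C * h := by
  rw [centralQuot_succ_sub hh.ne', abs_mul, abs_of_pos (half_pos hh)]
  calc h / 2 * |secondQuot h v (i + 1) + secondQuot h v i| ≤ h / 2 * (C + C) := by
        gcongr; exact (abs_add_le _ _).trans (add_le_add (hv _) (hv _))
    _ = C * h := by ring

end DifferenceQuotients

/-- The right-hand side `½ α(w) ∂ₓₓw - β(w) ∂ₓw` of the quasilinear equation, as a function of the
values `w`, `e`, `z` of the solution and of its first two space derivatives. -/
def quasilinearRHS (α β : ℝ → ℝ) (w e z : ℝ) : ℝ := 1 / 2 * α w * z - β w * e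

/-- Bounded Lipschitz coefficients of a uniformly parabolic quasilinear equation. -/
structure IsParabolicCoeff (α β : ℝ → ℝ) (c A B Λ : ℝ) : Prop where
  pos : 0 < c
  le_diffusion : ∀ u, c ≤ α u
  diffusion_le : ∀ u, α u ≤ A
  abs_drift_le : ∀ u, |β u| ≤ B
  lipschitz_nonneg : 0 ≤ Λ
  diffusion_lipschitz : ∀ u v, |α u - α v| ≤ Λ * |u - v|
  drift_lipschitz : ∀ u v, |β u - β v| ≤ Λ * |u - v|

/-- The probability of a jump to the right in the explicit scheme, divided by the mesh ratio. -/
def rightRate (α β : ℝ → ℝ) (h u : ℝ) : ℝ := (α u - h * β u) / 2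

/-- The probability of a jump to the left in the explicit scheme, divided by the mesh ratio. -/
def leftRate (α β : ℝ → ℝ) (h u : ℝ) : ℝ := (α u + h * β u) / 2

/-- A grid function with values in `[0, K]` whose difference quotients of order one and two are
bounded by `C`, the latter also being `C`-Lipschitz. -/
structure IsGridC21 (h K C : ℝ) (v : ℤ → ℝ) : Prop where
  mem_Icc : ∀ i, v i ∈ Icc 0 K
  abs_sub_le : ∀ i, |v (i + 1) - v i| ≤ C * h
  abs_secondQuot_le : ∀ i, |secondQuot h v i| ≤ C
  abs_secondQuot_sub_le : ∀ i, |secondQuot h v (i + 1) - secondQuot h v i| ≤ C * h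

/-- The discretized right-hand side `½ α(v) ∂ₓₓv - β(v) ∂ₓv` at a grid point; along a solution of
the explicit scheme this is the difference quotient in time. -/
def gridRHS (α β : ℝ → ℝ) (h : ℝ) (v : ℤ → ℝ) (i : ℤ) : ℝ :=
  quasilinearRHS α β (v i) (centralQuot h v i) (secondQuot h v i)

/-- `w` solves the explicit finite-difference scheme for `∂ₜw = ½ α(w) ∂ₓₓw - β(w) ∂ₓw` with mesh
`h` and time step `r h²`. -/
def IsScheme (α β : ℝ → ℝ) (r h : ℝ) (w : ℕ → ℤ → ℝ) : Prop :=
  ∀ n i, w (n + 1) i = w n i + r * h ^ 2 * gridRHS α β h (w n) i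

theorem sq_mul_quasilinearRHS (α β : ℝ → ℝ) {h : ℝ} (hh : h ≠ 0) (u : ℝ) (v : ℤ → ℝ) (i : ℤ) :
    h ^ 2 * quasilinearRHS α β u (centralQuot h v i) (secondQuot h v i) =
      rightRate α β h u * (v (i + 1) - v i) + leftRate α β h u * (v (i - 1) - v i) := by
  simp only [quasilinearRHS, centralQuot, secondQuot, rightRate, leftRate]; field_simp; ring

namespace IsParabolicCoeff

variable {α β : ℝ → ℝ} {c A B Λ h : ℝ}

theorem drift_bound_nonneg (H : IsParabolicCoeff α β c A B Λ) : 0 ≤ B :=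
  (abs_nonneg _).trans (H.abs_drift_le 0)

theorem lower_le_upper (H : IsParabolicCoeff α β c A B Λ) : c ≤ A :=
  (H.le_diffusion 0).trans (H.diffusion_le 0)

theorem upper_nonneg (H : IsParabolicCoeff α β c A B Λ) : 0 ≤ A := H.pos.le.trans H.lower_le_upper

theorem abs_diffusion_le (H : IsParabolicCoeff α β c A B Λ) (u : ℝ) : |α u| ≤ A := by
  rw [abs_of_nonneg (H.pos.le.trans (H.le_diffusion u))]; exact H.diffusion_le u

theorem abs_quasilinearRHS_le (H : IsParabolicCoeff α β c A B Λ) {e z M₁ M₂ : ℝ} (w : ℝ)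
    (he : |e| ≤ M₁) (hz : |z| ≤ M₂) :
    |quasilinearRHS α β w e z| ≤ 1 / 2 * A * M₂ + B * M₁ :=
  (abs_sub _ _).trans <| add_le_add
    (abs_mul_le_mul_of_abs_le (abs_mul_le_mul_of_abs_le (by norm_num) (H.abs_diffusion_le w)) hz)
    (abs_mul_le_mul_of_abs_le (H.abs_drift_le w) he)

theorem abs_quasilinearRHS_sub_le (H : IsParabolicCoeff α β c A B Λ) {w e z w' e' z' M₁ M₂ : ℝ}
    (he : |e| ≤ M₁) (hz : |z| ≤ M₂) :
    |quasilinearRHS α β w' e' z' - quasilinearRHS α β w e z| ≤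
      1 / 2 * (A * |z' - z|) + B * |e' - e| + (1 / 2 * Λ * M₂ + Λ * M₁) * |w' - w| := by
  have t₁ := abs_mul_le_mul_of_abs_le (H.diffusion_lipschitz w' w) hz
  have t₂ := abs_mul_le_mul_of_abs_le (H.abs_diffusion_le w') (le_refl |z' - z|)
  have t₃ := abs_mul_le_mul_of_abs_le (H.drift_lipschitz w' w) he
  have t₄ := abs_mul_le_mul_of_abs_le (H.abs_drift_le w') (le_refl |e' - e|)
  have hsplit : quasilinearRHS α β w' e' z' - quasilinearRHS α β w e z =
      1 / 2 * ((α w' - α w) * z) + 1 / 2 * (α w' * (z' - z)) - (β w' - β w) * e -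
        β w' * (e' - e) := by
    unfold quasilinearRHS; ring
  rw [hsplit]
  rw [abs_le] at t₁ t₂ t₃ t₄ ⊢
  constructor <;> linarith

/- Ellipticity: the equation determines the second derivative from the time derivative. -/
theorem mul_abs_sub_le (H : IsParabolicCoeff α β c A B Λ) {w e z w' e' z' M₁ M₂ : ℝ}
    (he : |e| ≤ M₁) (hz : |z| ≤ M₂) :
    c * |z' - z| ≤ 2 * |quasilinearRHS α β w' e' z' - quasilinearRHS α β w e z| +
      2 * B * |e' - e| + (Λ * M₂ + 2 * Λ * M₁) * |w' - w| := by
  have t₁ := abs_mul_le_mul_of_abs_le (H.diffusion_lipschitz w' w) hz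
  have t₃ := abs_mul_le_mul_of_abs_le (H.drift_lipschitz w' w) he
  have t₄ := abs_mul_le_mul_of_abs_le (H.abs_drift_le w') (le_refl |e' - e|)
  have hsplit : α w' * (z' - z) =
      2 * (quasilinearRHS α β w' e' z' - quasilinearRHS α β w e z) - (α w' - α w) * z +
        2 * ((β w' - β w) * e) + 2 * (β w' * (e' - e)) := by
    unfold quasilinearRHS; ring
  calc c * |z' - z| ≤ |α w' * (z' - z)| := by
        rw [abs_mul, abs_of_pos (H.pos.trans_le (H.le_diffusion w'))]
        exact mul_le_mul_of_nonneg_right (H.le_diffusion w') (abs_nonneg _)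
    _ ≤ _ := by
        have t₂ := abs_le.1 (le_refl |quasilinearRHS α β w' e' z' - quasilinearRHS α β w e z|)
        rw [hsplit]
        rw [abs_le] at t₁ t₃ t₄ ⊢
        constructor <;> linarith

theorem quarter_le_rightRate (H : IsParabolicCoeff α β c A B Λ) (hh : 0 ≤ h) (hB : h * B ≤ c / 2)
    (u : ℝ) : c / 4 ≤ rightRate α β h u := by
  unfold rightRate
  nlinarith [H.le_diffusion u, (abs_le.1 (H.abs_drift_le u)).2]

theorem quarter_le_leftRate (H : IsParabolicCoeff α β c A B Λ) (hh : 0 ≤ h) (hB : h * B ≤ c / 2)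
    (u : ℝ) : c / 4 ≤ leftRate α β h u := by
  unfold leftRate
  nlinarith [H.le_diffusion u, (abs_le.1 (H.abs_drift_le u)).1]

theorem rightRate_add_leftRate_le (H : IsParabolicCoeff α β c A B Λ) (hh : 0 ≤ h)
    (hB : h * B ≤ c / 2) (u v : ℝ) : rightRate α β h u + leftRate α β h v ≤ 3 / 2 * A := by
  unfold rightRate leftRate
  nlinarith [H.diffusion_le u, H.diffusion_le v, H.lower_le_upper,
    (abs_le.1 (H.abs_drift_le u)).1, (abs_le.1 (H.abs_drift_le v)).2]

theorem abs_rightRate_sub_leftRate_le (H : IsParabolicCoeff α β c A B Λ) (hh : 0 ≤ h) (u v : ℝ) :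
    |rightRate α β h u - leftRate α β h v| ≤ 1 / 2 * Λ * |u - v| + B * h := by
  have hα := abs_le.1 (H.diffusion_lipschitz u v)
  have hu := abs_le.1 (H.abs_drift_le u)
  have hv := abs_le.1 (H.abs_drift_le v)
  unfold rightRate leftRate
  rw [abs_le]
  constructor <;> nlinarith

theorem isDriftDiffusionScheme (H : IsParabolicCoeff α β c A B Λ) {r D C₁ : ℝ} (hr : 0 ≤ r)
    (hrA : r * A ≤ 1 / 3) (hh : 0 ≤ h) (hB : h * B ≤ c / 2) {U V f u : ℕ → ℤ → ℝ}
    (hUV : ∀ n i, |U n i - V n i| ≤ D * h) (hf : ∀ n i, |f n i| ≤ C₁)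
    (hstep : ∀ n i, u (n + 1) i = u n i + r * (rightRate α β h (U n i) * (u n (i + 1) - u n i) +
      leftRate α β h (V n i) * (u n (i - 1) - u n i) + h ^ 2 * f n i)) :
    IsDriftDiffusionScheme r h (c / 4) (1 / 2 * Λ * D + B) C₁
      (fun n i => rightRate α β h (U n i)) (fun n i => leftRate α β h (V n i)) f u where
  step := hstep
  le_right n i := H.quarter_le_rightRate hh hB _
  le_left n i := H.quarter_le_leftRate hh hB _
  cfl n i := by
    have := mul_le_mul_of_nonneg_left (H.rightRate_add_leftRate_le hh hB (U n i) (V n i)) hr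
    linarith
  drift n i := by
    have hΛ := H.lipschitz_nonneg
    calc _ ≤ 1 / 2 * Λ * |U n i - V n i| + B * h := H.abs_rightRate_sub_leftRate_le hh _ _
      _ ≤ 1 / 2 * Λ * (D * h) + B * h := by gcongr; exact hUV n i
      _ = (1 / 2 * Λ * D + B) * h := by ring
  source := hf

end IsParabolicCoeff

/-- A grid function in space and time (mesh `h`, time step `τ`) with bounds on the difference
quotients which pass to the limit `h → 0` as `C^{1,2}` bounds. -/
structure IsGridSolutionBound (h τ K C : ℝ) (w : ℕ → ℤ → ℝ) : Prop where
  grid : ∀ n, IsGridC21 h K C (w n)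
  time : ∀ n i, |w (n + 1) i - w n i| ≤ C * τ

namespace IsScheme

variable {α β : ℝ → ℝ} {c A B Λ r h K : ℝ} {w : ℕ → ℤ → ℝ}

theorem succ_eq (hw : IsScheme α β r h w) (hh : h ≠ 0) (n : ℕ) (i : ℤ) :
    w (n + 1) i = w n i + r * (rightRate α β h (w n i) * (w n (i + 1) - w n i) +
      leftRate α β h (w n i) * (w n (i - 1) - w n i)) := by
  rw [hw, mul_assoc, gridRHS, sq_mul_quasilinearRHS α β hh]

theorem mem_Icc (hw : IsScheme α β r h w) (H : IsParabolicCoeff α β c A B Λ) (hr : 0 ≤ r)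
    (hrA : r * A ≤ 1 / 3) (hh : 0 < h) (hB : h * B ≤ c / 2) (h₀ : ∀ i, w 0 i ∈ Icc 0 K) (n : ℕ) :
    ∀ i, w n i ∈ Icc 0 K := by
  induction n with
  | zero => exact h₀
  | succ n ih =>
    intro i
    set p := r * rightRate α β h (w n i)
    set q := r * leftRate α β h (w n i)
    have hc := H.pos
    have hp : 0 ≤ p :=
      mul_nonneg hr ((by positivity : 0 ≤ c / 4).trans (H.quarter_le_rightRate hh.le hB _))
    have hq : 0 ≤ q :=
      mul_nonneg hr ((by positivity : 0 ≤ c / 4).trans (H.quarter_le_leftRate hh.le hB _))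
    have hpq : 0 ≤ 1 - (p + q) := by
      have := mul_le_mul_of_nonneg_left (H.rightRate_add_leftRate_le hh.le hB (w n i) (w n i)) hr
      simp only [p, q]
      linarith
    have hcomb : w (n + 1) i = (1 - (p + q)) * w n i + p * w n (i + 1) + q * w n (i - 1) := by
      rw [hw.succ_eq hh.ne']; ring
    rw [hcomb]
    constructor
    · have h₁ := mul_nonneg hpq (ih i).1
      have h₂ := mul_nonneg hp (ih (i + 1)).1
      have h₃ := mul_nonneg hq (ih (i - 1)).1
      linarith
    · have h₁ := mul_le_mul_of_nonneg_left (ih i).2 hpq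
      have h₂ := mul_le_mul_of_nonneg_left (ih (i + 1)).2 hp
      have h₃ := mul_le_mul_of_nonneg_left (ih (i - 1)).2 hq
      linarith

theorem fwdQuot_succ (hw : IsScheme α β r h w) (hh : h ≠ 0) (n : ℕ) (i : ℤ) :
    fwdQuot h (w (n + 1)) i = fwdQuot h (w n) i +
      r * (rightRate α β h (w n (i + 1)) * (fwdQuot h (w n) (i + 1) - fwdQuot h (w n) i) +
        leftRate α β h (w n i) * (fwdQuot h (w n) (i - 1) - fwdQuot h (w n) i) +
        h ^ 2 * -(fwdQuot h (fun j => β (w n j)) i * fwdQuot h (w n) i)) := by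
  simp only [fwdQuot, hw.succ_eq hh, rightRate, leftRate, add_sub_cancel_right, sub_add_cancel]
  field_simp
  ring

theorem gridRHS_succ (hw : IsScheme α β r h w) (hr : r ≠ 0) (hh : h ≠ 0) (n : ℕ) (i : ℤ) :
    gridRHS α β h (w (n + 1)) i = gridRHS α β h (w n) i + r * (
      rightRate α β h (w (n + 1) i) * (gridRHS α β h (w n) (i + 1) - gridRHS α β h (w n) i) +
        leftRate α β h (w (n + 1) i) * (gridRHS α β h (w n) (i - 1) - gridRHS α β h (w n) i) +
        h ^ 2 * quasilinearRHS (fun _ => (α (w (n + 1) i) - α (w n i)) / (r * h ^ 2))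
          (fun _ => (β (w (n + 1) i) - β (w n i)) / (r * h ^ 2)) 0
          (centralQuot h (w n) i) (secondQuot h (w n) i)) := by
  have hstep : ∀ j, gridRHS α β h (w n) j = (w (n + 1) j - w n j) / (r * h ^ 2) := fun j => by
    rw [eq_div_iff (by positivity), hw n j]; ring
  have hdiff : gridRHS α β h (w (n + 1)) i - gridRHS α β h (w n) i =
      quasilinearRHS α β (w (n + 1) i) (centralQuot h (w (n + 1)) i) (secondQuot h (w (n + 1)) i) -
        quasilinearRHS α β (w n i) (centralQuot h (w n) i) (secondQuot h (w n) i) := rfl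
  rw [← sub_eq_iff_eq_add', hdiff, hstep i, hstep (i + 1), hstep (i - 1)]
  simp only [quasilinearRHS, centralQuot, secondQuot, rightRate, leftRate]
  field_simp
  ring

end IsScheme

namespace IsParabolicCoeff

variable {α β : ℝ → ℝ} {c A B Λ r h K M₁ M₂ M₃ : ℝ} {v : ℤ → ℝ}

theorem exists_abs_sub_le (H : IsParabolicCoeff α β c A B Λ) {L : ℝ} (hr : 0 ≤ r)
    (hrA : r * A ≤ 1 / 3) (hK : 0 ≤ K) (hL : 0 ≤ L) :
    ∃ M δ, 0 ≤ M ∧ 0 < δ ∧ ∀ h, 0 < h → h ≤ δ → h * B ≤ c / 2 → ∀ w, IsScheme α β r h w →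
      (∀ n i, |w n i| ≤ K) → (∀ i, |w 0 (i + 1) - w 0 i| ≤ L * h) →
      ∀ n i, |w n (i + 1) - w n i| ≤ M * h := by
  have hc := H.pos
  have hB₀ := H.drift_bound_nonneg
  obtain ⟨M, δ, hM, hδ, key⟩ := exists_lipschitz_bound_of_isDriftDiffusionScheme
    (θ := c / 4) (C := 1 / 2 * Λ * 0 + B) (by positivity) (by simpa using hB₀) le_rfl hK hL
  refine ⟨M, δ, hM, hδ, fun h hh hδ hB w hw => ?_⟩
  refine key r h _ _ (fun _ _ => 0) w hr hh.le hδ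
    (H.isDriftDiffusionScheme (U := w) (V := w) hr hrA hh.le hB (by simp) (by simp) fun n i => ?_)
  simp only [mul_zero, add_zero, hw.succ_eq hh.ne']

theorem exists_abs_secondQuot_le (H : IsParabolicCoeff α β c A B Λ) {L : ℝ} (hr : 0 ≤ r)
    (hrA : r * A ≤ 1 / 3) (hM₁ : 0 ≤ M₁) (hL : 0 ≤ L) :
    ∃ M δ, 0 ≤ M ∧ 0 < δ ∧ ∀ h, 0 < h → h ≤ δ → h * B ≤ c / 2 → ∀ w, IsScheme α β r h w →
      (∀ n i, |w n (i + 1) - w n i| ≤ M₁ * h) → (∀ i, |secondQuot h (w 0) i| ≤ L) →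
      ∀ n i, |secondQuot h (w n) i| ≤ M := by
  have hc := H.pos
  have hB₀ := H.drift_bound_nonneg
  have hΛ := H.lipschitz_nonneg
  obtain ⟨M, δ, hM, hδ, key⟩ := exists_lipschitz_bound_of_isDriftDiffusionScheme
    (θ := c / 4) (C := 1 / 2 * Λ * M₁ + B) (C₁ := Λ * M₁ * M₁)
    (by positivity) (by positivity) (by positivity) hM₁ hL
  refine ⟨M, δ, hM, hδ, fun h hh hδ hB w hw hw₁ hw₂ n i => ?_⟩
  have hquot : ∀ n i, |fwdQuot h (w n) i| ≤ M₁ := fun n i => (abs_fwdQuot_le_iff hh).2 (hw₁ n i)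
  have hβquot : ∀ n i, |fwdQuot h (fun j => β (w n j)) i| ≤ Λ * M₁ := fun n i => by
    rw [abs_fwdQuot_le_iff hh, mul_assoc]
    exact (H.drift_lipschitz _ _).trans (mul_le_mul_of_nonneg_left (hw₁ n i) hΛ)
  have hlip := key r h _ _ _ (fun n i => fwdQuot h (w n) i) hr hh.le hδ
    (H.isDriftDiffusionScheme (U := fun n i => w n (i + 1)) (V := w) hr hrA hh.le hB hw₁
      (fun n i => (abs_neg _).trans_le (abs_mul_le_mul_of_abs_le (hβquot n i) (hquot n i)))
      (hw.fwdQuot_succ hh.ne')) hquot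
  simp only [fwdQuot_succ_sub hh.ne', abs_mul, abs_of_pos hh, mul_comm h, mul_le_mul_iff_left₀ hh]
    at hlip
  simpa using hlip (fun i => hw₂ _) n (i - 1)

theorem exists_abs_gridRHS_sub_le (H : IsParabolicCoeff α β c A B Λ) {L : ℝ} (hr : 0 < r)
    (hrA : r * A ≤ 1 / 3) (hM₁ : 0 ≤ M₁) (hM₂ : 0 ≤ M₂) (hL : 0 ≤ L) :
    ∃ M δ, 0 ≤ M ∧ 0 < δ ∧ ∀ h, 0 < h → h ≤ δ → h * B ≤ c / 2 → ∀ w, IsScheme α β r h w →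
      (∀ n i, |w n (i + 1) - w n i| ≤ M₁ * h) → (∀ n i, |secondQuot h (w n) i| ≤ M₂) →
      (∀ i, |gridRHS α β h (w 0) (i + 1) - gridRHS α β h (w 0) i| ≤ L * h) →
      ∀ n i, |gridRHS α β h (w n) (i + 1) - gridRHS α β h (w n) i| ≤ M * h := by
  have hc := H.pos
  have hB₀ := H.drift_bound_nonneg
  have hA₀ := H.upper_nonneg
  have hΛ := H.lipschitz_nonneg
  set R := 1 / 2 * A * M₂ + B * M₁
  have hR : 0 ≤ R := by positivity
  obtain ⟨M, δ, hM, hδ, key⟩ := exists_lipschitz_bound_of_isDriftDiffusionScheme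
    (θ := c / 4) (C := 1 / 2 * Λ * 0 + B) (C₁ := 1 / 2 * (Λ * R) * M₂ + Λ * R * M₁)
    (by positivity) (by positivity) (by positivity) hR hL
  refine ⟨M, δ, hM, hδ, fun h hh hδ hB w hw hw₁ hw₂ => ?_⟩
  have he : ∀ n i, |centralQuot h (w n) i| ≤ M₁ := fun n => abs_centralQuot_le hh (hw₁ n)
  have hbound : ∀ n i, |gridRHS α β h (w n) i| ≤ R := fun n i =>
    H.abs_quasilinearRHS_le _ (he n i) (hw₂ n i)
  have hτ : 0 < r * h ^ 2 := by positivity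
  have hcoeff : ∀ {f : ℝ → ℝ}, (∀ u v, |f u - f v| ≤ Λ * |u - v|) → ∀ n i,
      |(f (w (n + 1) i) - f (w n i)) / (r * h ^ 2)| ≤ Λ * R := fun hf n i => by
    rw [abs_div, abs_of_pos hτ, div_le_iff₀ hτ, mul_assoc]
    refine (hf _ _).trans (mul_le_mul_of_nonneg_left ?_ hΛ)
    rw [hw n i, add_sub_cancel_left, abs_mul, abs_of_pos hτ, mul_comm]
    exact mul_le_mul_of_nonneg_right (hbound n i) hτ.le
  refine key r h _ _ _ (fun n => gridRHS α β h (w n)) hr.le hh.le hδ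
    (H.isDriftDiffusionScheme (U := fun n => w (n + 1)) (V := fun n => w (n + 1)) hr.le hrA hh.le hB
      (by simp) (fun n i => (abs_sub _ _).trans (add_le_add ?_ ?_))
      (hw.gridRHS_succ hr.ne' hh.ne')) hbound
  · exact abs_mul_le_mul_of_abs_le (abs_mul_le_mul_of_abs_le (by norm_num)
      (hcoeff H.diffusion_lipschitz n i)) (hw₂ n i)
  · exact abs_mul_le_mul_of_abs_le (hcoeff H.drift_lipschitz n i) (he n i)

theorem abs_gridRHS_succ_sub_le (H : IsParabolicCoeff α β c A B Λ) (hh : 0 < h)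
    (hM₁ : 0 ≤ M₁) (hM₂ : 0 ≤ M₂)
    (h₁ : ∀ i, |v (i + 1) - v i| ≤ M₁ * h) (h₂ : ∀ i, |secondQuot h v i| ≤ M₂)
    (h₃ : ∀ i, |secondQuot h v (i + 1) - secondQuot h v i| ≤ M₃ * h) (i : ℤ) :
    |gridRHS α β h v (i + 1) - gridRHS α β h v i| ≤
      (1 / 2 * (A * M₃) + B * M₂ + (1 / 2 * Λ * M₂ + Λ * M₁) * M₁) * h := by
  have hA₀ := H.upper_nonneg
  have hB₀ := H.drift_bound_nonneg
  have hΛ := H.lipschitz_nonneg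
  calc _ ≤ _ := H.abs_quasilinearRHS_sub_le (abs_centralQuot_le hh h₁ i) (h₂ i)
    _ ≤ 1 / 2 * (A * (M₃ * h)) + B * (M₂ * h) + (1 / 2 * Λ * M₂ + Λ * M₁) * (M₁ * h) := by
        gcongr
        exacts [h₃ i, abs_centralQuot_succ_sub_le hh h₂ i, h₁ i]
    _ = _ := by ring

theorem abs_secondQuot_succ_sub_le (H : IsParabolicCoeff α β c A B Λ) (hh : 0 < h)
    (hM₁ : 0 ≤ M₁) (hM₂ : 0 ≤ M₂)
    (h₁ : ∀ i, |v (i + 1) - v i| ≤ M₁ * h) (h₂ : ∀ i, |secondQuot h v i| ≤ M₂)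
    (h₃ : ∀ i, |gridRHS α β h v (i + 1) - gridRHS α β h v i| ≤ M₃ * h) (i : ℤ) :
    |secondQuot h v (i + 1) - secondQuot h v i| ≤
      (2 * M₃ + 2 * B * M₂ + (Λ * M₂ + 2 * Λ * M₁) * M₁) / c * h := by
  have hc := H.pos
  have hB₀ := H.drift_bound_nonneg
  have hΛ := H.lipschitz_nonneg
  rw [div_mul_eq_mul_div, le_div_iff₀' hc]
  calc _ ≤ _ := H.mul_abs_sub_le (abs_centralQuot_le hh h₁ i) (h₂ i)
    _ ≤ 2 * (M₃ * h) + 2 * B * (M₂ * h) + (Λ * M₂ + 2 * Λ * M₁) * (M₁ * h) := by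
        gcongr
        exacts [h₃ i, abs_centralQuot_succ_sub_le hh h₂ i, h₁ i]
    _ = _ := by ring

theorem exists_isGridSolutionBound (H : IsParabolicCoeff α β c A B Λ) {L : ℝ} (hr : 0 < r)
    (hrA : r * A ≤ 1 / 3) (hK : 0 ≤ K) (hL : 0 ≤ L) :
    ∃ C δ, 0 ≤ C ∧ 0 < δ ∧ ∀ h, 0 < h → h ≤ δ → ∀ w, IsScheme α β r h w →
      IsGridC21 h K L (w 0) → IsGridSolutionBound h (r * h ^ 2) K C w := by
  have hc := H.pos
  have hA₀ := H.upper_nonneg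
  have hB₀ := H.drift_bound_nonneg
  have hΛ := H.lipschitz_nonneg
  obtain ⟨M₁, δ₁, hM₁, hδ₁, D₁⟩ := H.exists_abs_sub_le hr.le hrA hK hL
  obtain ⟨M₂, δ₂, hM₂, hδ₂, D₂⟩ := H.exists_abs_secondQuot_le hr.le hrA hM₁ hL
  obtain ⟨M₃, δ₃, hM₃, hδ₃, D₃⟩ := H.exists_abs_gridRHS_sub_le hr hrA hM₁ hM₂
    (L := 1 / 2 * (A * L) + B * L + (1 / 2 * Λ * L + Λ * L) * L) (by positivity)
  set M₄ := (2 * M₃ + 2 * B * M₂ + (Λ * M₂ + 2 * Λ * M₁) * M₁) / c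
  set R := 1 / 2 * A * M₂ + B * M₁
  have hM₄ : 0 ≤ M₄ := by positivity
  have hR : 0 ≤ R := by positivity
  refine ⟨M₁ + M₂ + R + M₄, min (min δ₁ δ₂) (min δ₃ (c / (2 * (B + 1)))), by positivity,
    by positivity, fun h hh hδ w hw h₀ => ?_⟩
  obtain ⟨⟨hd₁, hd₂⟩, hd₃, hd₄⟩ := by simpa only [le_min_iff] using hδ
  have hB : h * B ≤ c / 2 := by
    rw [le_div_iff₀ (by positivity)] at hd₄
    nlinarith
  have hI := hw.mem_Icc H hr.le hrA hh hB h₀.mem_Icc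
  have q₁ := D₁ h hh hd₁ hB w hw (fun n i => abs_le.2 ⟨by linarith [(hI n i).1], (hI n i).2⟩)
    h₀.abs_sub_le
  have q₂ := D₂ h hh hd₂ hB w hw q₁ h₀.abs_secondQuot_le
  have q₃ := D₃ h hh hd₃ hB w hw q₁ q₂ (H.abs_gridRHS_succ_sub_le hh hL hL h₀.abs_sub_le
    h₀.abs_secondQuot_le h₀.abs_secondQuot_sub_le)
  refine ⟨fun n => ⟨hI n, fun i => (q₁ n i).trans (by gcongr; linarith),
    fun i => (q₂ n i).trans (by linarith), fun i =>
    (H.abs_secondQuot_succ_sub_le hh hM₁ hM₂ (q₁ n) (q₂ n) (q₃ n) i).trans (by gcongr; linarith)⟩,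
    fun n i => ?_⟩
  have hτ : 0 < r * h ^ 2 := by positivity
  rw [hw n i, add_sub_cancel_left, abs_mul, abs_of_pos hτ, mul_comm]
  gcongr
  exact (H.abs_quasilinearRHS_le _ (abs_centralQuot_le hh (q₁ n) i) (q₂ n i)).trans
    (by linarith : R ≤ M₁ + M₂ + R + M₄)

end IsParabolicCoeff

/-! ### Equicontinuity in time of the difference quotients -/

theorem abs_sub_sub_mul_fwdQuot_le {h C : ℝ} {v : ℤ → ℝ} (hh : 0 < h)
    (hv : ∀ i, |fwdQuot h v (i + 1) - fwdQuot h v i| ≤ C * h) (i j : ℤ) :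
    |v j - v i - ((j : ℝ) - i) * h * fwdQuot h v i| ≤ C * (((j : ℝ) - i) * h) ^ 2 := by
  have hC : 0 ≤ C * h := (abs_nonneg _).trans (hv 0)
  have hsucc : ∀ k, v (k + 1) = v k + h * fwdQuot h v k := fun k => by
    unfold fwdQuot; field_simp; ring
  have hslope : ∀ k, |h * (fwdQuot h v k - fwdQuot h v i)| ≤ C * h * h * |(k : ℝ) - i| :=
    fun k => by
      rw [abs_mul, abs_of_pos hh]
      calc _ ≤ h * (C * h * |(k : ℝ) - i|) := by
            gcongr; exact abs_sub_le_mul_abs_of_adjacent hv i k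
        _ = _ := by ring
  induction j using Int.inductionOn' (b := i) with
  | zero => simp
  | succ k hk ih =>
    have hik : (i : ℝ) ≤ k := mod_cast hk
    have hstep := hslope k
    rw [abs_of_nonneg (sub_nonneg.2 hik)] at hstep
    have hsplit : v (k + 1) - v i - (((k + 1 : ℤ) : ℝ) - i) * h * fwdQuot h v i =
        (v k - v i - ((k : ℝ) - i) * h * fwdQuot h v i) +
          h * (fwdQuot h v k - fwdQuot h v i) := by
      rw [hsucc]; push_cast; ring
    rw [hsplit]
    refine (abs_add_le _ _).trans ((add_le_add ih hstep).trans ?_)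
    push_cast
    nlinarith [mul_nonneg hC hh.le, mul_nonneg (mul_nonneg hC hh.le) (sub_nonneg.2 hik)]
  | pred k hk ih =>
    have hki : (k : ℝ) ≤ i := mod_cast hk
    have hstep := hslope (k - 1)
    have hpred := hsucc (k - 1)
    rw [abs_of_nonpos (a := ((k - 1 : ℤ) : ℝ) - i) (by push_cast; linarith)] at hstep
    rw [sub_add_cancel] at hpred
    have hsplit : v (k - 1) - v i - (((k - 1 : ℤ) : ℝ) - i) * h * fwdQuot h v i =
        (v k - v i - ((k : ℝ) - i) * h * fwdQuot h v i) -
          h * (fwdQuot h v (k - 1) - fwdQuot h v i) := by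
      rw [hpred]; push_cast; ring
    rw [hsplit]
    refine (abs_sub _ _).trans ((add_le_add ih hstep).trans ?_)
    push_cast
    nlinarith [mul_nonneg hC hh.le, mul_nonneg (mul_nonneg hC hh.le) (sub_nonneg.2 hki)]

/- Discrete Landau inequality: over a distance `l` a slope `f` produces a variation of at least
`l |f| - L l²`, which the smallness of `d` caps at `2 η`. -/
theorem exists_abs_fwdQuot_le (L : ℝ) {ε : ℝ} (hε : 0 < ε) :
    ∃ η > 0, ∀ h, 0 < h → h ≤ η → ∀ d : ℤ → ℝ, (∀ i, |d i| ≤ η) →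
      (∀ i, |fwdQuot h d (i + 1) - fwdQuot h d i| ≤ L * h) → ∀ i, |fwdQuot h d i| ≤ ε := by
  obtain ⟨l, hl, hlL⟩ : ∃ l > 0, L * l ≤ ε / 2 := by
    refine ⟨ε / 2 / (|L| + 1), by positivity, ?_⟩
    rw [mul_div_assoc', div_le_iff₀ (by positivity)]
    nlinarith [le_abs_self L]
  refine ⟨min (l / 2) (ε * l / 8), by positivity, fun h hh hη d hd hquot i => ?_⟩
  have hhl : h ≤ l / 2 := hη.trans (min_le_left _ _)
  set j : ℕ := ⌊l / h⌋₊
  have hjl : j * h ≤ l := (le_div_iff₀ hh).1 (Nat.floor_le (by positivity))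
  have hlj : l / 2 ≤ j * h := by
    have := (div_lt_iff₀ hh).1 (Nat.lt_floor_add_one (l / h))
    linarith
  have htaylor : |d (i + j) - d i - j * h * fwdQuot h d i| ≤ L * (j * h) ^ 2 := by
    simpa using abs_sub_sub_mul_fwdQuot_le hh hquot i (i + j)
  have hd₁ := abs_le.1 ((hd (i + j)).trans (min_le_right _ _))
  have hd₂ := abs_le.1 ((hd i).trans (min_le_right _ _))
  have hjh : 0 < j * h := by linarith
  have hquad : L * (j * h) ^ 2 ≤ ε / 2 * (j * h) := by
    have hL : 0 ≤ L := nonneg_of_mul_nonneg_left ((abs_nonneg _).trans (hquot 0)) hh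
    nlinarith [mul_le_mul_of_nonneg_left hjl hL]
  have hvar : ε * l / 8 + ε * l / 8 ≤ ε / 2 * (j * h) := by nlinarith
  refine le_of_mul_le_mul_left ?_ hjh
  rw [← abs_of_pos hjh, ← abs_mul, abs_of_pos hjh]
  rw [abs_le] at htaylor ⊢
  constructor <;> linarith

theorem abs_sub_le_mul_of_abs_succ_sub_le {u : ℕ → ℝ} {d : ℝ} {n m : ℕ}
    (hu : ∀ k : ℕ, |(k : ℝ) - n| ≤ |(m : ℝ) - n| → |u (k + 1) - u k| ≤ d) :
    |u m - u n| ≤ |(m : ℝ) - n| * d := by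
  rcases le_total n m with hnm | hnm
  · have hnm' : (n : ℝ) ≤ m := mod_cast hnm
    have hsum := dist_le_Ico_sum_of_dist_le (f := u) (d := fun _ => d) hnm fun {k} hnk hkm => by
      rw [dist_comm]
      refine hu k (abs_le_abs_of_nonneg (sub_nonneg.2 (mod_cast hnk)) ?_)
      exact sub_le_sub_right (mod_cast hkm.le) _
    rwa [Finset.sum_const, Nat.card_Ico, nsmul_eq_mul, Nat.cast_sub hnm, dist_comm,
      ← abs_of_nonneg (sub_nonneg.2 hnm')] at hsum
  · have hnm' : (m : ℝ) ≤ n := mod_cast hnm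
    have hsum := dist_le_Ico_sum_of_dist_le (f := u) (d := fun _ => d) hnm fun {k} hmk hkn => by
      rw [dist_comm]
      refine hu k (abs_le_abs_of_nonpos (sub_nonpos.2 (mod_cast hkn.le)) ?_)
      exact sub_le_sub_right (mod_cast hmk) _
    rwa [Finset.sum_const, Nat.card_Ico, nsmul_eq_mul, Nat.cast_sub hnm,
      ← abs_of_nonneg (sub_nonneg.2 hnm'), abs_sub_comm (n : ℝ)] at hsum

theorem IsGridSolutionBound.abs_sub_le {h τ K C : ℝ} {w : ℕ → ℤ → ℝ}
    (hw : IsGridSolutionBound h τ K C w) (n m : ℕ) (i : ℤ) :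
    |w m i - w n i| ≤ |(m : ℝ) - n| * (C * τ) :=
  abs_sub_le_mul_of_abs_succ_sub_le (u := fun k => w k i) fun k _ => hw.time k i

namespace IsGridC21

variable {h K C : ℝ} {v : ℤ → ℝ}

theorem nonneg_bound (hv : IsGridC21 h K C v) : 0 ≤ C :=
  (abs_nonneg _).trans (hv.abs_secondQuot_le 0)

theorem abs_fwdQuot_le (hv : IsGridC21 h K C v) (hh : 0 < h) (i : ℤ) : |fwdQuot h v i| ≤ C :=
  (abs_fwdQuot_le_iff hh).2 (hv.abs_sub_le i)

theorem abs_fwdQuot_succ_sub_le (hv : IsGridC21 h K C v) (hh : 0 < h) (i : ℤ) :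
    |fwdQuot h v (i + 1) - fwdQuot h v i| ≤ C * h := by
  rw [fwdQuot_succ_sub hh.ne', abs_mul, abs_of_pos hh, mul_comm]
  exact mul_le_mul_of_nonneg_right (hv.abs_secondQuot_le _) hh.le

end IsGridC21

theorem fwdQuot_fwdQuot {h : ℝ} (hh : h ≠ 0) (v : ℤ → ℝ) (i : ℤ) :
    fwdQuot h (fwdQuot h v) i = secondQuot h v (i + 1) := by
  rw [fwdQuot, fwdQuot_succ_sub hh, mul_div_cancel_left₀ _ hh]

theorem IsGridC21.abs_fwdQuot_fwdQuot_le {h K C : ℝ} {v : ℤ → ℝ} (hv : IsGridC21 h K C v)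
    (hh : 0 < h) (i : ℤ) : |fwdQuot h (fwdQuot h v) i| ≤ C := by
  rw [fwdQuot_fwdQuot hh.ne']
  exact hv.abs_secondQuot_le _

theorem IsGridC21.abs_fwdQuot_fwdQuot_succ_sub_le {h K C : ℝ} {v : ℤ → ℝ}
    (hv : IsGridC21 h K C v) (hh : 0 < h) (i : ℤ) :
    |fwdQuot h (fwdQuot h v) (i + 1) - fwdQuot h (fwdQuot h v) i| ≤ C * h := by
  simp only [fwdQuot_fwdQuot hh.ne']
  exact hv.abs_secondQuot_sub_le _

/-- The grid operator `D` (depending on the mesh) maps the grid solutions with given bounds to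
functions which are equicontinuous in time, uniformly in space and in the mesh. -/
def TimeEquicontinuous (K C : ℝ) (D : ℝ → (ℤ → ℝ) → ℤ → ℝ) : Prop :=
  ∀ ε > 0, ∃ η > 0, ∀ h τ w, 0 < h → h ≤ η → IsGridSolutionBound h τ K C w →
    ∀ n m : ℕ, |(m : ℝ) - n| * τ ≤ η → ∀ i, |D h (w m) i - D h (w n) i| ≤ ε

namespace TimeEquicontinuous

variable {K C : ℝ} {D : ℝ → (ℤ → ℝ) → ℤ → ℝ}

theorem eval : TimeEquicontinuous K C fun _ v => v := by
  intro ε hε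
  refine ⟨ε / (|C| + 1), by positivity, fun h τ w _ _ hw n m hnm i => ?_⟩
  have hC := (hw.grid 0).nonneg_bound
  rw [abs_of_nonneg hC] at hnm
  calc |w m i - w n i| ≤ |(m : ℝ) - n| * (C * τ) := hw.abs_sub_le n m i
    _ = C * (|(m : ℝ) - n| * τ) := by ring
    _ ≤ C * (ε / (C + 1)) := by gcongr
    _ = C / (C + 1) * ε := by ring
    _ ≤ ε := mul_le_of_le_one_left hε.le (div_le_one_of_le₀ (by linarith) (by positivity))

theorem fwdQuot {L : ℝ} (hD : TimeEquicontinuous K C D)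
    (hL : ∀ h v, 0 < h → IsGridC21 h K C v →
      ∀ i, |fwdQuot h (D h v) (i + 1) - fwdQuot h (D h v) i| ≤ L * h) :
    TimeEquicontinuous K C fun h v => fwdQuot h (D h v) := by
  intro ε hε
  obtain ⟨η, hη, landau⟩ := exists_abs_fwdQuot_le (L + L) hε
  obtain ⟨η', hη', hD⟩ := hD η hη
  refine ⟨min η η', lt_min hη hη', fun h τ w hh hhη hw n m hnm i => ?_⟩
  have hquot : ∀ i, _root_.fwdQuot h (fun j => D h (w m) j - D h (w n) j) i =
      _root_.fwdQuot h (D h (w m)) i - _root_.fwdQuot h (D h (w n)) i := fun i => by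
    simp only [_root_.fwdQuot]; ring
  rw [← hquot]
  refine landau h hh (hhη.trans (min_le_left _ _)) _
    (hD h τ w hh (hhη.trans (min_le_right _ _)) hw n m (hnm.trans (min_le_right _ _)))
    (fun i => ?_) i
  rw [hquot, hquot, sub_sub_sub_comm, add_mul]
  exact (abs_sub _ _).trans (add_le_add (hL h _ hh (hw.grid m) i) (hL h _ hh (hw.grid n) i))

theorem fwdQuot_eval : TimeEquicontinuous K C _root_.fwdQuot :=
  eval.fwdQuot fun _ _ hh hv => hv.abs_fwdQuot_succ_sub_le hh

theorem fwdQuot_fwdQuot_eval :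
    TimeEquicontinuous K C fun h v => _root_.fwdQuot h (_root_.fwdQuot h v) :=
  fwdQuot_eval.fwdQuot fun _ _ hh hv => hv.abs_fwdQuot_fwdQuot_succ_sub_le hh

theorem gridRHS {α β : ℝ → ℝ} {c A B Λ : ℝ} (H : IsParabolicCoeff α β c A B Λ) :
    TimeEquicontinuous K C (gridRHS α β) := by
  intro ε hε
  have hA := H.upper_nonneg
  have hB := H.drift_bound_nonneg
  have hΛ := H.lipschitz_nonneg
  set M := 1 / 2 * A + B + (1 / 2 * Λ * |C| + Λ * |C|)
  have hM : 0 < M + 1 := by positivity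
  have hε' : 0 < ε / (M + 1) := div_pos hε hM
  obtain ⟨η₀, hη₀, h₀⟩ := eval (K := K) (C := C) _ hε'
  obtain ⟨η₁, hη₁, h₁⟩ := fwdQuot_eval (K := K) (C := C) _ hε'
  obtain ⟨η₂, hη₂, h₂⟩ := fwdQuot_fwdQuot_eval (K := K) (C := C) _ hε'
  refine ⟨min η₀ (min η₁ η₂), by positivity, fun h τ w hh hhη hw n m hnm i => ?_⟩
  simp only [le_min_iff] at hhη hnm
  have hd₀ := h₀ h τ w hh hhη.1 hw n m hnm.1
  have hd₁ := h₁ h τ w hh hhη.2.1 hw n m hnm.2.1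
  have hd₂ := h₂ h τ w hh hhη.2.2 hw n m hnm.2.2 (i - 1)
  simp only [fwdQuot_fwdQuot hh.ne', sub_add_cancel] at hd₂
  have hcentral : |centralQuot h (w m) i - centralQuot h (w n) i| ≤ ε / (M + 1) := by
    have hr := abs_le.1 (hd₁ i)
    have hl := abs_le.1 (hd₁ (i - 1))
    rw [centralQuot_eq, centralQuot_eq, abs_le]
    constructor <;> linarith
  have hC := (hw.grid n).nonneg_bound
  calc _ ≤ 1 / 2 * (A * |secondQuot h (w m) i - secondQuot h (w n) i|) +
        B * |centralQuot h (w m) i - centralQuot h (w n) i| +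
          (1 / 2 * Λ * |C| + Λ * |C|) * |w m i - w n i| := by
        rw [abs_of_nonneg hC]
        exact H.abs_quasilinearRHS_sub_le (abs_centralQuot_le hh (hw.grid n).abs_sub_le i)
          ((hw.grid n).abs_secondQuot_le i)
    _ ≤ 1 / 2 * (A * (ε / (M + 1))) + B * (ε / (M + 1)) +
          (1 / 2 * Λ * |C| + Λ * |C|) * (ε / (M + 1)) := by gcongr; exact hd₀ i
    _ = M / (M + 1) * ε := by simp only [M]; ring
    _ ≤ ε := mul_le_of_le_one_left hε.le (div_le_one_of_le₀ (by linarith) hM.le)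

end TimeEquicontinuous

theorem IsParabolicCoeff.exists_abs_sub_sub_mul_gridRHS_le {α β : ℝ → ℝ} {c A B Λ r K C ε : ℝ}
    (H : IsParabolicCoeff α β c A B Λ) (hr : 0 ≤ r) (hε : 0 < ε) :
    ∃ η > 0, ∀ h w, 0 < h → h ≤ η → IsScheme α β r h w →
      IsGridSolutionBound h (r * h ^ 2) K C w → ∀ n m : ℕ, |(m : ℝ) - n| * (r * h ^ 2) ≤ η → ∀ i,
        |w m i - w n i - ((m : ℝ) - n) * (r * h ^ 2) * gridRHS α β h (w n) i| ≤
          |(m : ℝ) - n| * (r * h ^ 2) * ε := by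
  obtain ⟨η, hη, key⟩ := TimeEquicontinuous.gridRHS (K := K) (C := C) H ε hε
  refine ⟨η, hη, fun h w hh hhη hw hbound n m hnm i => ?_⟩
  have hτ : 0 ≤ r * h ^ 2 := by positivity
  have hsum := abs_sub_le_mul_of_abs_succ_sub_le (n := n) (m := m) (d := r * h ^ 2 * ε)
    (u := fun k => w k i - k * (r * h ^ 2) * gridRHS α β h (w n) i) fun k hk => by
      have hstep : w (k + 1) i - (k + 1 : ℕ) * (r * h ^ 2) * gridRHS α β h (w n) i -
          (w k i - k * (r * h ^ 2) * gridRHS α β h (w n) i) =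
            r * h ^ 2 * (gridRHS α β h (w k) i - gridRHS α β h (w n) i) := by
        rw [hw]; push_cast; ring
      rw [hstep, abs_mul, abs_of_nonneg hτ]
      gcongr
      exact key h _ w hh hhη hbound n k ((mul_le_mul_of_nonneg_right hk hτ).trans hnm) i
  calc _ = |w m i - m * (r * h ^ 2) * gridRHS α β h (w n) i -
        (w n i - n * (r * h ^ 2) * gridRHS α β h (w n) i)| := by congr 1; ring
    _ ≤ _ := hsum.trans_eq (by ring)

/-! ### Classical solutions as limits of the scheme -/

theorem hasDerivAt_of_abs_sub_sub_mul_le {f : ℝ → ℝ} {f' x C : ℝ}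
    (hf : ∀ y, |f y - f x - (y - x) * f'| ≤ C * (y - x) ^ 2) : HasDerivAt f f' x := by
  rw [hasDerivAt_iff_isLittleO]
  refine (Asymptotics.IsBigO.of_bound C (.of_forall fun y => ?_)).trans_isLittleO
    (Asymptotics.isLittleO_pow_sub_sub x one_lt_two)
  simpa using hf y

theorem hasDerivWithinAt_of_abs_sub_sub_mul_le {f : ℝ → ℝ} {f' x : ℝ} {s : Set ℝ}
    (hf : ∀ ε > 0, ∃ η > 0, ∀ y ∈ s, |y - x| < η → |f y - f x - (y - x) * f'| ≤ |y - x| * ε) :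
    HasDerivWithinAt f f' s x := by
  rw [hasDerivWithinAt_iff_isLittleO, Asymptotics.isLittleO_iff]
  intro ε hε
  obtain ⟨η, hη, hf⟩ := hf ε hε
  filter_upwards [mem_nhdsWithin_of_mem_nhds (Metric.ball_mem_nhds x hη), self_mem_nhdsWithin]
    with y hy hys
  simpa [mul_comm ε] using hf y hys hy

/-- The mesh widths `h` are positive and tend to zero along the filter `l`. -/
structure IsVanishingMesh {ι : Type*} (l : Filter ι) (h : ι → ℝ) : Prop where
  pos : ∀ N, 0 < h N
  tendsto_zero : Tendsto h l (𝓝 0)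

namespace IsVanishingMesh

variable {ι : Type*} {l : Filter ι} {h τ : ι → ℝ}

theorem tendsto_floor_mul (hh : IsVanishingMesh l h) (x : ℝ) :
    Tendsto (fun N => (⌊x / h N⌋ : ℝ) * h N) l (𝓝 x) := by
  have hlow : Tendsto (fun N => x - h N) l (𝓝 x) := by
    simpa using tendsto_const_nhds.sub hh.tendsto_zero
  refine tendsto_of_tendsto_of_tendsto_of_le_of_le hlow tendsto_const_nhds (fun N => ?_) fun N => ?_
  · have := (div_lt_iff₀ (hh.pos N)).1 (Int.lt_floor_add_one (x / h N))
    dsimp only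
    linarith
  · exact (le_div_iff₀ (hh.pos N)).1 (Int.floor_le (x / h N))

theorem tendsto_floor_sub_mul (hh : IsVanishingMesh l h) (x y : ℝ) :
    Tendsto (fun N => ((⌊y / h N⌋ : ℝ) - ⌊x / h N⌋) * h N) l (𝓝 (y - x)) :=
  ((hh.tendsto_floor_mul y).sub (hh.tendsto_floor_mul x)).congr fun N => by ring

theorem tendsto_natFloor_sub_mul (hτ : IsVanishingMesh l τ) {s t : ℝ} (hs : 0 ≤ s) (ht : 0 ≤ t) :
    Tendsto (fun N => ((⌊t / τ N⌋₊ : ℝ) - ⌊s / τ N⌋₊) * τ N) l (𝓝 (t - s)) := by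
  refine (hτ.tendsto_floor_sub_mul s t).congr fun N => ?_
  rw [natCast_floor_eq_intCast_floor (div_nonneg ht (hτ.pos N).le),
    natCast_floor_eq_intCast_floor (div_nonneg hs (hτ.pos N).le)]

theorem tendsto_abs_natFloor_sub_mul (hτ : IsVanishingMesh l τ) {s t : ℝ} (hs : 0 ≤ s)
    (ht : 0 ≤ t) :
    Tendsto (fun N => |(⌊t / τ N⌋₊ : ℝ) - ⌊s / τ N⌋₊| * τ N) l (𝓝 |t - s|) :=
  (hτ.tendsto_natFloor_sub_mul hs ht).abs.congr fun N => by
    rw [abs_mul, abs_of_pos (hτ.pos N)]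

theorem mul_sq (hh : IsVanishingMesh l h) {r : ℝ} (hr : 0 < r) :
    IsVanishingMesh l fun N => r * h N ^ 2 where
  pos N := mul_pos hr (pow_pos (hh.pos N) 2)
  tendsto_zero := by simpa using (hh.tendsto_zero.pow 2).const_mul r

end IsVanishingMesh

/-- The functions `u N` on space-time grids with meshes `h N` and time steps `τ N`, interpolated as
piecewise constant functions, converge pointwise to `U` along `l`. -/
def IsMeshLimit {ι : Type*} (l : Filter ι) (h τ : ι → ℝ) (u : ι → ℕ → ℤ → ℝ) (U : ℝ → ℝ → ℝ) :
    Prop :=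
  ∀ t x, Tendsto (fun N => u N ⌊t / τ N⌋₊ ⌊x / h N⌋) l (𝓝 (U t x))

theorem exists_isMeshLimit {ι : Type*} (l : Ultrafilter ι) (h τ : ι → ℝ) {u : ι → ℕ → ℤ → ℝ}
    {C : ℝ} (hu : ∀ N n i, |u N n i| ≤ C) : ∃ U, IsMeshLimit l h τ u U := by
  have hlim : ∀ t x, ∃ a, Tendsto (fun N => u N ⌊t / τ N⌋₊ ⌊x / h N⌋) l (𝓝 a) := fun t x =>
    let ⟨a, _, ha⟩ := (isCompact_Icc (a := -C) (b := C)).ultrafilter_le_nhds (l.map _)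
      (le_principal_iff.2 (mem_map.2 (univ_mem' fun N => abs_le.1 (hu N _ _))))
    ⟨a, ha⟩
  choose U hU using hlim
  exact ⟨U, hU⟩

namespace IsMeshLimit

variable {ι : Type*} {l : Filter ι} {h τ : ι → ℝ} {u v : ι → ℕ → ℤ → ℝ} {U V : ℝ → ℝ → ℝ} {C : ℝ}

theorem abs_le [l.NeBot] (hU : IsMeshLimit l h τ u U) (hu : ∀ N n i, |u N n i| ≤ C) (t x : ℝ) :
    |U t x| ≤ C :=
  le_of_tendsto' (hU t x).abs fun N => hu N _ _

theorem lipschitzWith [l.NeBot] (hh : IsVanishingMesh l h) (hU : IsMeshLimit l h τ u U)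
    (hu : ∀ N n i, |u N n (i + 1) - u N n i| ≤ C * h N) (t : ℝ) :
    LipschitzWith C.toNNReal (U t) := by
  refine LipschitzWith.of_dist_le' fun y x => ?_
  rw [Real.dist_eq, Real.dist_eq]
  refine le_of_tendsto_of_tendsto' ((hU t y).sub (hU t x)).abs
    ((hh.tendsto_floor_sub_mul x y).abs.const_mul C) fun N => ?_
  rw [abs_mul, abs_of_pos (hh.pos N), mul_comm |_|, ← mul_assoc]
  exact abs_sub_le_mul_abs_of_adjacent (hu N _) _ _

theorem hasDerivAt [l.NeBot] (hh : IsVanishingMesh l h) (hU : IsMeshLimit l h τ u U)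
    (hV : IsMeshLimit l h τ (fun N n => fwdQuot (h N) (u N n)) V)
    (hu : ∀ N n i, |fwdQuot (h N) (u N n) (i + 1) - fwdQuot (h N) (u N n) i| ≤ C * h N)
    (t x : ℝ) : HasDerivAt (U t) (V t x) x :=
  hasDerivAt_of_abs_sub_sub_mul_le fun y =>
    le_of_tendsto_of_tendsto'
      (((hU t y).sub (hU t x)).sub ((hh.tendsto_floor_sub_mul x y).mul (hV t x))).abs
      (((hh.tendsto_floor_sub_mul x y).pow 2).const_mul C)
      fun N => abs_sub_sub_mul_fwdQuot_le (hh.pos N) (hu N _) _ _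

theorem continuousOn_time [l.NeBot] {K : ℝ} {D : ℝ → (ℤ → ℝ) → ℤ → ℝ}
    (hD : TimeEquicontinuous K C D) (hh : IsVanishingMesh l h) (hτ : IsVanishingMesh l τ)
    (hu : ∀ N, IsGridSolutionBound (h N) (τ N) K C (u N))
    (hU : IsMeshLimit l h τ (fun N n => D (h N) (u N n)) U) (x : ℝ) :
    ContinuousOn (fun t => U t x) (Ici 0) := by
  intro s hs
  rw [Metric.continuousWithinAt_iff']
  intro ε hε
  obtain ⟨η, hη, key⟩ := hD (ε / 2) (half_pos hε)
  filter_upwards [mem_nhdsWithin_of_mem_nhds (Metric.ball_mem_nhds s hη), self_mem_nhdsWithin]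
    with t ht ht₀
  refine (le_of_tendsto ((hU t x).sub (hU s x)).abs ?_).trans_lt (half_lt_self hε)
  filter_upwards [hh.tendsto_zero.eventually_le_const hη,
    (hτ.tendsto_abs_natFloor_sub_mul hs ht₀).eventually_le_const ht] with N hN hN'
  exact key _ _ _ (hh.pos N) hN (hu N) _ _ hN' _

theorem continuousOn [l.NeBot] {K L : ℝ} {D : ℝ → (ℤ → ℝ) → ℤ → ℝ}
    (hD : TimeEquicontinuous K C D) (hh : IsVanishingMesh l h) (hτ : IsVanishingMesh l τ)
    (hu : ∀ N, IsGridSolutionBound (h N) (τ N) K C (u N))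
    (hDu : ∀ N n i, |D (h N) (u N n) (i + 1) - D (h N) (u N n) i| ≤ L * h N)
    (hU : IsMeshLimit l h τ (fun N n => D (h N) (u N n)) U) :
    ContinuousOn (uncurry U) (Ici 0 ×ˢ univ) :=
  continuousOn_prod_of_continuousOn_lipschitzOnWith' (uncurry U) L.toNNReal
    (fun t _ => (hU.lipschitzWith hh hDu t).lipschitzOnWith)
    fun x _ => hU.continuousOn_time hD hh hτ hu x

theorem comp_sub_one (hh : IsVanishingMesh l h) (hU : IsMeshLimit l h τ u U)
    (hu : ∀ N n i, |u N n (i + 1) - u N n i| ≤ C * h N) :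
    IsMeshLimit l h τ (fun N n i => u N n (i - 1)) U := by
  intro t x
  have hdiff : Tendsto (fun N => u N ⌊t / τ N⌋₊ ⌊x / h N⌋ - u N ⌊t / τ N⌋₊ (⌊x / h N⌋ - 1)) l
      (𝓝 0) := by
    refine squeeze_zero_norm (fun N => ?_) (by simpa using hh.tendsto_zero.const_mul C)
    simpa using hu N ⌊t / τ N⌋₊ (⌊x / h N⌋ - 1)
  simpa using (hU t x).sub hdiff

end IsMeshLimit

/-- Classical `C^{1,2}` solution `W` of `∂ₜW = ½ α(W) ∂ₓₓW - β(W) ∂ₓW` for `t ≥ 0` with values in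
`[0, K]` and initial condition `w₀`, where `E = ∂ₓW` and `Z = ∂ₓₓW` are bounded by `C`. -/
structure IsClassicalSolution (α β w₀ : ℝ → ℝ) (K C : ℝ) (W E Z : ℝ → ℝ → ℝ) : Prop where
  mem_Icc : ∀ t x, W t x ∈ Icc 0 K
  abs_deriv_le : ∀ t x, |E t x| ≤ C
  abs_deriv_deriv_le : ∀ t x, |Z t x| ≤ C
  initial : ∀ x, W 0 x = w₀ x
  hasDerivAt : ∀ t x, HasDerivAt (W t) (E t x) x
  hasDerivAt_deriv : ∀ t x, HasDerivAt (E t) (Z t x) x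
  hasDerivWithinAt_time : ∀ t x, 0 ≤ t →
    HasDerivWithinAt (fun s => W s x) (quasilinearRHS α β (W t x) (E t x) (Z t x)) (Ici 0) t
  continuousOn : ContinuousOn (uncurry W) (Ici 0 ×ˢ univ)
  continuousOn_deriv : ContinuousOn (uncurry E) (Ici 0 ×ˢ univ)
  continuousOn_deriv_deriv : ContinuousOn (uncurry Z) (Ici 0 ×ˢ univ)

namespace IsParabolicCoeff

variable {α β : ℝ → ℝ} {c A B Λ K C r : ℝ} {ι : Type*} {l : Filter ι} {h : ι → ℝ}
  {w : ι → ℕ → ℤ → ℝ} {W E Z : ℝ → ℝ → ℝ}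

theorem continuous_diffusion (H : IsParabolicCoeff α β c A B Λ) : Continuous α :=
  (LipschitzWith.of_dist_le' H.diffusion_lipschitz).continuous

theorem continuous_drift (H : IsParabolicCoeff α β c A B Λ) : Continuous β :=
  (LipschitzWith.of_dist_le' H.drift_lipschitz).continuous

theorem isMeshLimit_gridRHS (H : IsParabolicCoeff α β c A B Λ) {τ : ι → ℝ}
    (hh : IsVanishingMesh l h) (hw : ∀ N, IsGridSolutionBound (h N) (τ N) K C (w N))
    (hW : IsMeshLimit l h τ w W) (hE : IsMeshLimit l h τ (fun N n => fwdQuot (h N) (w N n)) E)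
    (hZ : IsMeshLimit l h τ (fun N n => fwdQuot (h N) (fwdQuot (h N) (w N n))) Z) :
    IsMeshLimit l h τ (fun N n => gridRHS α β (h N) (w N n))
      fun t x => quasilinearRHS α β (W t x) (E t x) (Z t x) := by
  have hE' := hE.comp_sub_one hh fun N n => ((hw N).grid n).abs_fwdQuot_succ_sub_le (hh.pos N)
  have hZ' := hZ.comp_sub_one hh fun N n =>
    ((hw N).grid n).abs_fwdQuot_fwdQuot_succ_sub_le (hh.pos N)
  simp only [fwdQuot_fwdQuot (hh.pos _).ne', sub_add_cancel] at hZ'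
  intro t x
  have hα := (H.continuous_diffusion.tendsto _).comp (hW t x)
  have hβ := (H.continuous_drift.tendsto _).comp (hW t x)
  have hcentral := ((hE t x).add (hE' t x)).div_const 2
  simp only [← centralQuot_eq, add_self_div_two] at hcentral
  exact ((hα.const_mul (1 / 2)).mul (hZ' t x)).sub (hβ.mul hcentral)

theorem hasDerivWithinAt_meshLimit [l.NeBot] (H : IsParabolicCoeff α β c A B Λ) (hr : 0 < r)
    (hh : IsVanishingMesh l h) (hs : ∀ N, IsScheme α β r (h N) (w N))
    (hw : ∀ N, IsGridSolutionBound (h N) (r * h N ^ 2) K C (w N)) {R : ℝ → ℝ → ℝ}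
    (hW : IsMeshLimit l h (fun N => r * h N ^ 2) w W)
    (hR : IsMeshLimit l h (fun N => r * h N ^ 2) (fun N n => gridRHS α β (h N) (w N n)) R)
    {s : ℝ} (hs₀ : 0 ≤ s) (x : ℝ) : HasDerivWithinAt (fun t => W t x) (R s x) (Ici 0) s := by
  refine hasDerivWithinAt_of_abs_sub_sub_mul_le fun ε hε => ?_
  obtain ⟨η, hη, key⟩ := H.exists_abs_sub_sub_mul_gridRHS_le (K := K) (C := C) hr.le hε
  refine ⟨η, hη, fun t ht htη => ?_⟩
  have hτ := hh.mul_sq hr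
  refine le_of_tendsto_of_tendsto
    (((hW t x).sub (hW s x)).sub ((hτ.tendsto_natFloor_sub_mul hs₀ ht).mul (hR s x))).abs
    ((hτ.tendsto_abs_natFloor_sub_mul hs₀ ht).mul_const ε) ?_
  filter_upwards [hh.tendsto_zero.eventually_le_const hη,
    (hτ.tendsto_abs_natFloor_sub_mul hs₀ ht).eventually_le_const htη] with N hN hN'
  exact key (h N) (w N) (hh.pos N) hN (hs N) (hw N) _ _ hN' _

theorem isClassicalSolution_meshLimit [l.NeBot] (H : IsParabolicCoeff α β c A B Λ) (hr : 0 < r)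
    (hh : IsVanishingMesh l h) (hs : ∀ N, IsScheme α β r (h N) (w N))
    (hw : ∀ N, IsGridSolutionBound (h N) (r * h N ^ 2) K C (w N)) {w₀ : ℝ → ℝ}
    (hw₀ : Continuous w₀) (hinit : ∀ N i, w N 0 i = w₀ (i * h N))
    (hW : IsMeshLimit l h (fun N => r * h N ^ 2) w W)
    (hE : IsMeshLimit l h (fun N => r * h N ^ 2) (fun N n => fwdQuot (h N) (w N n)) E)
    (hZ : IsMeshLimit l h (fun N => r * h N ^ 2)
      (fun N n => fwdQuot (h N) (fwdQuot (h N) (w N n))) Z) :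
    IsClassicalSolution α β w₀ K C W E Z where
  mem_Icc t x := isClosed_Icc.mem_of_tendsto (hW t x)
    (.of_forall fun N => ((hw N).grid _).mem_Icc _)
  abs_deriv_le := hE.abs_le fun N n => ((hw N).grid n).abs_fwdQuot_le (hh.pos N)
  abs_deriv_deriv_le := hZ.abs_le fun N n => ((hw N).grid n).abs_fwdQuot_fwdQuot_le (hh.pos N)
  initial x := by
    refine tendsto_nhds_unique (hW 0 x) ?_
    simp only [zero_div, Nat.floor_zero, hinit]
    exact (hw₀.tendsto x).comp (hh.tendsto_floor_mul x)
  hasDerivAt := hW.hasDerivAt hh hE fun N n => ((hw N).grid n).abs_fwdQuot_succ_sub_le (hh.pos N)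
  hasDerivAt_deriv := hE.hasDerivAt hh hZ fun N n =>
    ((hw N).grid n).abs_fwdQuot_fwdQuot_succ_sub_le (hh.pos N)
  hasDerivWithinAt_time _ x ht :=
    H.hasDerivWithinAt_meshLimit hr hh hs hw hW (H.isMeshLimit_gridRHS hh hw hW hE hZ) ht x
  continuousOn := hW.continuousOn .eval hh (hh.mul_sq hr) hw fun N n => ((hw N).grid n).abs_sub_le
  continuousOn_deriv := hE.continuousOn .fwdQuot_eval hh (hh.mul_sq hr) hw fun N n =>
    ((hw N).grid n).abs_fwdQuot_succ_sub_le (hh.pos N)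
  continuousOn_deriv_deriv := hZ.continuousOn .fwdQuot_fwdQuot_eval hh (hh.mul_sq hr) hw
    fun N n => ((hw N).grid n).abs_fwdQuot_fwdQuot_succ_sub_le (hh.pos N)

end IsParabolicCoeff

/-- The solution of the explicit scheme starting from the grid function `v`. -/
def scheme (α β : ℝ → ℝ) (r h : ℝ) (v : ℤ → ℝ) : ℕ → ℤ → ℝ
  | 0 => v
  | n + 1 => fun i => scheme α β r h v n i + r * h ^ 2 * gridRHS α β h (scheme α β r h v n) i

theorem isScheme_scheme (α β : ℝ → ℝ) (r h : ℝ) (v : ℤ → ℝ) :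
    IsScheme α β r h (scheme α β r h v) := fun _ _ => rfl

theorem IsParabolicCoeff.exists_isClassicalSolution {α β w₀ : ℝ → ℝ} {c A B Λ K L : ℝ}
    (H : IsParabolicCoeff α β c A B Λ) (hK : 0 ≤ K) (hL : 0 ≤ L) (hw₀ : Continuous w₀)
    (hgrid : ∀ h, 0 < h → IsGridC21 h K L fun i : ℤ => w₀ (i * h)) :
    ∃ C W E Z, IsClassicalSolution α β w₀ K C W E Z := by
  have hA : 0 < A := H.pos.trans_le H.lower_le_upper
  set r := 1 / (3 * A)
  have hr : 0 < r := by positivity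
  have hrA : r * A ≤ 1 / 3 := by simp only [r]; field_simp; rfl
  obtain ⟨C, δ, -, hδ, hbound⟩ := H.exists_isGridSolutionBound hr hrA hK hL
  set h : ℕ → ℝ := fun N => δ * (1 / ((N : ℝ) + 1))
  have hh : IsVanishingMesh (hyperfilter ℕ : Filter ℕ) h :=
    ⟨fun N => by simp only [h]; positivity, by
      simpa only [mul_zero] using (tendsto_one_div_add_atTop_nhds_zero_nat.mono_left
        Nat.hyperfilter_le_atTop).const_mul δ⟩
  have hhδ : ∀ N, h N ≤ δ := fun N =>
    mul_le_of_le_one_right hδ.le (div_le_one_of_le₀ (by simp) (by positivity))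
  set w : ℕ → ℕ → ℤ → ℝ := fun N => scheme α β r (h N) fun i => w₀ (i * h N)
  have hw : ∀ N, IsGridSolutionBound (h N) (r * h N ^ 2) K C (w N) := fun N =>
    hbound (h N) (hh.pos N) (hhδ N) _ (isScheme_scheme α β r _ _) (hgrid _ (hh.pos N))
  have hwK : ∀ N n i, |w N n i| ≤ K := fun N n i => by
    have hmem := ((hw N).grid n).mem_Icc i
    exact (abs_of_nonneg hmem.1).trans_le hmem.2
  obtain ⟨W, hW⟩ := exists_isMeshLimit (hyperfilter ℕ) h (fun N => r * h N ^ 2) hwK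
  obtain ⟨E, hE⟩ := exists_isMeshLimit (hyperfilter ℕ) h (fun N => r * h N ^ 2)
    fun N n => ((hw N).grid n).abs_fwdQuot_le (hh.pos N)
  obtain ⟨Z, hZ⟩ := exists_isMeshLimit (hyperfilter ℕ) h (fun N => r * h N ^ 2)
    fun N n => ((hw N).grid n).abs_fwdQuot_fwdQuot_le (hh.pos N)
  exact ⟨C, W, E, Z, H.isClassicalSolution_meshLimit hr hh (fun N => isScheme_scheme α β r _ _) hw
    hw₀ (fun _ _ => rfl) hW hE hZ⟩

/-! ### Bounded Lipschitz functions and grid restrictions -/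

/-- `f` is bounded and Lipschitz; one constant serves for both properties. -/
def IsBoundedLipschitz (f : ℝ → ℝ) : Prop :=
  ∃ L : ℝ, 0 ≤ L ∧ (∀ x, |f x| ≤ L) ∧ ∀ x y, |f x - f y| ≤ L * |x - y|

namespace IsBoundedLipschitz

variable {f g : ℝ → ℝ}

theorem of_bounds {M L : ℝ} (hM : ∀ x, |f x| ≤ M) (hL : ∀ x y, |f x - f y| ≤ L * |x - y|) :
    IsBoundedLipschitz f :=
  ⟨max M L, ((abs_nonneg _).trans (hM 0)).trans (le_max_left _ _),
    fun x => (hM x).trans (le_max_left _ _),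
    fun x y => (hL x y).trans (by gcongr; exact le_max_right _ _)⟩

theorem add (hf : IsBoundedLipschitz f) (hg : IsBoundedLipschitz g) :
    IsBoundedLipschitz fun x => f x + g x := by
  obtain ⟨L, -, hfb, hfL⟩ := hf
  obtain ⟨L', -, hgb, hgL⟩ := hg
  refine of_bounds (fun x => (abs_add_le _ _).trans (add_le_add (hfb x) (hgb x)))
    (L := L + L') fun x y => ?_
  rw [add_sub_add_comm, add_mul]
  exact (abs_add_le _ _).trans (add_le_add (hfL x y) (hgL x y))

theorem mul (hf : IsBoundedLipschitz f) (hg : IsBoundedLipschitz g) :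
    IsBoundedLipschitz fun x => f x * g x := by
  obtain ⟨L, -, hfb, hfL⟩ := hf
  obtain ⟨L', -, hgb, hgL⟩ := hg
  refine of_bounds (fun x => abs_mul_le_mul_of_abs_le (hfb x) (hgb x))
    (L := L * L' + L * L') fun x y => ?_
  calc |f x * g x - f y * g y| = |f x * (g x - g y) + (f x - f y) * g y| := by ring_nf
    _ ≤ L * (L' * |x - y|) + L * |x - y| * L' :=
        (abs_add_le _ _).trans <| add_le_add (abs_mul_le_mul_of_abs_le (hfb x) (hgL x y))
          (abs_mul_le_mul_of_abs_le (hfL x y) (hgb y))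
    _ = (L * L' + L * L') * |x - y| := by ring

theorem of_hasDerivAt {f' : ℝ → ℝ} {M L : ℝ} (hM : ∀ x, |f x| ≤ M)
    (hf : ∀ x, HasDerivAt f (f' x) x) (hL : ∀ x, |f' x| ≤ L) : IsBoundedLipschitz f := by
  refine of_bounds hM (L := L) fun x y => ?_
  simpa using convex_univ.norm_image_sub_le_of_norm_hasDerivWithin_le
    (fun x _ => (hf x).hasDerivWithinAt) (fun x _ => hL x) (mem_univ y) (mem_univ x)

theorem comp_of_lipschitzOnWith {s : Set ℝ} {K : NNReal} (hs : IsCompact s)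
    (hg : LipschitzOnWith K g s) (hf : IsBoundedLipschitz f) (hfs : ∀ x, f x ∈ s) :
    IsBoundedLipschitz fun x => g (f x) := by
  obtain ⟨M, hM⟩ := hs.exists_bound_of_continuousOn hg.continuousOn
  obtain ⟨L, -, -, hfL⟩ := hf
  refine of_bounds (fun x => hM _ (hfs x)) (L := K * L) fun x y => ?_
  calc |g (f x) - g (f y)| ≤ K * |f x - f y| := hg.dist_le_mul _ (hfs x) _ (hfs y)
    _ ≤ K * (L * |x - y|) := by gcongr; exact hfL x y
    _ = K * L * |x - y| := (mul_assoc _ _ _).symm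

end IsBoundedLipschitz

section ForwardDifferences

variable {f f' : ℝ → ℝ} {h : ℝ}

theorem hasDerivAt_fwdDiff (h : ℝ) (hf : ∀ x, HasDerivAt f (f' x) x) (x : ℝ) :
    HasDerivAt (fwdDiff h f) (fwdDiff h f' x) x :=
  ((hf (x + h)).comp_add_const x h).sub (hf x)

theorem abs_fwdDiff_le {C : ℝ} (hh : 0 < h) (hf : ∀ x, HasDerivAt f (f' x) x)
    (hC : ∀ x, |f' x| ≤ C) (x : ℝ) : |fwdDiff h f x| ≤ C * h := by
  simpa [fwdDiff, abs_of_pos hh] using convex_univ.norm_image_sub_le_of_norm_hasDerivWithin_le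
    (fun x _ => (hf x).hasDerivWithinAt) (fun x _ => hC x) (mem_univ x) (mem_univ (x + h))

theorem secondQuot_grid (h : ℝ) (w : ℝ → ℝ) (i : ℤ) :
    secondQuot h (fun i : ℤ => w (i * h)) i = fwdDiff h (fwdDiff h w) ((i - 1) * h) / h ^ 2 := by
  have hsucc : ((i : ℝ) - 1) * h + h = i * h := by ring
  simp only [secondQuot, fwdDiff, hsucc]
  push_cast
  ring_nf

end ForwardDifferences

theorem isGridC21_of_hasDerivAt {w w₁ w₂ : ℝ → ℝ} {h K L : ℝ} (hh : 0 < h)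
    (hmem : ∀ x, w x ∈ Icc 0 K) (hw : ∀ x, HasDerivAt w (w₁ x) x)
    (hw₁ : ∀ x, HasDerivAt w₁ (w₂ x) x) (hL₁ : ∀ x, |w₁ x| ≤ L) (hL₂ : ∀ x, |w₂ x| ≤ L)
    (hLip : ∀ x y, |w₂ x - w₂ y| ≤ L * |x - y|) :
    IsGridC21 h K L fun i : ℤ => w (i * h) := by
  have hw₂ : ∀ x, |fwdDiff h w₂ x| ≤ L * h := fun x => by
    simpa [fwdDiff, abs_of_pos hh] using hLip (x + h) x
  have hΔ := hasDerivAt_fwdDiff h hw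
  have hΔ₁ := hasDerivAt_fwdDiff h hw₁
  have hΔΔ := abs_fwdDiff_le hh hΔ (abs_fwdDiff_le hh hw₁ hL₂)
  have hΔΔΔ := abs_fwdDiff_le hh (hasDerivAt_fwdDiff h hΔ) (abs_fwdDiff_le hh hΔ₁ hw₂)
  refine ⟨fun i => hmem _, fun i => ?_, fun i => ?_, fun i => ?_⟩
  · simpa [fwdDiff, add_mul] using abs_fwdDiff_le hh hw hL₁ (i * h)
  · rw [secondQuot_grid, abs_div, abs_of_pos (pow_pos hh 2), div_le_iff₀ (pow_pos hh 2)]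
    exact (hΔΔ _).trans_eq (by ring)
  · have hsucc : ((i + 1 : ℤ) - 1 : ℝ) * h = (i - 1) * h + h := by push_cast; ring
    rw [secondQuot_grid, secondQuot_grid, hsucc, ← sub_div, abs_div, abs_of_pos (pow_pos hh 2),
      div_le_iff₀ (pow_pos hh 2)]
    exact (hΔΔΔ _).trans_eq (by ring)

/-! ### The primitive of the diffusion coefficient and its inverse -/

/-- The continuation of `f`, considered on `[0, 1]` only, by its values at the end points. -/
def clampExtend (f : ℝ → ℝ) (u : ℝ) : ℝ := f (projIcc (0 : ℝ) 1 zero_le_one u)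

section ClampExtend

variable {f : ℝ → ℝ}

theorem clampExtend_of_mem (f : ℝ → ℝ) {u : ℝ} (hu : u ∈ Icc (0 : ℝ) 1) :
    clampExtend f u = f u := by
  rw [clampExtend, projIcc_of_mem _ hu]

theorem continuous_clampExtend (hf : ContinuousOn f (Icc 0 1)) : Continuous (clampExtend f) :=
  hf.comp_continuous (continuous_subtype_val.comp continuous_projIcc) fun _ => Subtype.coe_prop _

theorem isBoundedLipschitz_clampExtend_comp {K : NNReal} (hf : LipschitzOnWith K f (Icc 0 1))
    {J : ℝ → ℝ} {L : ℝ} (hJ : ∀ u v, |J u - J v| ≤ L * |u - v|) :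
    IsBoundedLipschitz fun w => clampExtend f (J w) := by
  have hproj : IsBoundedLipschitz fun w => (projIcc (0 : ℝ) 1 zero_le_one (J w) : ℝ) :=
    .of_bounds (M := 1) (fun w => abs_le.2 ⟨by linarith [(projIcc _ _ zero_le_one (J w)).2.1],
      (projIcc _ _ zero_le_one (J w)).2.2⟩) fun u v => (abs_projIcc_sub_projIcc _).trans (hJ u v)
  exact hproj.comp_of_lipschitzOnWith (g := f) isCompact_Icc hf fun _ => Subtype.coe_prop _

theorem primitive_clampExtend (f : ℝ → ℝ) {u : ℝ} (hu : u ∈ Icc (0 : ℝ) 1) :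
    primitive (clampExtend f) u = primitive f u := by
  refine intervalIntegral.integral_congr fun v hv => clampExtend_of_mem f ?_
  rw [uIcc_of_le hu.1] at hv
  exact ⟨hv.1, hv.2.trans hu.2⟩

theorem hasDerivAt_primitive (hf : Continuous f) (u : ℝ) : HasDerivAt (primitive f) (f u) u :=
  (hf.integral_hasStrictDerivAt 0 u).hasDerivAt

theorem hasDerivWithinAt_primitive (hf : ContinuousOn f (Icc 0 1)) {u : ℝ}
    (hu : u ∈ Icc (0 : ℝ) 1) : HasDerivWithinAt (primitive f) (f u) (Icc 0 1) u := by
  have h := (hasDerivAt_primitive (continuous_clampExtend hf) u).hasDerivWithinAt (s := Icc 0 1)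
  rw [clampExtend_of_mem f hu] at h
  exact h.congr (fun v hv => (primitive_clampExtend f hv).symm) (primitive_clampExtend f hu).symm

theorem monotoneOn_primitive (hf : ContinuousOn f (Icc 0 1)) (hf0 : ∀ u ∈ Icc (0 : ℝ) 1, 0 ≤ f u) :
    MonotoneOn (primitive f) (Icc 0 1) := by
  refine monotoneOn_of_deriv_nonneg (convex_Icc 0 1)
    (fun u hu => (hasDerivWithinAt_primitive hf hu).continuousWithinAt)
    (fun u hu => ?_) fun u hu => ?_ <;>
  have h := (hasDerivWithinAt_primitive hf (interior_subset hu)).hasDerivAt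
    (mem_interior_iff_mem_nhds.1 hu)
  · exact h.differentiableAt.differentiableWithinAt
  · exact h.deriv ▸ hf0 u (interior_subset hu)

theorem primitive_mem_Icc (hf : ContinuousOn f (Icc 0 1)) (hf0 : ∀ u ∈ Icc (0 : ℝ) 1, 0 ≤ f u)
    {u : ℝ} (hu : u ∈ Icc (0 : ℝ) 1) : primitive f u ∈ Icc 0 (primitive f 1) := by
  have hmono := monotoneOn_primitive hf hf0
  refine ⟨?_, hmono hu (right_mem_Icc.2 zero_le_one) hu.2⟩
  simpa [primitive] using hmono (left_mem_Icc.2 zero_le_one) hu hu.1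

end ClampExtend

theorem monotone_sub_mul_of_le_hasDerivAt {f f' : ℝ → ℝ} {c : ℝ}
    (hf : ∀ x, HasDerivAt f (f' x) x) (hle : ∀ x, c ≤ f' x) : Monotone fun x => f x - c * x :=
  monotone_of_hasDerivAt_nonneg (f' := fun x => f' x - c)
    (fun x => (hf x).sub (by simpa using (hasDerivAt_id x).const_mul c))
    fun x => sub_nonneg.2 (hle x)

theorem exists_orderIso_of_hasDerivAt_ge {f f' : ℝ → ℝ} {c : ℝ} (hc : 0 < c)
    (hf : ∀ x, HasDerivAt f (f' x) x) (hle : ∀ x, c ≤ f' x) : ∃ e : ℝ ≃o ℝ, ⇑e = f := by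
  have hmono := monotone_sub_mul_of_le_hasDerivAt hf hle
  have hstrict : StrictMono f := fun x y hxy => by
    have := hmono hxy.le
    simp only at this
    nlinarith
  have hsurj : Surjective f := by
    refine (continuous_iff_continuousAt.2 fun x => (hf x).continuousAt).surjective ?_ ?_
    · refine tendsto_atTop_mono' _ ?_
        (tendsto_atTop_add_const_left _ (f 0) (tendsto_id.const_mul_atTop hc))
      filter_upwards [eventually_ge_atTop 0] with x hx
      simpa [le_sub_iff_add_le] using hmono hx
    · refine tendsto_atBot_mono' _ ?_
        (tendsto_atBot_add_const_left _ (f 0) (tendsto_id.const_mul_atBot hc))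
      filter_upwards [eventually_le_atBot 0] with x hx
      simpa [sub_le_iff_le_add] using hmono hx
  exact ⟨hstrict.orderIsoOfSurjective f hsurj, rfl⟩

/-- `J` inverts the primitive of `a` on `[0, 1]`, being extended beyond `[0, ∫₀¹ a]` so that it is
differentiable with `c⁻¹` as a Lipschitz constant. -/
structure IsPrimitiveInverse (a J : ℝ → ℝ) (c : ℝ) : Prop where
  left : ∀ u ∈ Icc (0 : ℝ) 1, J (primitive a u) = u
  mem_Icc : ∀ w ∈ Icc 0 (primitive a 1), J w ∈ Icc (0 : ℝ) 1
  right : ∀ w ∈ Icc 0 (primitive a 1), primitive a (J w) = w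
  hasDerivAt : ∀ w, HasDerivAt J (clampExtend a (J w))⁻¹ w
  abs_sub_le : ∀ v w, |J v - J w| ≤ c⁻¹ * |v - w|

theorem exists_isPrimitiveInverse {a : ℝ → ℝ} {c : ℝ} (ha : ContinuousOn a (Icc 0 1)) (hc : 0 < c)
    (hca : ∀ u ∈ Icc (0 : ℝ) 1, c ≤ a u) : ∃ J, IsPrimitiveInverse a J c := by
  have hderiv := hasDerivAt_primitive (continuous_clampExtend ha)
  have hle : ∀ u, c ≤ clampExtend a u := fun u => hca _ (Subtype.coe_prop _)
  obtain ⟨e, he⟩ := exists_orderIso_of_hasDerivAt_ge hc hderiv hle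
  have heA : ∀ u ∈ Icc (0 : ℝ) 1, e u = primitive a u := fun u hu => by
    rw [he, primitive_clampExtend a hu]
  have hmem : ∀ w ∈ Icc 0 (primitive a 1), e.symm w ∈ Icc (0 : ℝ) 1 := fun w hw => by
    rw [mem_Icc, e.le_symm_apply, e.symm_apply_le, heA 1 (by simp), heA 0 (by simp)]
    simpa [primitive] using hw
  have hsymm : ∀ w, HasDerivAt e.symm (clampExtend a (e.symm w))⁻¹ w := fun w =>
    HasDerivAt.of_local_left_inverse e.symm.continuous.continuousAt (he ▸ hderiv _)
      (hc.trans_le (hle _)).ne' (Eventually.of_forall e.apply_symm_apply)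
  refine ⟨e.symm, ⟨fun u hu => ?_, hmem, fun w hw => ?_, hsymm, fun v w => ?_⟩⟩
  · rw [← heA u hu, e.symm_apply_apply]
  · rw [← heA _ (hmem w hw), e.apply_symm_apply]
  · refine convex_univ.norm_image_sub_le_of_norm_hasDerivWithin_le
      (fun x _ => (hsymm x).hasDerivWithinAt) (fun x _ => ?_) (mem_univ w) (mem_univ v)
    rw [Real.norm_of_nonneg (inv_nonneg.2 (hc.le.trans (hle _)))]
    exact inv_anti₀ hc (hle _)

theorem exists_isParabolicCoeff {a b J : ℝ → ℝ} {c L : ℝ} {K K' : NNReal} (hc : 0 < c)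
    (hca : ∀ u ∈ Icc (0 : ℝ) 1, c ≤ a u) (ha : LipschitzOnWith K a (Icc 0 1))
    (hb : LipschitzOnWith K' b (Icc 0 1)) (hJ : ∀ u v, |J u - J v| ≤ L * |u - v|) :
    ∃ A B Λ, IsParabolicCoeff (fun w => clampExtend a (J w)) (fun w => clampExtend b (J w))
      c A B Λ := by
  obtain ⟨A, hA, hAb, hAL⟩ := isBoundedLipschitz_clampExtend_comp ha hJ
  obtain ⟨B, -, hBb, hBL⟩ := isBoundedLipschitz_clampExtend_comp hb hJ
  exact ⟨A, B, max A B, hc, fun u => hca _ (Subtype.coe_prop _),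
    fun u => (le_abs_self _).trans (hAb u), hBb, hA.trans (le_max_left _ _),
    fun u v => (hAL u v).trans (by gcongr; exact le_max_left _ _),
    fun u v => (hBL u v).trans (by gcongr; exact le_max_right _ _)⟩

theorem exists_isGridC21_primitive_comp {a p f f₁ f₂ : ℝ → ℝ} {K K' : NNReal}
    (ha0 : ∀ u ∈ Icc (0 : ℝ) 1, 0 ≤ a u) (ha : LipschitzOnWith K a (Icc 0 1))
    (hap : ∀ u ∈ Icc (0 : ℝ) 1, HasDerivWithinAt a (p u) (Icc 0 1) u)
    (hp : LipschitzOnWith K' p (Icc 0 1)) (hmem : ∀ x, f x ∈ Icc (0 : ℝ) 1)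
    (hf : ∀ x, HasDerivAt f (f₁ x) x) (hf₁ : ∀ x, HasDerivAt f₁ (f₂ x) x)
    (hf₁b : ∃ M, ∀ x, |f₁ x| ≤ M) (hf₂ : IsBoundedLipschitz f₂) :
    ∃ L, 0 ≤ L ∧ ∀ h, 0 < h →
      IsGridC21 h (primitive a 1) L fun i : ℤ => primitive a (f (i * h)) := by
  obtain ⟨M₁, hM₁⟩ := hf₁b
  obtain ⟨M₂, -, hM₂, -⟩ := id hf₂
  have hfB : IsBoundedLipschitz f := .of_hasDerivAt (M := 1)
    (fun x => abs_le.2 ⟨by linarith [(hmem x).1], (hmem x).2⟩) hf hM₁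
  have hf₁B : IsBoundedLipschitz f₁ := .of_hasDerivAt hM₁ hf₁ hM₂
  have haB := hfB.comp_of_lipschitzOnWith isCompact_Icc ha hmem
  have hpB := hfB.comp_of_lipschitzOnWith isCompact_Icc hp hmem
  have hw : ∀ x, HasDerivAt (fun x => primitive a (f x)) (a (f x) * f₁ x) x := fun x =>
    (hasDerivWithinAt_primitive ha.continuousOn (hmem x)).comp_hasDerivAt x (hf x)
      (Eventually.of_forall hmem)
  have hw₁ : ∀ x, HasDerivAt (fun x => a (f x) * f₁ x)
      (p (f x) * f₁ x * f₁ x + a (f x) * f₂ x) x := fun x =>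
    ((hap _ (hmem x)).comp_hasDerivAt x (hf x) (Eventually.of_forall hmem)).mul (hf₁ x)
  obtain ⟨L₁, -, hb₁, -⟩ := haB.mul hf₁B
  obtain ⟨L₂, -, hb₂, hLip⟩ := ((hpB.mul hf₁B).mul hf₁B).add (haB.mul hf₂)
  refine ⟨max L₁ L₂, ((abs_nonneg _).trans (hb₁ 0)).trans (le_max_left _ _), fun h hh =>
    isGridC21_of_hasDerivAt hh (fun x => primitive_mem_Icc ha.continuousOn ha0 (hmem x)) hw hw₁
      (fun x => (hb₁ x).trans (le_max_left _ _)) (fun x => (hb₂ x).trans (le_max_right _ _))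
      fun x y => (hLip x y).trans (by gcongr; exact le_max_right _ _)⟩

/-! ### Integration against a weight on a strip -/

/-- An integrable weight on `ℝ` which dominates its own derivative, so that integrating by parts
against it costs no more than the weight itself. -/
def cauchyWeight (x : ℝ) : ℝ := (1 + x ^ 2)⁻¹

theorem cauchyWeight_pos (x : ℝ) : 0 < cauchyWeight x := by
  unfold cauchyWeight
  positivity

theorem integrable_cauchyWeight : Integrable cauchyWeight := integrable_inv_one_add_sq

theorem contDiff_cauchyWeight : ContDiff ℝ 1 cauchyWeight :=
  ContDiff.inv (by fun_prop) fun x => by positivity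

theorem deriv_cauchyWeight (x : ℝ) : deriv cauchyWeight x = -(2 * x) / (1 + x ^ 2) ^ 2 := by
  have h : HasDerivAt (fun x : ℝ => 1 + x ^ 2) (2 * x) x := by
    simpa using (hasDerivAt_pow 2 x).const_add 1
  exact (h.inv (by positivity)).deriv

theorem abs_deriv_cauchyWeight_le (x : ℝ) : |deriv cauchyWeight x| ≤ cauchyWeight x := by
  have hx : |2 * x| ≤ 1 + x ^ 2 :=
    abs_le.2 ⟨by nlinarith [sq_nonneg (x + 1)], by nlinarith [sq_nonneg (x - 1)]⟩
  rw [deriv_cauchyWeight, abs_div, abs_neg, abs_of_pos (by positivity : 0 < (1 + x ^ 2) ^ 2),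
    div_le_iff₀ (by positivity), cauchyWeight]
  calc |2 * x| ≤ 1 + x ^ 2 := hx
    _ = (1 + x ^ 2)⁻¹ * (1 + x ^ 2) ^ 2 := by field_simp

theorem norm_cauchyWeight_mul_le {x y N : ℝ} (hy : |y| ≤ N) :
    ‖cauchyWeight x * y‖ ≤ cauchyWeight x * N :=
  abs_mul_le_mul_of_abs_le (abs_of_pos (cauchyWeight_pos x)).le hy

theorem abs_le_abs_of_mem_uIoc {s t : ℝ} (hs : s ∈ uIoc 0 t) : |s| ≤ |t| := by
  have := abs_sub_left_of_mem_uIcc (uIoc_subset_uIcc hs)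
  simpa only [sub_zero] using this

/-- `h s x` is jointly continuous and bounded uniformly in `x`, locally uniformly in `s`. -/
structure IsStripBounded (h : ℝ → ℝ → ℝ) : Prop where
  continuous : Continuous (uncurry h)
  exists_bound : ∀ T : ℝ, ∃ N, ∀ s, |s| ≤ T → ∀ x, |h s x| ≤ N

namespace IsStripBounded

variable {f g h : ℝ → ℝ → ℝ}

theorem of_bound {M : ℝ} (hc : Continuous (uncurry f)) (hM : ∀ s x, |f s x| ≤ M) :
    IsStripBounded f :=
  ⟨hc, fun _ => ⟨M, fun s _ => hM s⟩⟩

theorem add (hf : IsStripBounded f) (hg : IsStripBounded g) :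
    IsStripBounded fun s x => f s x + g s x where
  continuous := hf.continuous.add hg.continuous
  exists_bound T := by
    obtain ⟨N, hN⟩ := hf.exists_bound T
    obtain ⟨N', hN'⟩ := hg.exists_bound T
    exact ⟨N + N', fun s hs x => (abs_add_le _ _).trans (add_le_add (hN s hs x) (hN' s hs x))⟩

theorem mul (hf : IsStripBounded f) (hg : IsStripBounded g) :
    IsStripBounded fun s x => f s x * g s x where
  continuous := hf.continuous.mul hg.continuous
  exists_bound T := by
    obtain ⟨N, hN⟩ := hf.exists_bound T
    obtain ⟨N', hN'⟩ := hg.exists_bound T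
    exact ⟨N * N', fun s hs x => abs_mul_le_mul_of_abs_le (hN s hs x) (hN' s hs x)⟩

theorem const_mul (c : ℝ) (hf : IsStripBounded f) : IsStripBounded fun s x => c * f s x :=
  (of_bound continuous_const fun _ _ => le_rfl : IsStripBounded fun _ _ => c).mul hf

theorem neg (hf : IsStripBounded f) : IsStripBounded fun s x => -f s x where
  continuous := hf.continuous.neg
  exists_bound T := by simpa only [abs_neg] using hf.exists_bound T

theorem sub (hf : IsStripBounded f) (hg : IsStripBounded g) :
    IsStripBounded fun s x => f s x - g s x := by
  simpa only [sub_eq_add_neg] using hf.add hg.neg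

theorem continuous_space (hf : IsStripBounded f) (s : ℝ) : Continuous (f s) :=
  hf.continuous.comp (by fun_prop : Continuous fun x : ℝ => (s, x))

theorem continuous_time (hf : IsStripBounded f) (x : ℝ) : Continuous fun s => f s x :=
  hf.continuous.comp (by fun_prop : Continuous fun s : ℝ => (s, x))

theorem integrable_mul {ρ : ℝ → ℝ} (hf : IsStripBounded f) (hρ : Integrable ρ) (s : ℝ) :
    Integrable fun x => ρ x * f s x := by
  obtain ⟨N, hN⟩ := hf.exists_bound |s|
  exact hρ.mul_bdd (hf.continuous_space s).aestronglyMeasurable (.of_forall (hN s le_rfl))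

theorem integrable (hf : IsStripBounded f) (s : ℝ) :
    Integrable fun x => cauchyWeight x * f s x :=
  hf.integrable_mul integrable_cauchyWeight s

theorem integrable_deriv (hf : IsStripBounded f) (s : ℝ) :
    Integrable fun x => deriv cauchyWeight x * f s x :=
  hf.integrable_mul (integrable_cauchyWeight.mono'
    (contDiff_cauchyWeight.continuous_deriv le_rfl).aestronglyMeasurable
    (.of_forall abs_deriv_cauchyWeight_le)) s

theorem exists_bound_nhds (hf : IsStripBounded f) (s : ℝ) :
    ∃ N, ∀ r ∈ Metric.ball s 1, ∀ x, |f r x| ≤ N := by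
  obtain ⟨N, hN⟩ := hf.exists_bound (|s| + 1)
  refine ⟨N, fun r hr => hN r ?_⟩
  rw [Metric.mem_ball, Real.dist_eq] at hr
  linarith [abs_sub_abs_le_abs_sub r s]

theorem continuous_integral (hf : IsStripBounded f) :
    Continuous fun s => ∫ x, cauchyWeight x * f s x := by
  refine continuous_iff_continuousAt.2 fun s => ?_
  obtain ⟨N, hN⟩ := hf.exists_bound_nhds s
  refine continuousAt_of_dominated (bound := fun x => cauchyWeight x * N)
    (.of_forall fun r => (hf.integrable r).aestronglyMeasurable) ?_
    (integrable_cauchyWeight.mul_const N)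
    (.of_forall fun x => (continuous_const.mul (hf.continuous_time x)).continuousAt)
  filter_upwards [Metric.ball_mem_nhds s one_pos] with r hr
  exact .of_forall fun x => norm_cauchyWeight_mul_le (hN r hr x)

theorem hasDerivAt_integral (hf : IsStripBounded f) (hg : IsStripBounded g)
    (hd : ∀ s x, HasDerivAt (fun r => f r x) (g s x) s) (s : ℝ) :
    HasDerivAt (fun r => ∫ x, cauchyWeight x * f r x) (∫ x, cauchyWeight x * g s x) s := by
  obtain ⟨N, hN⟩ := hg.exists_bound_nhds s
  exact (hasDerivAt_integral_of_dominated_loc_of_deriv_le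
    (F' := fun r x => cauchyWeight x * g r x) (bound := fun x => cauchyWeight x * N)
    (Metric.ball_mem_nhds s one_pos)
    (.of_forall fun r => (hf.integrable r).aestronglyMeasurable) (hf.integrable s)
    (hg.integrable s).aestronglyMeasurable
    (.of_forall fun x r hr => norm_cauchyWeight_mul_le (hN r hr x))
    (integrable_cauchyWeight.mul_const N)
    (.of_forall fun x r _ => (hd r x).const_mul _)).2

theorem hasDerivAt_integral_time (hf : IsStripBounded f) (hg : IsStripBounded g)
    (hd : ∀ s x, HasDerivAt (f s) (g s x) x) (t x : ℝ) :
    HasDerivAt (fun y => ∫ s in (0 : ℝ)..t, f s y) (∫ s in (0 : ℝ)..t, g s x) x := by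
  obtain ⟨N, hN⟩ := hg.exists_bound |t|
  exact (intervalIntegral.hasDerivAt_integral_of_dominated_loc_of_deriv_le
    (F' := fun y s => g s y) (bound := fun _ => N) univ_mem
    (.of_forall fun y => (hf.continuous_time y).aestronglyMeasurable)
    ((hf.continuous_time x).intervalIntegrable _ _) (hg.continuous_time x).aestronglyMeasurable
    (.of_forall fun s hs y _ => hN s (abs_le_abs_of_mem_uIoc hs) y) intervalIntegrable_const
    (.of_forall fun s _ y _ => hd s y)).2

theorem hasDerivAt_timePrimitive (hf : IsStripBounded f) (t x : ℝ) :
    HasDerivAt (fun r => ∫ s in (0 : ℝ)..r, f s x) (f t x) t :=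
  (hf.continuous_time x).integral_hasStrictDerivAt 0 t |>.hasDerivAt

theorem timePrimitive (hf : IsStripBounded f) :
    IsStripBounded fun t x => ∫ s in (0 : ℝ)..t, f s x where
  continuous := intervalIntegral.continuous_parametric_intervalIntegral_of_continuous
    (f := fun (z : ℝ × ℝ) s => f s z.2)
    (hf.continuous.comp (by fun_prop : Continuous fun z : (ℝ × ℝ) × ℝ => (z.2, z.1.2)))
    continuous_fst
  exists_bound T := by
    obtain ⟨N, hN⟩ := hf.exists_bound T
    refine ⟨N * T, fun t ht x => ?_⟩
    have hle := intervalIntegral.norm_integral_le_of_norm_le_const (a := 0) (b := t)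
      (f := fun s => f s x) fun s hs => hN s ?_ x
    · rw [sub_zero] at hle
      refine hle.trans (mul_le_mul_of_nonneg_left ht ?_)
      exact (abs_nonneg _).trans (hN t ht x)
    · exact (abs_le_abs_of_mem_uIoc hs).trans ht

end IsStripBounded

/-! ### The weighted energy estimate -/

theorem le_integral_mul_exp_of_deriv_le {f f' X : ℝ → ℝ} {K T : ℝ}
    (hf : ∀ t, HasDerivAt f (f' t) t) (hX : Continuous X) (hX0 : ∀ t, 0 ≤ X t) (hK : 0 ≤ K)
    (hT : 0 ≤ T) (hle : ∀ t, 0 ≤ t → f' t ≤ X t + K * f t) (hf0 : f 0 = 0) :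
    f T ≤ (∫ s in (0 : ℝ)..T, X s) * Real.exp (K * T) := by
  have hexp : ∀ t, HasDerivAt (fun t => Real.exp (-(K * t))) (Real.exp (-(K * t)) * -K) t :=
    fun t => by simpa using ((hasDerivAt_id t).const_mul K).neg.exp
  have hd : ∀ t, HasDerivAt (fun t => f t * Real.exp (-(K * t)) - ∫ s in (0 : ℝ)..t, X s)
      (f' t * Real.exp (-(K * t)) + f t * (Real.exp (-(K * t)) * -K) - X t) t := fun t =>
    ((hf t).mul (hexp t)).sub (hX.integral_hasStrictDerivAt 0 t).hasDerivAt
  have hanti : AntitoneOn (fun t => f t * Real.exp (-(K * t)) - ∫ s in (0 : ℝ)..t, X s)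
      (Ici 0) := by
    refine antitoneOn_of_hasDerivWithinAt_nonpos (convex_Ici 0)
      (fun t _ => (hd t).continuousAt.continuousWithinAt) (fun t _ => (hd t).hasDerivWithinAt)
      fun t ht => ?_
    have ht0 : 0 ≤ t := interior_subset ht
    have hexp1 : Real.exp (-(K * t)) ≤ 1 := Real.exp_le_one_iff.2 (by nlinarith)
    nlinarith [Real.exp_pos (-(K * t)), hle t ht0, hX0 t,
      mul_le_mul_of_nonneg_right (hle t ht0) (Real.exp_pos (-(K * t))).le]
  have h := hanti self_mem_Ici hT hT
  simp only [hf0, zero_mul, intervalIntegral.integral_same, sub_zero, sub_nonpos] at h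
  calc f T = f T * Real.exp (-(K * T)) * Real.exp (K * T) := by
        rw [mul_assoc, ← Real.exp_add, neg_add_cancel, Real.exp_zero, mul_one]
    _ ≤ _ := by gcongr

/-- The potential of a flux: if `∂ₜ u = ∂ₓ (½ p' - q)` and `u` vanishes at time `0`, then `u` is its
space derivative. -/
def fluxPotential (p' q : ℝ → ℝ → ℝ) (t x : ℝ) : ℝ :=
  ∫ s in (0 : ℝ)..t, (1 / 2 * p' s x - q s x)

/-- A smooth solution `u` of `∂ₜ u = ½ ∂ₓₓ p - ∂ₓ q` with zero initial condition; `p'` is the space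
derivative of `p`, and the equation is stated in integrated form. -/
structure IsFluxSolution (u p p' q : ℝ → ℝ → ℝ) : Prop where
  isStripBounded : IsStripBounded u
  isStripBounded_diffusion : IsStripBounded p
  isStripBounded_deriv : IsStripBounded p'
  isStripBounded_drift : IsStripBounded q
  hasDerivAt : ∀ s x, HasDerivAt (p s) (p' s x) x
  hasDerivAt_potential : ∀ t, 0 ≤ t → ∀ x, HasDerivAt (fluxPotential p' q t) (u t x) x

/-- The source density in the energy inequality for `fluxPotential`: the dissipation `-u p` plus the
quadratic error, weighted by `η`, coming from the weight and from the drift. -/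
def energyDefect (η u p q : ℝ) : ℝ := -(u * p) + η * (p * p + q * q)

theorem flux_pairing_le {ρ ρ' η ψ u p q : ℝ} (hη : 0 < η) (hρ : |ρ'| ≤ ρ) :
    -((ρ' * ψ + ρ * u) * p) - 2 * (ρ * (ψ * q)) ≤
      ρ * energyDefect η u p q + 2 * η⁻¹ * (ρ * (ψ * ψ)) := by
  have young : ∀ r : ℝ, |ψ| * |r| ≤ η / 2 * (r * r) + η⁻¹ / 2 * (ψ * ψ) := fun r => by
    rw [← abs_mul_abs_self r, ← abs_mul_abs_self ψ]
    have hsq : 0 ≤ η⁻¹ * (|ψ| - η * |r|) ^ 2 := by positivity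
    have hexpand : η⁻¹ * (|ψ| - η * |r|) ^ 2 =
        η⁻¹ * (|ψ| * |ψ|) - 2 * (|ψ| * |r|) + η * (|r| * |r|) := by field_simp; ring
    linarith
  have hp : -(ρ' * ψ * p) ≤ ρ * (|ψ| * |p|) := by
    refine (neg_le_abs _).trans ?_
    rw [abs_mul, abs_mul, mul_assoc]
    gcongr
  have hq : -(ψ * q) ≤ |ψ| * |q| := (neg_le_abs _).trans (abs_mul _ _).le
  have hsum : |ψ| * |p| + 2 * -(ψ * q) ≤ η * (p * p + q * q) + 2 * η⁻¹ * (ψ * ψ) := by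
    have : 0 ≤ η⁻¹ * (ψ * ψ) := mul_nonneg (by positivity) (mul_self_nonneg ψ)
    nlinarith [young p, young q, mul_nonneg hη.le (mul_self_nonneg p)]
  have := mul_le_mul_of_nonneg_left hsum ((abs_nonneg _).trans hρ)
  unfold energyDefect
  linarith

namespace IsFluxSolution

variable {u p p' q : ℝ → ℝ → ℝ}

theorem isStripBounded_flux (H : IsFluxSolution u p p' q) :
    IsStripBounded fun s x => 1 / 2 * p' s x - q s x :=
  (H.isStripBounded_deriv.const_mul _).sub H.isStripBounded_drift

theorem isStripBounded_potential (H : IsFluxSolution u p p' q) :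
    IsStripBounded (fluxPotential p' q) :=
  H.isStripBounded_flux.timePrimitive

theorem isStripBounded_energyDefect (H : IsFluxSolution u p p' q) (η : ℝ) :
    IsStripBounded fun s x => energyDefect η (u s x) (p s x) (q s x) :=
  have hp := H.isStripBounded_diffusion
  have hq := H.isStripBounded_drift
  (H.isStripBounded.mul hp).neg.add (((hp.mul hp).add (hq.mul hq)).const_mul η)

theorem hasDerivAt_energy (H : IsFluxSolution u p p' q) (t : ℝ) :
    HasDerivAt
      (fun t => ∫ x, cauchyWeight x * (fluxPotential p' q t x * fluxPotential p' q t x))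
      (∫ x, cauchyWeight x * (2 * (fluxPotential p' q t x * (1 / 2 * p' t x - q t x)))) t := by
  have hΨ := H.isStripBounded_potential
  refine (hΨ.mul hΨ).hasDerivAt_integral ((hΨ.mul H.isStripBounded_flux).const_mul 2)
    (fun s x => ?_) t
  have hd := H.isStripBounded_flux.hasDerivAt_timePrimitive s x
  exact (hd.mul hd).congr_deriv (by simp only [fluxPotential]; ring)

theorem integral_potential_mul_deriv (H : IsFluxSolution u p p' q) {t : ℝ} (ht : 0 ≤ t) :
    ∫ x, cauchyWeight x * fluxPotential p' q t x * p' t x = -∫ x,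
      (deriv cauchyWeight x * fluxPotential p' q t x + cauchyWeight x * u t x) * p t x := by
  have hΨ := H.isStripBounded_potential
  have hp := H.isStripBounded_diffusion
  apply integral_mul_deriv_eq_deriv_mul_of_integrable
  · exact fun x _ => (contDiff_cauchyWeight.differentiable one_ne_zero x).hasDerivAt.mul
      (H.hasDerivAt_potential t ht x)
  · exact fun x _ => H.hasDerivAt t x
  · exact ((hΨ.mul H.isStripBounded_deriv).integrable t).congr
      (.of_forall fun x => (mul_assoc _ _ _).symm)
  · exact (((hΨ.mul hp).integrable_deriv t).add ((H.isStripBounded.mul hp).integrable t)).congr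
      (.of_forall fun x => by simp only [Pi.add_apply, Pi.mul_apply]; ring)
  · exact ((hΨ.mul hp).integrable t).congr (.of_forall fun x => (mul_assoc _ _ _).symm)

theorem deriv_energy_le (H : IsFluxSolution u p p' q) {η t : ℝ} (hη : 0 < η) (ht : 0 ≤ t) :
    ∫ x, cauchyWeight x * (2 * (fluxPotential p' q t x * (1 / 2 * p' t x - q t x))) ≤
      (∫ x, cauchyWeight x * energyDefect η (u t x) (p t x) (q t x)) + 2 * η⁻¹ *
        ∫ x, cauchyWeight x * (fluxPotential p' q t x * fluxPotential p' q t x) := by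
  have hΨ := H.isStripBounded_potential
  have hp := H.isStripBounded_diffusion
  have iΨp' := (hΨ.mul H.isStripBounded_deriv).integrable t
  have iΨq := ((hΨ.mul H.isStripBounded_drift).integrable t).const_mul 2
  have iD := (H.isStripBounded_energyDefect η).integrable t
  have iΨ := ((hΨ.mul hΨ).integrable t).const_mul (2 * η⁻¹)
  have iparts : Integrable fun x => (deriv cauchyWeight x * fluxPotential p' q t x +
      cauchyWeight x * u t x) * p t x :=
    (((hΨ.mul hp).integrable_deriv t).add ((H.isStripBounded.mul hp).integrable t)).congr
      (.of_forall fun x => by simp only [Pi.add_apply]; ring)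
  calc ∫ x, cauchyWeight x * (2 * (fluxPotential p' q t x * (1 / 2 * p' t x - q t x)))
      = (∫ x, cauchyWeight x * fluxPotential p' q t x * p' t x) -
          ∫ x, 2 * (cauchyWeight x * (fluxPotential p' q t x * q t x)) := by
        rw [← integral_sub (iΨp'.congr (.of_forall fun x => (mul_assoc _ _ _).symm)) iΨq]
        congr 1 with x
        ring
    _ = ∫ x, (-((deriv cauchyWeight x * fluxPotential p' q t x + cauchyWeight x * u t x) *
          p t x) - 2 * (cauchyWeight x * (fluxPotential p' q t x * q t x))) := by
        rw [H.integral_potential_mul_deriv ht, ← integral_neg]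
        exact (integral_sub iparts.neg iΨq).symm
    _ ≤ ∫ x, (cauchyWeight x * energyDefect η (u t x) (p t x) (q t x) +
          2 * η⁻¹ * (cauchyWeight x * (fluxPotential p' q t x * fluxPotential p' q t x))) :=
        integral_mono (iparts.neg.sub iΨq) (iD.add iΨ) fun x =>
          flux_pairing_le hη (abs_deriv_cauchyWeight_le x)
    _ = _ := by rw [integral_add iD iΨ, integral_const_mul]

theorem energy_le (H : IsFluxSolution u p p' q) {η T : ℝ} (hη : 0 < η) (hT : 0 ≤ T) :
    ∫ x, cauchyWeight x * (fluxPotential p' q T x * fluxPotential p' q T x) ≤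
      (∫ s in (0 : ℝ)..T,
        max (∫ x, cauchyWeight x * energyDefect η (u s x) (p s x) (q s x)) 0) *
        Real.exp (2 * η⁻¹ * T) :=
  le_integral_mul_exp_of_deriv_le H.hasDerivAt_energy
    ((H.isStripBounded_energyDefect η).continuous_integral.max continuous_const)
    (fun _ => le_max_right _ _) (by positivity) hT
    (fun t ht => (H.deriv_energy_le hη ht).trans (by gcongr; exact le_max_left _ _))
    (by simp [fluxPotential])

end IsFluxSolution

/-! ### Mollification of bounded flows -/

open scoped Convolution

theorem locallyIntegrable_of_abs_le {f : ℝ → ℝ} {M : ℝ} (hf : Measurable f)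
    (hM : ∀ x, |f x| ≤ M) : LocallyIntegrable f :=
  (continuous_const.locallyIntegrable : LocallyIntegrable fun _ : ℝ => M).mono
    hf.aestronglyMeasurable (.of_forall fun x => (hM x).trans (le_abs_self M))

theorem abs_convolution_le {k f : ℝ → ℝ} {M : ℝ} (hk : Integrable k) (hM : ∀ x, |f x| ≤ M)
    (x : ℝ) : |(k ⋆ f) x| ≤ (∫ y, |k y|) * M := by
  rw [← integral_mul_const]
  exact norm_integral_le_of_norm_le (hk.abs.mul_const M)
    (f := fun y => k y * f (x - y))
    (.of_forall fun y => abs_mul_le_mul_of_abs_le le_rfl (hM (x - y)))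

theorem convolution_eq_integral_sub (k f : ℝ → ℝ) (x : ℝ) :
    (k ⋆ f) x = ∫ y, k (x - y) * f y :=
  convolution_eq_swap _

/-- A measurable function of time and space bounded by `M` which, at each time, is continuous in
time at almost every point. -/
structure IsBoundedFlow (M : ℝ) (f : ℝ → ℝ → ℝ) : Prop where
  measurable : Measurable (uncurry f)
  abs_le : ∀ s x, |f s x| ≤ M
  ae_continuousAt : ∀ s, ∀ᵐ x, ContinuousAt (fun r => f r x) s

namespace IsBoundedFlow

variable {f : ℝ → ℝ → ℝ} {k : ℝ → ℝ} {M : ℝ}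

theorem measurable_space (hf : IsBoundedFlow M f) (s : ℝ) : Measurable (f s) :=
  hf.measurable.comp measurable_prodMk_left

theorem integrable_mul (hf : IsBoundedFlow M f) (hk : Integrable k) (s : ℝ) :
    Integrable fun x => k x * f s x :=
  hk.mul_bdd (hf.measurable_space s).aestronglyMeasurable (.of_forall (hf.abs_le s))

theorem continuous_integral_mul (hf : IsBoundedFlow M f) (hk : Integrable k) :
    Continuous fun s => ∫ x, k x * f s x := by
  refine continuous_iff_continuousAt.2 fun s => continuousAt_of_dominated
    (bound := fun x => |k x| * M)
    (.of_forall fun r => (hf.integrable_mul hk r).aestronglyMeasurable)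
    (.of_forall fun r => .of_forall fun x => abs_mul_le_mul_of_abs_le le_rfl (hf.abs_le r x))
    (hk.abs.mul_const M) ?_
  filter_upwards [hf.ae_continuousAt s] with x hx using continuousAt_const.mul hx

theorem integrable_convolution (hf : IsBoundedFlow M f) (hk : Integrable k) (s x : ℝ) :
    Integrable fun y => k (x - y) * f s y :=
  hf.integrable_mul (hk.comp_sub_left x) s

theorem continuous_convolution (hf : IsBoundedFlow M f) (hk : Continuous k)
    (hs : HasCompactSupport k) : Continuous (uncurry fun s => k ⋆ f s) := by
  obtain ⟨R, hR⟩ := hs.isBounded.subset_closedBall 0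
  obtain ⟨C, hC⟩ := hk.bounded_above_of_compact_support hs
  have hzero : ∀ z, R < |z| → k z = 0 := fun z hz => by
    refine image_eq_zero_of_notMem_tsupport fun hmem => ?_
    have := mem_closedBall_zero_iff.1 (hR hmem)
    rw [Real.norm_eq_abs] at this
    linarith
  refine continuous_iff_continuousAt.2 fun ⟨s, x⟩ => ?_
  simp only [uncurry_def, convolution_eq_integral_sub]
  refine continuousAt_of_dominated
    (bound := (Icc (x - R - 1) (x + R + 1)).indicator fun _ => C * M)
    (.of_forall fun z => (hf.integrable_convolution
      (hk.integrable_of_hasCompactSupport hs) z.1 z.2).aestronglyMeasurable) ?_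
    ((integrable_indicator_iff measurableSet_Icc).2 continuous_const.integrableOn_Icc) ?_
  · filter_upwards [Metric.ball_mem_nhds (s, x) one_pos] with z hz
    have hzx : |z.2 - x| < 1 := (le_max_right _ _).trans_lt hz
    refine .of_forall fun y => ?_
    by_cases hy : y ∈ Icc (x - R - 1) (x + R + 1)
    · rw [indicator_of_mem hy]
      exact abs_mul_le_mul_of_abs_le (hC _) (hf.abs_le _ _)
    · rw [indicator_of_notMem hy, hzero, zero_mul, norm_zero]
      by_contra! h
      rw [_root_.abs_le] at h
      rw [abs_lt] at hzx
      exact hy ⟨by linarith, by linarith⟩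
  · filter_upwards [hf.ae_continuousAt s] with y hy
    exact (by fun_prop : Continuous fun z : ℝ × ℝ => k (z.2 - y)).continuousAt.mul
      (ContinuousAt.comp (g := fun r => f r y) (f := Prod.fst) hy continuousAt_fst)

theorem isStripBounded_convolution (hf : IsBoundedFlow M f) (hk : Continuous k)
    (hs : HasCompactSupport k) : IsStripBounded fun s => k ⋆ f s :=
  .of_bound (hf.continuous_convolution hk hs) fun s =>
    abs_convolution_le (hk.integrable_of_hasCompactSupport hs) (hf.abs_le s)

theorem hasDerivAt_convolution (hf : IsBoundedFlow M f) (hk : ContDiff ℝ 1 k)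
    (hs : HasCompactSupport k) (s x : ℝ) :
    HasDerivAt (k ⋆ f s) ((deriv k ⋆ f s) x) x :=
  hs.hasDerivAt_convolution_left _ hk
    (locallyIntegrable_of_abs_le (hf.measurable_space s) (hf.abs_le s)) x

end IsBoundedFlow

/-- A normalized smooth bump supported in `[-2/(n+1), 2/(n+1)]`. -/
def mollifier (n : ℕ) : ContDiffBump (0 : ℝ) where
  rIn := 1 / (n + 1)
  rOut := 2 * (1 / (n + 1))
  rIn_pos := by positivity
  rIn_lt_rOut := by linarith [show (0 : ℝ) < 1 / (n + 1) by positivity]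

theorem abs_mollifier_convolution_le {f : ℝ → ℝ} {M : ℝ} (hM : ∀ x, |f x| ≤ M) (n : ℕ) (x : ℝ) :
    |((mollifier n).normed volume ⋆ f) x| ≤ M := by
  have h := abs_convolution_le (mollifier n).integrable_normed hM x
  simp_rw [abs_of_nonneg ((mollifier n).nonneg_normed _)] at h
  rwa [(mollifier n).integral_normed, one_mul] at h

theorem ae_tendsto_mollifier_convolution {f : ℝ → ℝ} (hf : LocallyIntegrable f) :
    ∀ᵐ x, Tendsto (fun n => ((mollifier n).normed volume ⋆ f) x) atTop (𝓝 (f x)) := by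
  refine ContDiffBump.ae_convolution_tendsto_right_of_locallyIntegrable (K := 2) ?_
    (.of_forall fun n => le_rfl) hf
  have h := (tendsto_one_div_add_atTop_nhds_zero_nat (𝕜 := ℝ)).const_mul 2
  rwa [mul_zero] at h

/-! ### Uniqueness for the linearized equation -/

/-- `u` solves `∂ₜ u = ½ ∂ₓₓ p - ∂ₓ q` with initial condition `u₀`, tested against functions of the
space variable. -/
def IsDistributionalSolution (u₀ : ℝ → ℝ) (u p q : ℝ → ℝ → ℝ) : Prop :=
  ∀ φ : ℝ → ℝ, ContDiff ℝ (⊤ : ℕ∞) φ → HasCompactSupport φ → ∀ t, 0 ≤ t →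
    (∫ x, φ x * u t x) - ∫ x, φ x * u₀ x =
      ∫ s in (0 : ℝ)..t, (1 / 2 * (∫ x, deriv (deriv φ) x * p s x) + ∫ x, deriv φ x * q s x)

/-- The difference `u` of two weak solutions, `p` and `q` being the differences of the diffusion and
drift fluxes: `c` is the ellipticity constant and `L` a Lipschitz constant of the fluxes. -/
structure IsWeakDifference (c L M : ℝ) (u p q : ℝ → ℝ → ℝ) : Prop where
  isBoundedFlow : IsBoundedFlow M u
  isBoundedFlow_diffusion : IsBoundedFlow M p
  isBoundedFlow_drift : IsBoundedFlow M q
  coercive : ∀ s x, c * (u s x * u s x) ≤ u s x * p s x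
  abs_diffusion_le : ∀ s x, |p s x| ≤ L * |u s x|
  abs_drift_le : ∀ s x, |q s x| ≤ L * |u s x|
  isDistributionalSolution : IsDistributionalSolution 0 u p q

theorem abs_energyDefect_le {η u p q M : ℝ} (hη : 0 ≤ η) (hu : |u| ≤ M) (hp : |p| ≤ M)
    (hq : |q| ≤ M) : |energyDefect η u p q| ≤ M * M + η * (M * M + M * M) := by
  refine (abs_add_le _ _).trans (add_le_add ?_ ?_)
  · rw [abs_neg]
    exact abs_mul_le_mul_of_abs_le hu hp
  · rw [abs_mul, abs_of_nonneg hη]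
    gcongr
    exact (abs_add_le _ _).trans (add_le_add (abs_mul_le_mul_of_abs_le hp hp)
      (abs_mul_le_mul_of_abs_le hq hq))

theorem energyDefect_nonpos {η u p q c L : ℝ} (hη : 0 ≤ η) (hηc : η * (2 * L ^ 2) ≤ c)
    (hup : c * (u * u) ≤ u * p) (hp : |p| ≤ L * |u|) (hq : |q| ≤ L * |u|) :
    energyDefect η u p q ≤ 0 := by
  have hsq : ∀ {r : ℝ}, |r| ≤ L * |u| → r * r ≤ L ^ 2 * (u * u) := fun {r} hr => by
    calc r * r = |r| * |r| := (abs_mul_abs_self r).symm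
      _ ≤ L * |u| * (L * |u|) := mul_self_le_mul_self (abs_nonneg r) hr
      _ = L ^ 2 * (|u| * |u|) := by ring
      _ = L ^ 2 * (u * u) := by rw [abs_mul_abs_self]
  have herr : η * (p * p + q * q) ≤ c * (u * u) :=
    calc η * (p * p + q * q) ≤ η * (L ^ 2 * (u * u) + L ^ 2 * (u * u)) :=
          mul_le_mul_of_nonneg_left (add_le_add (hsq hp) (hsq hq)) hη
      _ = η * (2 * L ^ 2) * (u * u) := by ring
      _ ≤ c * (u * u) := mul_le_mul_of_nonneg_right hηc (mul_self_nonneg u)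
  unfold energyDefect
  linarith

theorem abs_integral_mul_le_sqrt_mul_sqrt {α : Type*} [MeasurableSpace α] {μ : Measure α}
    {f g : α → ℝ} (hf : MemLp f 2 μ) (hg : MemLp g 2 μ) :
    |∫ x, f x * g x ∂μ| ≤ √(∫ x, f x ^ 2 ∂μ) * √(∫ x, g x ^ 2 ∂μ) := by
  have h := integral_mul_norm_le_Lp_mul_Lq (μ := μ) (f := f) (g := g) Real.HolderConjugate.two_two
    (by simpa using hf) (by simpa using hg)
  simp only [Real.norm_eq_abs, Real.rpow_two, sq_abs, ← Real.sqrt_eq_rpow] at h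
  refine (abs_integral_le_integral_abs).trans (le_of_eq_of_le ?_ h)
  simp only [abs_mul]

namespace IsFluxSolution

variable {u p p' q : ℝ → ℝ → ℝ} {φ : ℝ → ℝ} {t : ℝ}

theorem integral_mul_eq (H : IsFluxSolution u p p' q) (hφ : ContDiff ℝ 1 φ)
    (hs : HasCompactSupport φ) (ht : 0 ≤ t) :
    ∫ x, φ x * u t x = -∫ x, deriv φ x * fluxPotential p' q t x := by
  have hΨ := H.isStripBounded_potential.continuous_space t
  exact integral_mul_deriv_eq_deriv_mul_of_integrable
    (fun x _ => (hφ.differentiable one_ne_zero x).hasDerivAt)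
    (fun x _ => H.hasDerivAt_potential t ht x)
    ((hφ.continuous.mul (H.isStripBounded.continuous_space t)).integrable_of_hasCompactSupport
      hs.mul_right)
    (((hφ.continuous_deriv le_rfl).mul hΨ).integrable_of_hasCompactSupport hs.deriv.mul_right)
    ((hφ.continuous.mul hΨ).integrable_of_hasCompactSupport hs.mul_right)

theorem abs_integral_mul_le (H : IsFluxSolution u p p' q) (hφ : ContDiff ℝ 1 φ)
    (hs : HasCompactSupport φ) (ht : 0 ≤ t) :
    |∫ x, φ x * u t x| ≤ √(∫ x, (deriv φ x * √(1 + x ^ 2)) ^ 2) *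
      √(∫ x, cauchyWeight x * (fluxPotential p' q t x * fluxPotential p' q t x)) := by
  have hΨ := H.isStripBounded_potential
  have hsq : ∀ x, (√(cauchyWeight x) * fluxPotential p' q t x) ^ 2 =
      cauchyWeight x * (fluxPotential p' q t x * fluxPotential p' q t x) := fun x => by
    rw [mul_pow, Real.sq_sqrt (cauchyWeight_pos x).le, sq (fluxPotential p' q t x)]
  have hf : MemLp (fun x => deriv φ x * √(1 + x ^ 2)) 2 :=
    ((hφ.continuous_deriv le_rfl).mul (by fun_prop)).memLp_of_hasCompactSupport hs.deriv.mul_right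
  have hg : MemLp (fun x => √(cauchyWeight x) * fluxPotential p' q t x) 2 := by
    refine (memLp_two_iff_integrable_sq ?_).2 ?_
    · exact (contDiff_cauchyWeight.continuous.sqrt.mul
        (hΨ.continuous_space t)).aestronglyMeasurable
    · simpa only [hsq] using (hΨ.mul hΨ).integrable t
  have hprod : ∀ x, deriv φ x * fluxPotential p' q t x =
      deriv φ x * √(1 + x ^ 2) * (√(cauchyWeight x) * fluxPotential p' q t x) := fun x => by
    have hx : √(1 + x ^ 2) ≠ 0 := (Real.sqrt_pos.2 (by positivity)).ne'
    rw [cauchyWeight, Real.sqrt_inv]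
    field_simp
  rw [H.integral_mul_eq hφ hs ht, abs_neg]
  simpa only [hprod, hsq] using abs_integral_mul_le_sqrt_mul_sqrt hf hg

end IsFluxSolution

/-- The energy defect of the `n`-th mollification at time `s`, integrated against the weight. -/
def mollifiedDefect (η : ℝ) (u p q : ℝ → ℝ → ℝ) (n : ℕ) (s : ℝ) : ℝ :=
  ∫ x, cauchyWeight x * energyDefect η (((mollifier n).normed volume ⋆ u s) x)
    (((mollifier n).normed volume ⋆ p s) x) (((mollifier n).normed volume ⋆ q s) x)

namespace IsWeakDifference

variable {c L M : ℝ} {u p q : ℝ → ℝ → ℝ}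

theorem isFluxSolution_convolution (H : IsWeakDifference c L M u p q) {k : ℝ → ℝ}
    (hk : ContDiff ℝ (⊤ : ℕ∞) k) (hs : HasCompactSupport k) :
    IsFluxSolution (fun s => k ⋆ u s) (fun s => k ⋆ p s) (fun s => deriv k ⋆ p s)
      (fun s => k ⋆ q s) := by
  have hk' : ContDiff ℝ (⊤ : ℕ∞) (deriv k) := (contDiff_infty_iff_deriv.1 hk).2
  have hk'' : ContDiff ℝ (⊤ : ℕ∞) (deriv (deriv k)) := (contDiff_infty_iff_deriv.1 hk').2
  have hp := H.isBoundedFlow_diffusion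
  have hq := H.isBoundedFlow_drift
  have hp' := hp.isStripBounded_convolution hk'.continuous hs.deriv
  have hq₀ := hq.isStripBounded_convolution hk.continuous hs
  refine ⟨H.isBoundedFlow.isStripBounded_convolution hk.continuous hs,
    hp.isStripBounded_convolution hk.continuous hs, hp', hq₀,
    hp.hasDerivAt_convolution (hk.of_le (by simp)) hs, fun t ht x => ?_⟩
  have hflux := IsStripBounded.hasDerivAt_integral_time
    ((hp'.const_mul (1 / 2)).sub hq₀)
    (((hp.isStripBounded_convolution hk''.continuous hs.deriv.deriv).const_mul (1 / 2)).sub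
      (hq.isStripBounded_convolution hk'.continuous hs.deriv))
    (fun s y => ((hp.hasDerivAt_convolution (hk'.of_le (by simp)) hs.deriv s y).const_mul _).sub
      (hq.hasDerivAt_convolution (hk.of_le (by simp)) hs s y)) t x
  refine hflux.congr_deriv ?_
  have hd : deriv (fun y => k (x - y)) = fun y => -deriv k (x - y) :=
    funext fun y => deriv_comp_const_sub k x y
  have hdd : deriv (fun y => -deriv k (x - y)) = fun y => deriv (deriv k) (x - y) :=
    funext fun y => by rw [deriv.fun_neg, deriv_comp_const_sub, neg_neg]
  have htest := H.isDistributionalSolution (fun y => k (x - y)) (hk.comp (by fun_prop))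
    (hs.comp_homeomorph (Homeomorph.subLeft x)) t ht
  rw [hd, hdd] at htest
  simp only [Pi.zero_apply, mul_zero, integral_zero, sub_zero, neg_mul, integral_neg,
    ← sub_eq_add_neg] at htest
  simp only [convolution_eq_integral_sub, htest]

theorem isFluxSolution_mollifier (H : IsWeakDifference c L M u p q) (n : ℕ) :
    IsFluxSolution (fun s => (mollifier n).normed volume ⋆ u s)
      (fun s => (mollifier n).normed volume ⋆ p s)
      (fun s => deriv ((mollifier n).normed volume) ⋆ p s)
      (fun s => (mollifier n).normed volume ⋆ q s) :=
  H.isFluxSolution_convolution (mollifier n).contDiff_normed (mollifier n).hasCompactSupport_normed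

theorem tendsto_mollifiedDefect (H : IsWeakDifference c L M u p q) {η : ℝ} (hη : 0 ≤ η) (s : ℝ) :
    Tendsto (fun n => mollifiedDefect η u p q n s) atTop
      (𝓝 (∫ x, cauchyWeight x * energyDefect η (u s x) (p s x) (q s x))) := by
  have hlim : ∀ {f : ℝ → ℝ → ℝ}, IsBoundedFlow M f → ∀ᵐ x, Tendsto
      (fun n => ((mollifier n).normed volume ⋆ f s) x) atTop (𝓝 (f s x)) := fun hf =>
    ae_tendsto_mollifier_convolution
      (locallyIntegrable_of_abs_le (hf.measurable_space s) (hf.abs_le s))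
  refine tendsto_integral_of_dominated_convergence
    (fun x => cauchyWeight x * (M * M + η * (M * M + M * M)))
    (fun n => (((H.isFluxSolution_mollifier n).isStripBounded_energyDefect η).integrable
      s).aestronglyMeasurable)
    (integrable_cauchyWeight.mul_const _) (fun n => .of_forall fun x => ?_) ?_
  · exact norm_cauchyWeight_mul_le (abs_energyDefect_le hη
      (abs_mollifier_convolution_le (H.isBoundedFlow.abs_le s) n x)
      (abs_mollifier_convolution_le (H.isBoundedFlow_diffusion.abs_le s) n x)
      (abs_mollifier_convolution_le (H.isBoundedFlow_drift.abs_le s) n x))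
  · filter_upwards [hlim H.isBoundedFlow, hlim H.isBoundedFlow_diffusion,
      hlim H.isBoundedFlow_drift] with x hu hp hq
    exact ((hu.mul hp).neg.add (((hp.mul hp).add (hq.mul hq)).const_mul η)).const_mul _

theorem abs_mollifiedDefect_le (H : IsWeakDifference c L M u p q) {η : ℝ} (hη : 0 ≤ η) (n : ℕ)
    (s : ℝ) : |mollifiedDefect η u p q n s| ≤
      ∫ x, cauchyWeight x * (M * M + η * (M * M + M * M)) :=
  norm_integral_le_of_norm_le (integrable_cauchyWeight.mul_const _) (.of_forall fun x =>
    norm_cauchyWeight_mul_le (abs_energyDefect_le hη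
      (abs_mollifier_convolution_le (H.isBoundedFlow.abs_le s) n x)
      (abs_mollifier_convolution_le (H.isBoundedFlow_diffusion.abs_le s) n x)
      (abs_mollifier_convolution_le (H.isBoundedFlow_drift.abs_le s) n x)))

theorem tendsto_integral_max_mollifiedDefect (H : IsWeakDifference c L M u p q) {η : ℝ}
    (hη : 0 ≤ η) (hηc : η * (2 * L ^ 2) ≤ c) (t : ℝ) :
    Tendsto (fun n => ∫ s in (0 : ℝ)..t, max (mollifiedDefect η u p q n s) 0) atTop (𝓝 0) := by
  have hneg : ∀ s, ∫ x, cauchyWeight x * energyDefect η (u s x) (p s x) (q s x) ≤ 0 := fun s =>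
    integral_nonpos fun x => mul_nonpos_of_nonneg_of_nonpos (cauchyWeight_pos x).le
      (energyDefect_nonpos hη hηc (H.coercive s x) (H.abs_diffusion_le s x) (H.abs_drift_le s x))
  have hlim : ∀ s, Tendsto (fun n => max (mollifiedDefect η u p q n s) 0) atTop (𝓝 0) :=
    fun s => by
      simpa only [max_eq_right (hneg s)] using
        (H.tendsto_mollifiedDefect hη s).max (tendsto_const_nhds (x := (0 : ℝ)))
  suffices h : Tendsto (fun n => ∫ s in (0 : ℝ)..t, max (mollifiedDefect η u p q n s) 0) atTop
      (𝓝 (∫ _ in (0 : ℝ)..t, (0 : ℝ))) by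
    rwa [intervalIntegral.integral_zero] at h
  refine intervalIntegral.tendsto_integral_filter_of_dominated_convergence
    (fun _ => ∫ x, cauchyWeight x * (M * M + η * (M * M + M * M)))
    (.of_forall fun n => Continuous.aestronglyMeasurable ?_)
    (.of_forall fun n => .of_forall fun s _ => ?_) intervalIntegrable_const
    (.of_forall fun s _ => hlim s)
  · exact ((H.isFluxSolution_mollifier n).isStripBounded_energyDefect
      η).continuous_integral.max continuous_const
  · rw [Real.norm_eq_abs, abs_of_nonneg (le_max_right _ _)]
    exact max_le ((le_abs_self _).trans (H.abs_mollifiedDefect_le hη n s))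
      ((abs_nonneg _).trans (H.abs_mollifiedDefect_le hη n s))

theorem tendsto_energy_mollifier (H : IsWeakDifference c L M u p q) (hc : 0 < c) {t : ℝ}
    (ht : 0 ≤ t) :
    Tendsto (fun n => ∫ x, cauchyWeight x *
      (fluxPotential (fun s => deriv ((mollifier n).normed volume) ⋆ p s)
          (fun s => (mollifier n).normed volume ⋆ q s) t x *
        fluxPotential (fun s => deriv ((mollifier n).normed volume) ⋆ p s)
          (fun s => (mollifier n).normed volume ⋆ q s) t x)) atTop (𝓝 0) := by
  obtain ⟨η, hη, hηc⟩ : ∃ η : ℝ, 0 < η ∧ η * (2 * L ^ 2) ≤ c := by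
    refine ⟨c / (2 * L ^ 2 + 1), by positivity, ?_⟩
    rw [div_mul_eq_mul_div, div_le_iff₀ (by positivity)]
    nlinarith
  have hdefect := (H.tendsto_integral_max_mollifiedDefect hη.le hηc t).mul_const
    (Real.exp (2 * η⁻¹ * t))
  rw [zero_mul] at hdefect
  exact squeeze_zero
    (fun n => integral_nonneg fun x => mul_nonneg (cauchyWeight_pos x).le (mul_self_nonneg _))
    (fun n => (H.isFluxSolution_mollifier n).energy_le hη ht) hdefect

theorem tendsto_integral_mul_mollifier (H : IsWeakDifference c L M u p q) {φ : ℝ → ℝ}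
    (hφ : Continuous φ) (hs : HasCompactSupport φ) (t : ℝ) :
    Tendsto (fun n => ∫ x, φ x * ((mollifier n).normed volume ⋆ u t) x) atTop
      (𝓝 (∫ x, φ x * u t x)) := by
  have hu := H.isBoundedFlow
  refine tendsto_integral_of_dominated_convergence (fun x => |φ x| * M)
    (fun n => (hφ.mul ((H.isFluxSolution_mollifier n).isStripBounded.continuous_space
      t)).aestronglyMeasurable)
    ((hφ.integrable_of_hasCompactSupport hs).abs.mul_const M) (fun n => .of_forall fun x =>
      abs_mul_le_mul_of_abs_le le_rfl (abs_mollifier_convolution_le (hu.abs_le t) n x)) ?_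
  filter_upwards [ae_tendsto_mollifier_convolution
    (locallyIntegrable_of_abs_le (hu.measurable_space t) (hu.abs_le t))] with x hx
    using hx.const_mul _

theorem ae_eq_zero (H : IsWeakDifference c L M u p q) (hc : 0 < c) {t : ℝ} (ht : 0 ≤ t) :
    ∀ᵐ x, u t x = 0 := by
  have hu := H.isBoundedFlow
  refine ae_eq_zero_of_integral_contDiff_smul_eq_zero
    (locallyIntegrable_of_abs_le (hu.measurable_space t) (hu.abs_le t)) fun φ hφ hs => ?_
  have hbound : Tendsto _ atTop (𝓝 (√(∫ x, (deriv φ x * √(1 + x ^ 2)) ^ 2) * √0)) :=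
    ((H.tendsto_energy_mollifier hc ht).sqrt).const_mul _
  rw [Real.sqrt_zero, mul_zero] at hbound
  exact tendsto_nhds_unique (H.tendsto_integral_mul_mollifier hφ.continuous hs t)
    (squeeze_zero_norm (fun n => (H.isFluxSolution_mollifier n).abs_integral_mul_le
      (hφ.of_le (by simp)) hs ht) hbound)

end IsWeakDifference

/-! ### Uniqueness of bounded distributional solutions -/

namespace IsBoundedFlow

variable {f g : ℝ → ℝ → ℝ} {k : ℝ → ℝ} {M N : ℝ}

theorem of_continuous (hf : Continuous (uncurry f)) (hM : ∀ s x, |f s x| ≤ M) :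
    IsBoundedFlow M f where
  measurable := hf.measurable
  abs_le := hM
  ae_continuousAt _ := .of_forall fun x =>
    (hf.comp (by fun_prop : Continuous fun r : ℝ => (r, x))).continuousAt

theorem sub (hf : IsBoundedFlow M f) (hg : IsBoundedFlow N g) :
    IsBoundedFlow (M + N) fun s x => f s x - g s x where
  measurable := hf.measurable.sub hg.measurable
  abs_le s x := (abs_sub _ _).trans (add_le_add (hf.abs_le s x) (hg.abs_le s x))
  ae_continuousAt s := by
    filter_upwards [hf.ae_continuousAt s, hg.ae_continuousAt s] with x hfx hgx using hfx.sub hgx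

theorem exists_comp (hf : IsBoundedFlow M f) {P : ℝ → ℝ} (hP : Continuous P) :
    ∃ N, IsBoundedFlow N fun s x => P (f s x) := by
  obtain ⟨N, hN⟩ := (isCompact_Icc (a := -M) (b := M)).exists_bound_of_continuousOn hP.continuousOn
  refine ⟨N, hP.measurable.comp hf.measurable, fun s x => hN _ (_root_.abs_le.1 (hf.abs_le s x)),
    fun s => ?_⟩
  filter_upwards [hf.ae_continuousAt s] with x hx using hP.continuousAt.comp hx

theorem intervalIntegrable (hf : IsBoundedFlow M f) (s t x : ℝ) :
    IntervalIntegrable (fun r => f r x) volume s t :=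
  (intervalIntegrable_const (c := M)).mono_fun
    (hf.measurable.comp measurable_prodMk_right).aestronglyMeasurable
    (.of_forall fun r => (hf.abs_le r x).trans (le_abs_self M))

theorem integrable_prod_mul (hf : IsBoundedFlow M f) (hk : Integrable k) (s t : ℝ) :
    Integrable (uncurry fun r x => k x * f r x) ((volume.restrict (uIoc s t)).prod volume) := by
  have : IsFiniteMeasure ((volume : Measure ℝ).restrict (uIoc s t)) := ⟨by simp [uIoc]⟩
  exact (hk.comp_snd _).mul_bdd hf.measurable.aestronglyMeasurable
    (.of_forall fun z => hf.abs_le z.1 z.2)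

theorem integrable_intervalIntegral (hf : IsBoundedFlow M f) (hk : Integrable k) (s t : ℝ) :
    Integrable fun x => ∫ r in s..t, k x * f r x := by
  simp only [intervalIntegral.intervalIntegral_eq_integral_uIoc]
  exact (hf.integrable_prod_mul hk s t).integral_prod_right.smul (if s ≤ t then 1 else -1 : ℝ)

theorem integral_intervalIntegral_swap (hf : IsBoundedFlow M f) (hk : Integrable k) (s t : ℝ) :
    ∫ x, ∫ r in s..t, k x * f r x = ∫ r in s..t, ∫ x, k x * f r x :=
  (intervalIntegral_integral_swap (hf.integrable_prod_mul hk s t)).symm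

end IsBoundedFlow

section TestFunction

variable {φ : ℝ → ℝ}

theorem contDiff_infty_deriv (hφ : ContDiff ℝ (⊤ : ℕ∞) φ) : ContDiff ℝ (⊤ : ℕ∞) (deriv φ) :=
  (contDiff_infty_iff_deriv.1 hφ).2

theorem integrable_deriv_of_test (hφ : ContDiff ℝ (⊤ : ℕ∞) φ) (hs : HasCompactSupport φ) :
    Integrable (deriv φ) :=
  (contDiff_infty_deriv hφ).continuous.integrable_of_hasCompactSupport hs.deriv

theorem continuous_weakFlux {M N : ℝ} {p q : ℝ → ℝ → ℝ} (hp : IsBoundedFlow M p)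
    (hq : IsBoundedFlow N q) (hφ : ContDiff ℝ (⊤ : ℕ∞) φ) (hs : HasCompactSupport φ) :
    Continuous fun s => 1 / 2 * (∫ x, deriv (deriv φ) x * p s x) + ∫ x, deriv φ x * q s x :=
  ((hp.continuous_integral_mul
    (integrable_deriv_of_test (contDiff_infty_deriv hφ) hs.deriv)).const_mul _).add
    (hq.continuous_integral_mul (integrable_deriv_of_test hφ hs))

end TestFunction

namespace IsDistributionalSolution

variable {u₀ : ℝ → ℝ} {u v p p' q q' : ℝ → ℝ → ℝ} {M N : ℝ}

theorem sub {Mu Mv Mp Mp' Mq Mq' : ℝ} (hu : IsDistributionalSolution u₀ u p q)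
    (hv : IsDistributionalSolution u₀ v p' q') (hub : IsBoundedFlow Mu u)
    (hvb : IsBoundedFlow Mv v) (hp : IsBoundedFlow Mp p) (hp' : IsBoundedFlow Mp' p')
    (hq : IsBoundedFlow Mq q) (hq' : IsBoundedFlow Mq' q') :
    IsDistributionalSolution 0 (fun s x => u s x - v s x) (fun s x => p s x - p' s x)
      fun s x => q s x - q' s x := by
  intro φ hφ hs t ht
  have hk₀ := hφ.continuous.integrable_of_hasCompactSupport (μ := volume) hs
  have hk₁ := integrable_deriv_of_test hφ hs
  have hk₂ := integrable_deriv_of_test (contDiff_infty_deriv hφ) hs.deriv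
  simp only [mul_sub, Pi.zero_apply, mul_zero, integral_zero, sub_zero]
  rw [integral_sub (hub.integrable_mul hk₀ t) (hvb.integrable_mul hk₀ t),
    ← sub_sub_sub_cancel_right _ _ (∫ x, φ x * u₀ x), hu φ hφ hs t ht, hv φ hφ hs t ht,
    ← intervalIntegral.integral_sub
      ((continuous_weakFlux hp hq hφ hs).intervalIntegrable _ _)
      ((continuous_weakFlux hp' hq' hφ hs).intervalIntegrable _ _)]
  refine intervalIntegral.integral_congr fun s _ => ?_
  rw [integral_sub (hp.integrable_mul hk₂ s) (hp'.integrable_mul hk₂ s),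
    integral_sub (hq.integrable_mul hk₁ s) (hq'.integrable_mul hk₁ s)]
  ring

variable {P Q : ℝ → ℝ} {K K' : NNReal} {c : ℝ}

theorem exists_isWeakDifference (hP : LipschitzWith K P) (hQ : LipschitzWith K' Q)
    (hcP : ∀ x y, c * ((x - y) * (x - y)) ≤ (x - y) * (P x - P y)) (hub : IsBoundedFlow M u)
    (hvb : IsBoundedFlow N v)
    (hu : IsDistributionalSolution u₀ u (fun s x => P (u s x)) fun s x => Q (u s x))
    (hv : IsDistributionalSolution u₀ v (fun s x => P (v s x)) fun s x => Q (v s x)) :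
    ∃ L M', IsWeakDifference c L M' (fun s x => u s x - v s x)
      (fun s x => P (u s x) - P (v s x)) fun s x => Q (u s x) - Q (v s x) := by
  obtain ⟨_, hPu⟩ := hub.exists_comp hP.continuous
  obtain ⟨_, hPv⟩ := hvb.exists_comp hP.continuous
  obtain ⟨_, hQu⟩ := hub.exists_comp hQ.continuous
  obtain ⟨_, hQv⟩ := hvb.exists_comp hQ.continuous
  have huv := hub.sub hvb
  have hp := hPu.sub hPv
  have hq := hQu.sub hQv
  exact ⟨max K K', _,
    { isBoundedFlow := { huv with
        abs_le := fun s x => (huv.abs_le s x).trans (le_max_left _ _) }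
      isBoundedFlow_diffusion := { hp with
        abs_le := fun s x => (hp.abs_le s x).trans ((le_max_left _ _).trans (le_max_right _ _)) }
      isBoundedFlow_drift := { hq with
        abs_le := fun s x => (hq.abs_le s x).trans ((le_max_right _ _).trans (le_max_right _ _)) }
      coercive := fun s x => hcP _ _
      abs_diffusion_le := fun s x => (hP.dist_le_mul _ _).trans
        (mul_le_mul_of_nonneg_right (le_max_left _ _) (abs_nonneg _))
      abs_drift_le := fun s x => (hQ.dist_le_mul _ _).trans
        (mul_le_mul_of_nonneg_right (le_max_right _ _) (abs_nonneg _))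
      isDistributionalSolution := hu.sub hv hub hvb hPu hPv hQu hQv }⟩

theorem ae_eq (hc : 0 < c) (hP : LipschitzWith K P) (hQ : LipschitzWith K' Q)
    (hcP : ∀ x y, c * ((x - y) * (x - y)) ≤ (x - y) * (P x - P y)) (hub : IsBoundedFlow M u)
    (hvb : IsBoundedFlow N v)
    (hu : IsDistributionalSolution u₀ u (fun s x => P (u s x)) fun s x => Q (u s x))
    (hv : IsDistributionalSolution u₀ v (fun s x => P (v s x)) fun s x => Q (v s x)) {t : ℝ}
    (ht : 0 ≤ t) : u t =ᵐ[volume] v t := by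
  obtain ⟨L, M', H⟩ := exists_isWeakDifference hP hQ hcP hub hvb hu hv
  filter_upwards [H.ae_eq_zero hc ht] with x hx using sub_eq_zero.1 hx

end IsDistributionalSolution

theorem eq_of_ae_eq_of_continuousWithinAt_Ici {f g : ℝ → ℝ} (h : f =ᵐ[volume] g)
    (hf : ∀ x, ContinuousWithinAt f (Ici x) x) (hg : ∀ x, ContinuousWithinAt g (Ici x) x) :
    f = g := by
  funext x
  by_contra hne
  have hdiff : ContinuousWithinAt (fun y => f y - g y) (Ici x) x := (hf x).sub (hg x)
  obtain ⟨u, hu, hsub⟩ := mem_nhdsGT_iff_exists_Ioo_subset.1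
    ((hdiff.mono Ioi_subset_Ici_self).eventually_ne (sub_ne_zero.2 hne))
  obtain ⟨y, hfg, hy⟩ := (Measure.dense_of_ae h).exists_mem_open isOpen_Ioo (nonempty_Ioo.2 hu)
  exact hsub hy (sub_eq_zero.2 hfg)

/-! ### Flows of probability measures -/

theorem measurable_toMeasure_of_continuous {T Ω : Type*} [TopologicalSpace T] [MeasurableSpace T]
    [OpensMeasurableSpace T] [TopologicalSpace Ω] [MeasurableSpace Ω] [BorelSpace Ω]
    [HasOuterApproxClosed Ω] {P : T → ProbabilityMeasure Ω} (hP : Continuous P) :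
    Measurable fun s => (P s : Measure Ω) := by
  refine Measurable.measure_of_isPiSystem_of_isProbabilityMeasure
    ((BorelSpace.measurable_eq (α := Ω)).trans borel_eq_generateFrom_isClosed) isPiSystem_isClosed
    fun S hS => ?_
  have husc : UpperSemicontinuous fun s => (P s : Measure Ω) S := fun s =>
    upperSemicontinuousAt_iff_limsup_le.2
      (ProbabilityMeasure.limsup_measure_closed_le_of_tendsto (hP.tendsto s) hS)
  exact husc.measurable

theorem cdfOf_eq_cdf (μ : Measure ℝ) [IsProbabilityMeasure μ] :
    cdfOf μ = ProbabilityTheory.cdf μ :=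
  funext fun x => (ProbabilityTheory.cdf_eq_real μ x).symm

theorem cdfOf_mem_Icc (μ : Measure ℝ) [IsProbabilityMeasure μ] (x : ℝ) :
    cdfOf μ x ∈ Icc (0 : ℝ) 1 :=
  ⟨measureReal_nonneg, measureReal_le_one⟩

section Law

variable {P : ℝ → ProbabilityMeasure ℝ}

theorem measurable_uncurry_cdfOf (hP : Continuous P) :
    Measurable (uncurry fun s x => cdfOf (P s) x) := by
  let κ : ProbabilityTheory.Kernel (ℝ × ℝ) ℝ :=
    ⟨fun z => P z.1, (measurable_toMeasure_of_continuous hP).comp measurable_fst⟩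
  have : ProbabilityTheory.IsMarkovKernel κ :=
    ⟨fun z => inferInstanceAs (IsProbabilityMeasure (P z.1 : Measure ℝ))⟩
  exact (ProbabilityTheory.Kernel.measurable_kernel_prodMk_left (κ := κ)
    (measurableSet_le measurable_snd (measurable_snd.comp measurable_fst))).ennreal_toReal

theorem continuousAt_cdfOf (hP : Continuous P) {s x : ℝ} (hx : (P s : Measure ℝ) {x} = 0) :
    ContinuousAt (fun r => cdfOf (P r) x) s :=
  (ENNReal.tendsto_toReal (measure_ne_top _ _)).comp
    (ProbabilityMeasure.tendsto_measure_of_null_frontier_of_tendsto' (hP.tendsto s)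
      (by rwa [frontier_Iic]))

theorem isBoundedFlow_cdfOf (hP : Continuous P) : IsBoundedFlow 1 fun s x => cdfOf (P s) x where
  measurable := measurable_uncurry_cdfOf hP
  abs_le s x := by
    obtain ⟨h0, h1⟩ := cdfOf_mem_Icc (P s : Measure ℝ) x
    rwa [abs_of_nonneg h0]
  ae_continuousAt s := by
    have hatoms := (Measure.countable_meas_level_set_pos (μ := (P s : Measure ℝ)) (g := id)
      measurable_id).ae_notMem volume
    filter_upwards [hatoms] with x hx
    exact continuousAt_cdfOf hP (nonpos_iff_eq_zero.1 (not_lt.1 hx))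

end Law

theorem MemF.exists_continuous {F : ℝ → ℝ → ℝ} (h : MemF F) :
    ∃ P : ℝ → ProbabilityMeasure ℝ, Continuous P ∧ ∀ s, 0 ≤ s → F s = cdfOf (P s) := by
  obtain ⟨P, hP, -, -, hF⟩ := h
  refine ⟨fun s => P (max s 0), hP.comp_continuous (by fun_prop) fun s => le_max_right s 0,
    fun s hs => funext fun x => ?_⟩
  simp only [max_eq_left hs, hF s hs, cdfOf]

/-! ### Weak and classical solutions as distributional solutions -/

section WeakSolution

variable {A B F₀ φ : ℝ → ℝ} {F u p q : ℝ → ℝ → ℝ} {Mp Mq t : ℝ}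

theorem integral_intervalIntegral_weakFlux (hp : IsBoundedFlow Mp p) (hq : IsBoundedFlow Mq q)
    (hφ : ContDiff ℝ (⊤ : ℕ∞) φ) (hs : HasCompactSupport φ) (t : ℝ) :
    ∫ x, ∫ s in (0 : ℝ)..t, (1 / 2 * (deriv (deriv φ) x * p s x) + deriv φ x * q s x) =
      ∫ s in (0 : ℝ)..t,
        (1 / 2 * (∫ x, deriv (deriv φ) x * p s x) + ∫ x, deriv φ x * q s x) := by
  have hk₁ := integrable_deriv_of_test hφ hs
  have hk₂ := integrable_deriv_of_test (contDiff_infty_deriv hφ) hs.deriv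
  rw [intervalIntegral.integral_add
      (((hp.continuous_integral_mul hk₂).const_mul _).intervalIntegrable _ _)
      ((hq.continuous_integral_mul hk₁).intervalIntegrable _ _),
    intervalIntegral.integral_const_mul, ← hp.integral_intervalIntegral_swap hk₂,
    ← hq.integral_intervalIntegral_swap hk₁, ← integral_const_mul,
    ← integral_add ((hp.integrable_intervalIntegral hk₂ _ _).const_mul _)
      (hq.integrable_intervalIntegral hk₁ _ _)]
  refine integral_congr_ae (.of_forall fun x => ?_)
  simp only
  rw [intervalIntegral.integral_add
      (((hp.intervalIntegrable 0 t x).const_mul _).const_mul _)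
      ((hq.intervalIntegrable 0 t x).const_mul _), intervalIntegral.integral_const_mul]

theorem IsWeakSolution.integral_sub_integral_eq (hF : IsWeakSolution A B F₀ F)
    (hφ : ContDiff ℝ (⊤ : ℕ∞) φ) (hs : HasCompactSupport φ) (ht : 0 ≤ t) :
    (∫ x, φ x * F t x) - ∫ x, φ x * F₀ x =
      ∫ x, ∫ s in (0 : ℝ)..t,
        (1 / 2 * (deriv (deriv φ) x * A (F s x)) + deriv φ x * B (F s x)) := by
  let η : ContDiffBump (0 : ℝ) := ⟨t + 1, t + 2, by linarith, by linarith⟩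
  have hη : ∀ s ∈ Icc 0 t, (η : ℝ → ℝ) =ᶠ[𝓝 s] 1 := fun s hs => by
    refine η.eventuallyEq_one_of_mem_ball ?_
    rw [mem_ball_zero_iff, Real.norm_eq_abs, abs_of_nonneg hs.1]
    exact hs.2.trans_lt (lt_add_one t)
  have hsupp : HasCompactSupport (uncurry fun s x => η s * φ x) :=
    HasCompactSupport.intro (η.hasCompactSupport.isCompact.prod hs.isCompact) fun z hz => by
      rcases not_and_or.1 (mt mem_prod.2 hz) with h | h
      · simp only [uncurry, image_eq_zero_of_notMem_tsupport h, zero_mul]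
      · simp only [uncurry, image_eq_zero_of_notMem_tsupport h, mul_zero]
  have h := hF (fun s x => η s * φ x)
    ((η.contDiff.comp contDiff_fst).mul (hφ.comp contDiff_snd)) hsupp t ht
  simp only [(hη t ⟨ht, le_rfl⟩).eq_of_nhds, (hη 0 ⟨le_rfl, ht⟩).eq_of_nhds, Pi.one_apply,
    one_mul] at h
  rw [h]
  refine integral_congr_ae (.of_forall fun x => intervalIntegral.integral_congr fun s hst => ?_)
  rw [uIcc_of_le ht] at hst
  have hderiv : deriv (fun r => η r * φ x) s = 0 := by
    rw [((hη s hst).fun_mul (EventuallyEq.refl _ fun _ => φ x)).deriv_eq]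
    simp
  simp only [hderiv, (hη s hst).eq_of_nhds, Pi.one_apply, one_mul]
  ring

theorem IsWeakSolution.isDistributionalSolution (hF : IsWeakSolution A B F₀ F)
    (hp : IsBoundedFlow Mp p) (hq : IsBoundedFlow Mq q) (hu : ∀ s, 0 ≤ s → u s = F s)
    (hpF : ∀ s, 0 ≤ s → ∀ x, p s x = A (F s x)) (hqF : ∀ s, 0 ≤ s → ∀ x, q s x = B (F s x)) :
    IsDistributionalSolution F₀ u p q := by
  intro φ hφ hs t ht
  rw [hu t ht, hF.integral_sub_integral_eq hφ hs ht,
    ← integral_intervalIntegral_weakFlux hp hq hφ hs t]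
  refine integral_congr_ae (.of_forall fun x => intervalIntegral.integral_congr fun s hst => ?_)
  rw [uIcc_of_le ht] at hst
  simp only [hpF s hst.1, hqF s hst.1]

end WeakSolution

theorem integral_mul_eq_neg_integral_deriv_mul {φ g g' : ℝ → ℝ} (hφ : ContDiff ℝ 1 φ)
    (hs : HasCompactSupport φ) (hg : ∀ x, HasDerivAt g (g' x) x)
    (hφg : Integrable fun x => φ x * g' x) :
    ∫ x, φ x * g' x = -∫ x, deriv φ x * g x := by
  have hgc : Continuous g := continuous_iff_continuousAt.2 fun x => (hg x).continuousAt
  exact integral_mul_deriv_eq_deriv_mul_of_integrable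
    (fun x _ => (hφ.differentiable one_ne_zero x).hasDerivAt) (fun x _ => hg x) hφg
    (((hφ.continuous_deriv le_rfl).mul hgc).integrable_of_hasCompactSupport hs.deriv.mul_right)
    ((hφ.continuous.mul hgc).integrable_of_hasCompactSupport hs.mul_right)

theorem IsDistributionalSolution.of_hasDerivWithinAt {u p p' p'' q q' : ℝ → ℝ → ℝ}
    {M Mp Mq : ℝ} (hu : IsBoundedFlow M u) (hp'' : IsBoundedFlow Mp p'')
    (hq' : IsBoundedFlow Mq q') (hp : ∀ s x, HasDerivAt (p s) (p' s x) x)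
    (hp' : ∀ s x, HasDerivAt (p' s) (p'' s x) x) (hq : ∀ s x, HasDerivAt (q s) (q' s x) x)
    (hut : ∀ s x, 0 ≤ s →
      HasDerivWithinAt (fun r => u r x) (1 / 2 * p'' s x - q' s x) (Ici 0) s) :
    IsDistributionalSolution (u 0) u p q := by
  intro φ hφ hs t ht
  have hφ₁ : ContDiff ℝ 1 φ := hφ.of_le (by simp)
  have hφ₂ : ContDiff ℝ 1 (deriv φ) := (contDiff_infty_deriv hφ).of_le (by simp)
  have hk := hφ.continuous.integrable_of_hasCompactSupport (μ := volume) hs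
  have hp'c : ∀ s, Continuous (p' s) := fun s =>
    continuous_iff_continuousAt.2 fun x => (hp' s x).continuousAt
  have hrhs : IsBoundedFlow _ fun s x => 1 / 2 * p'' s x - q' s x :=
    (hp''.exists_comp (P := fun y => 1 / 2 * y) (by fun_prop)).choose_spec.sub hq'
  have hparts : ∀ s, ∫ x, φ x * (1 / 2 * p'' s x - q' s x) =
      1 / 2 * (∫ x, deriv (deriv φ) x * p s x) + ∫ x, deriv φ x * q s x := fun s => by
    have hsplit : ∀ x, φ x * (1 / 2 * p'' s x - q' s x) =
        1 / 2 * (φ x * p'' s x) - φ x * q' s x := fun x => by ring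
    simp_rw [hsplit]
    rw [integral_sub ((hp''.integrable_mul hk s).const_mul _) (hq'.integrable_mul hk s),
      integral_const_mul,
      integral_mul_eq_neg_integral_deriv_mul hφ₁ hs (hp' s) (hp''.integrable_mul hk s),
      integral_mul_eq_neg_integral_deriv_mul hφ₂ hs.deriv (hp s)
        ((hφ₂.continuous.mul (hp'c s)).integrable_of_hasCompactSupport hs.deriv.mul_right),
      integral_mul_eq_neg_integral_deriv_mul hφ₁ hs (hq s) (hq'.integrable_mul hk s)]
    ring
  have hftc : ∀ x, u t x - u 0 x = ∫ s in (0 : ℝ)..t, (1 / 2 * p'' s x - q' s x) := fun x =>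
    (intervalIntegral.integral_eq_sub_of_hasDerivAt_of_le ht
      (fun s hs => (hut s x hs.1).continuousWithinAt.mono Icc_subset_Ici_self)
      (fun s hs => (hut s x hs.1.le).hasDerivAt (Ici_mem_nhds hs.1))
      (hrhs.intervalIntegrable 0 t x)).symm
  simp_rw [← hparts]
  rw [← integral_sub (hu.integrable_mul hk t) (hu.integrable_mul hk 0),
    ← hrhs.integral_intervalIntegral_swap hk]
  simp only [← mul_sub, hftc, intervalIntegral.integral_const_mul]

/-! ### Solutions of the Cauchy problem obtained by the change of unknown -/

theorem exists_lipschitzWith_primitive_clampExtend {f : ℝ → ℝ} (hf : ContinuousOn f (Icc 0 1)) :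
    ∃ K, LipschitzWith K (primitive (clampExtend f)) := by
  obtain ⟨M, hM⟩ := isCompact_Icc.exists_bound_of_continuousOn hf
  have hderiv := hasDerivAt_primitive (continuous_clampExtend hf)
  refine ⟨M.toNNReal, lipschitzWith_of_nnnorm_deriv_le (fun u => (hderiv u).differentiableAt)
    fun u => ?_⟩
  rw [(hderiv u).deriv, ← NNReal.coe_le_coe]
  exact (hM _ (Subtype.coe_prop _)).trans (Real.le_coe_toNNReal M)

theorem mul_self_le_mul_primitive_clampExtend_sub {f : ℝ → ℝ} {c : ℝ}
    (hf : ContinuousOn f (Icc 0 1)) (hc : ∀ u ∈ Icc (0 : ℝ) 1, c ≤ f u) (u v : ℝ) :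
    c * ((u - v) * (u - v)) ≤
      (u - v) * (primitive (clampExtend f) u - primitive (clampExtend f) v) := by
  have hmono := monotone_sub_mul_of_le_hasDerivAt
    (hasDerivAt_primitive (continuous_clampExtend hf)) fun u => hc _ (Subtype.coe_prop _)
  have key := (hmono.monovary monotone_id).sub_mul_sub_nonneg u v
  simp only [id] at key
  linarith

/-- `∂ₓu` in terms of `j = (u, ∂ₓw, ∂ₓₓw)`, where `w = primitive a u`. -/
def spaceDerivOf (a : ℝ → ℝ) (j : ℝ × ℝ × ℝ) : ℝ := j.2.1 / a j.1

/-- `∂ₓₓu` in terms of `j = (u, ∂ₓw, ∂ₓₓw)`, where `w = primitive a u` and `p` is the derivative of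
`a`. -/
def secondSpaceDerivOf (a p : ℝ → ℝ) (j : ℝ × ℝ × ℝ) : ℝ :=
  (j.2.2 - p j.1 * spaceDerivOf a j * spaceDerivOf a j) / a j.1

/-- `½ ∂ₓₓ(primitive a u) - ∂ₓ(primitive b u)` in terms of `j = (u, ∂ₓw, ∂ₓₓw)`, where
`w = primitive a u`. -/
def timeDerivOf (a b : ℝ → ℝ) (j : ℝ × ℝ × ℝ) : ℝ := 1 / 2 * j.2.2 - b j.1 * spaceDerivOf a j

section Jet

variable {a b p : ℝ → ℝ} {s : Set ℝ} {t : Set (ℝ × ℝ)}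

theorem continuousOn_spaceDerivOf (ha : ContinuousOn a s) (ha0 : ∀ u ∈ s, a u ≠ 0) :
    ContinuousOn (spaceDerivOf a) (s ×ˢ t) :=
  (by fun_prop : ContinuousOn (fun j : ℝ × ℝ × ℝ => j.2.1) (s ×ˢ t)).div
    (ha.comp continuousOn_fst fun _ hj => hj.1) fun j hj => ha0 j.1 hj.1

theorem continuousOn_secondSpaceDerivOf (ha : ContinuousOn a s) (ha0 : ∀ u ∈ s, a u ≠ 0)
    (hp : ContinuousOn p s) : ContinuousOn (secondSpaceDerivOf a p) (s ×ˢ t) := by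
  have hx := continuousOn_spaceDerivOf (t := t) ha ha0
  exact ((by fun_prop : ContinuousOn (fun j : ℝ × ℝ × ℝ => j.2.2) (s ×ˢ t)).sub
    (((hp.comp continuousOn_fst fun _ hj => hj.1).mul hx).mul hx)).div
    (ha.comp continuousOn_fst fun _ hj => hj.1) fun j hj => ha0 j.1 hj.1

theorem continuousOn_timeDerivOf (ha : ContinuousOn a s) (ha0 : ∀ u ∈ s, a u ≠ 0)
    (hb : ContinuousOn b s) : ContinuousOn (timeDerivOf a b) (s ×ˢ t) :=
  (by fun_prop : ContinuousOn (fun j : ℝ × ℝ × ℝ => 1 / 2 * j.2.2) (s ×ˢ t)).sub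
    ((hb.comp continuousOn_fst fun _ hj => hj.1).mul (continuousOn_spaceDerivOf ha ha0))

end Jet

/-- `F` is a bounded `C^{1,2}` solution of `∂ₜF = ½ ∂ₓₓ(A(F)) - ∂ₓ(B(F))` for times in `s`, where
`A` and `B` are the primitives of `a` and `b`, with bounded derivatives `Ft = ∂ₜF`, `Fx = ∂ₓF` and
`Fxx = ∂ₓₓF`. -/
structure IsClassicalCauchySolution (a b : ℝ → ℝ) (s : Set ℝ) (F Ft Fx Fxx : ℝ → ℝ → ℝ) :
    Prop where
  hasDerivWithinAt_time : ∀ t ∈ s, ∀ x, HasDerivWithinAt (fun r => F r x) (Ft t x) s t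
  hasDerivAt : ∀ t ∈ s, ∀ x, HasDerivAt (F t) (Fx t x) x
  hasDerivAt_deriv : ∀ t ∈ s, ∀ x, HasDerivAt (Fx t) (Fxx t x) x
  continuousOn : ContinuousOn (uncurry F) (s ×ˢ univ)
  continuousOn_time : ContinuousOn (uncurry Ft) (s ×ˢ univ)
  continuousOn_deriv : ContinuousOn (uncurry Fx) (s ×ˢ univ)
  continuousOn_deriv_deriv : ContinuousOn (uncurry Fxx) (s ×ˢ univ)
  exists_bound : ∃ M, ∀ t ∈ s, ∀ x, |F t x| ≤ M ∧ |Ft t x| ≤ M ∧ |Fx t x| ≤ M ∧ |Fxx t x| ≤ M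
  equation : ∀ t ∈ s, ∀ x,
    Ft t x = 1 / 2 * deriv (fun y => deriv (fun z => primitive a (F t z)) y) x -
      deriv (fun y => primitive b (F t y)) x

namespace IsClassicalCauchySolution

variable {a b : ℝ → ℝ} {s s' : Set ℝ} {F F' Ft Fx Fxx : ℝ → ℝ → ℝ}

theorem mono (H : IsClassicalCauchySolution a b s F Ft Fx Fxx) (hs : s' ⊆ s) :
    IsClassicalCauchySolution a b s' F Ft Fx Fxx where
  hasDerivWithinAt_time t ht x := (H.hasDerivWithinAt_time t (hs ht) x).mono hs
  hasDerivAt t ht := H.hasDerivAt t (hs ht)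
  hasDerivAt_deriv t ht := H.hasDerivAt_deriv t (hs ht)
  continuousOn := H.continuousOn.mono (prod_mono_left hs)
  continuousOn_time := H.continuousOn_time.mono (prod_mono_left hs)
  continuousOn_deriv := H.continuousOn_deriv.mono (prod_mono_left hs)
  continuousOn_deriv_deriv := H.continuousOn_deriv_deriv.mono (prod_mono_left hs)
  exists_bound := H.exists_bound.imp fun _ hM t ht => hM t (hs ht)
  equation t ht := H.equation t (hs ht)

theorem congr (H : IsClassicalCauchySolution a b s F Ft Fx Fxx) (h : ∀ t ∈ s, F' t = F t) :
    IsClassicalCauchySolution a b s F' Ft Fx Fxx where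
  hasDerivWithinAt_time t ht x := (H.hasDerivWithinAt_time t ht x).congr
    (fun r hr => congrFun (h r hr) x) (congrFun (h t ht) x)
  hasDerivAt t ht x := h t ht ▸ H.hasDerivAt t ht x
  hasDerivAt_deriv := H.hasDerivAt_deriv
  continuousOn := H.continuousOn.congr fun z hz => congrFun (h z.1 hz.1) z.2
  continuousOn_time := H.continuousOn_time
  continuousOn_deriv := H.continuousOn_deriv
  continuousOn_deriv_deriv := H.continuousOn_deriv_deriv
  exists_bound := H.exists_bound.imp fun _ hM t ht x => h t ht ▸ hM t ht x
  equation t ht x := h t ht ▸ H.equation t ht x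

end IsClassicalCauchySolution

namespace IsPrimitiveInverse

variable {a b p J w₀ : ℝ → ℝ} {c C : ℝ} {W E Z : ℝ → ℝ → ℝ}

theorem continuous (I : IsPrimitiveInverse a J c) : Continuous J :=
  continuous_iff_continuousAt.2 fun w => (I.hasDerivAt w).continuousAt

section Jet

variable (I : IsPrimitiveInverse a J c)
  (S : IsClassicalSolution (fun w => clampExtend a (J w)) (fun w => clampExtend b (J w)) w₀
    (primitive a 1) C W E Z)

include I S

theorem comp_mem_Icc (t x : ℝ) : J (W t x) ∈ Icc (0 : ℝ) 1 :=
  I.mem_Icc _ (S.mem_Icc t x)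

theorem primitive_comp (t x : ℝ) : primitive a (J (W t x)) = W t x :=
  I.right _ (S.mem_Icc t x)

theorem jet_mem (t x : ℝ) :
    (J (W t x), E t x, Z t x) ∈ Icc (0 : ℝ) 1 ×ˢ (Icc (-C) C ×ˢ Icc (-C) C) :=
  ⟨I.comp_mem_Icc S t x, abs_le.1 (S.abs_deriv_le t x), abs_le.1 (S.abs_deriv_deriv_le t x)⟩

theorem continuousOn_jet :
    ContinuousOn (uncurry fun t x => (J (W t x), E t x, Z t x)) (Ici 0 ×ˢ univ) :=
  (I.continuous.comp_continuousOn S.continuousOn).prodMk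
    (S.continuousOn_deriv.prodMk S.continuousOn_deriv_deriv)

theorem continuousOn_comp_jet {Φ : ℝ × ℝ × ℝ → ℝ}
    (hΦ : ContinuousOn Φ (Icc (0 : ℝ) 1 ×ˢ (Icc (-C) C ×ˢ Icc (-C) C))) :
    ContinuousOn (uncurry fun t x => Φ (J (W t x), E t x, Z t x)) (Ici 0 ×ˢ univ) :=
  hΦ.comp (I.continuousOn_jet S) fun z _ => I.jet_mem S z.1 z.2

theorem exists_abs_comp_jet_le {Φ : ℝ × ℝ × ℝ → ℝ}
    (hΦ : ContinuousOn Φ (Icc (0 : ℝ) 1 ×ˢ (Icc (-C) C ×ˢ Icc (-C) C))) :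
    ∃ M, ∀ t x, |Φ (J (W t x), E t x, Z t x)| ≤ M := by
  have hcompact := (isCompact_Icc (a := (0 : ℝ)) (b := 1)).prod
    ((isCompact_Icc (a := -C) (b := C)).prod (isCompact_Icc (a := -C) (b := C)))
  obtain ⟨M, hM⟩ := hcompact.exists_bound_of_continuousOn hΦ
  exact ⟨M, fun t x => hM _ (I.jet_mem S t x)⟩

theorem exists_isBoundedFlow_comp_jet {Φ : ℝ × ℝ × ℝ → ℝ}
    (hΦ : ContinuousOn Φ (Icc (0 : ℝ) 1 ×ˢ (Icc (-C) C ×ˢ Icc (-C) C))) :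
    ∃ M, IsBoundedFlow M
      fun s x => Φ (J (W (max s 0) x), E (max s 0) x, Z (max s 0) x) := by
  obtain ⟨M, hM⟩ := I.exists_abs_comp_jet_le S hΦ
  refine ⟨M, .of_continuous ?_ fun s => hM (max s 0)⟩
  exact (I.continuousOn_comp_jet S hΦ).comp_continuous
    (f := fun z : ℝ × ℝ => (max z.1 0, z.2)) (by fun_prop)
    fun z => ⟨le_max_right z.1 0, mem_univ z.2⟩

theorem hasDerivAt_comp (t x : ℝ) :
    HasDerivAt (fun y => J (W t y)) (spaceDerivOf a (J (W t x), E t x, Z t x)) x := by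
  refine ((I.hasDerivAt (W t x)).comp x (S.hasDerivAt t x)).congr_deriv ?_
  rw [clampExtend_of_mem a (I.comp_mem_Icc S t x), spaceDerivOf, inv_mul_eq_div]

theorem hasDerivWithinAt_comp (ha0 : ∀ u ∈ Icc (0 : ℝ) 1, a u ≠ 0) {t : ℝ} (ht : 0 ≤ t) (x : ℝ) :
    HasDerivWithinAt (fun s => J (W s x)) (timeDerivOf a b (J (W t x), E t x, Z t x))
      (Ici 0) t := by
  refine ((I.hasDerivAt (W t x)).comp_hasDerivWithinAt t
    (S.hasDerivWithinAt_time t x ht)).congr_deriv ?_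
  have hmem := I.comp_mem_Icc S t x
  have := ha0 _ hmem
  simp only [quasilinearRHS, timeDerivOf, spaceDerivOf, clampExtend_of_mem _ hmem]
  field_simp

theorem hasDerivAt_spaceDerivOf (ha0 : ∀ u ∈ Icc (0 : ℝ) 1, a u ≠ 0)
    (hap : ∀ u ∈ Icc (0 : ℝ) 1, HasDerivWithinAt a (p u) (Icc 0 1) u) (t x : ℝ) :
    HasDerivAt (fun y => spaceDerivOf a (J (W t y), E t y, Z t y))
      (secondSpaceDerivOf a p (J (W t x), E t x, Z t x)) x := by
  have hmem := I.comp_mem_Icc S t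
  have haJ := (hap _ (hmem x)).comp_hasDerivAt x (I.hasDerivAt_comp S t x) (.of_forall hmem)
  refine ((S.hasDerivAt_deriv t x).div haJ (ha0 _ (hmem x))).congr_deriv ?_
  have := ha0 _ (hmem x)
  simp only [secondSpaceDerivOf, spaceDerivOf, comp_apply]
  field_simp

theorem hasDerivAt_primitive_comp (hb : ContinuousOn b (Icc 0 1)) (t x : ℝ) :
    HasDerivAt (fun y => primitive b (J (W t y)))
      (b (J (W t x)) * spaceDerivOf a (J (W t x), E t x, Z t x)) x := by
  have hmem := I.comp_mem_Icc S t
  exact (hasDerivWithinAt_primitive hb (hmem x)).comp_hasDerivAt (h := fun y => J (W t y)) x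
    (I.hasDerivAt_comp S t x) (.of_forall hmem)

theorem timeDerivOf_eq (hb : ContinuousOn b (Icc 0 1)) (t x : ℝ) :
    timeDerivOf a b (J (W t x), E t x, Z t x) =
      1 / 2 * deriv (fun y => deriv (fun z => primitive a (J (W t z))) y) x -
        deriv (fun y => primitive b (J (W t y))) x := by
  have hE : (fun y => deriv (fun z => W t z) y) = E t := funext fun y => (S.hasDerivAt t y).deriv
  simp only [I.primitive_comp S, hE, (S.hasDerivAt_deriv t x).deriv,
    (I.hasDerivAt_primitive_comp S hb t x).deriv, timeDerivOf]

theorem isClassicalCauchySolution (ha : ContinuousOn a (Icc 0 1)) (hb : ContinuousOn b (Icc 0 1))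
    (ha0 : ∀ u ∈ Icc (0 : ℝ) 1, a u ≠ 0)
    (hap : ∀ u ∈ Icc (0 : ℝ) 1, HasDerivWithinAt a (p u) (Icc 0 1) u)
    (hp : ContinuousOn p (Icc 0 1)) :
    IsClassicalCauchySolution a b (Ici 0) (fun t x => J (W t x))
      (fun t x => timeDerivOf a b (J (W t x), E t x, Z t x))
      (fun t x => spaceDerivOf a (J (W t x), E t x, Z t x))
      fun t x => secondSpaceDerivOf a p (J (W t x), E t x, Z t x) where
  hasDerivWithinAt_time t ht := I.hasDerivWithinAt_comp S ha0 ht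
  hasDerivAt t _ := I.hasDerivAt_comp S t
  hasDerivAt_deriv t _ := I.hasDerivAt_spaceDerivOf S ha0 hap t
  continuousOn := I.continuousOn_comp_jet S continuousOn_fst
  continuousOn_time := I.continuousOn_comp_jet S (continuousOn_timeDerivOf ha ha0 hb)
  continuousOn_deriv := I.continuousOn_comp_jet S (continuousOn_spaceDerivOf ha ha0)
  continuousOn_deriv_deriv := I.continuousOn_comp_jet S (continuousOn_secondSpaceDerivOf ha ha0 hp)
  exists_bound := by
    obtain ⟨M₀, hM₀⟩ := I.exists_abs_comp_jet_le S continuousOn_fst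
    obtain ⟨M₁, hM₁⟩ := I.exists_abs_comp_jet_le S (continuousOn_timeDerivOf ha ha0 hb)
    obtain ⟨M₂, hM₂⟩ := I.exists_abs_comp_jet_le S (continuousOn_spaceDerivOf ha ha0)
    obtain ⟨M₃, hM₃⟩ := I.exists_abs_comp_jet_le S (continuousOn_secondSpaceDerivOf ha ha0 hp)
    refine ⟨max (max M₀ M₁) (max M₂ M₃), fun t _ x => ?_⟩
    simp only [le_max_iff, hM₀ t x, hM₁ t x, hM₂ t x, hM₃ t x, true_or, or_true, and_self]
  equation t _ := I.timeDerivOf_eq S hb t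

theorem isDistributionalSolution (ha : ContinuousOn a (Icc 0 1)) (hb : ContinuousOn b (Icc 0 1))
    (ha0 : ∀ u ∈ Icc (0 : ℝ) 1, a u ≠ 0) :
    IsDistributionalSolution (fun x => J (w₀ x)) (fun s x => J (W (max s 0) x))
      (fun s x => primitive (clampExtend a) (J (W (max s 0) x)))
      fun s x => primitive (clampExtend b) (J (W (max s 0) x)) := by
  obtain ⟨_, hu⟩ := I.exists_isBoundedFlow_comp_jet S continuousOn_fst
  obtain ⟨_, hZ⟩ := I.exists_isBoundedFlow_comp_jet S (Φ := fun j => j.2.2) (by fun_prop)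
  obtain ⟨_, hq⟩ := I.exists_isBoundedFlow_comp_jet S
    (Φ := fun j => b j.1 * spaceDerivOf a j)
    ((hb.comp continuousOn_fst fun _ hj => hj.1).mul (continuousOn_spaceDerivOf ha ha0))
  simp only [primitive_clampExtend _ (I.comp_mem_Icc S _ _), I.primitive_comp S]
  have h := IsDistributionalSolution.of_hasDerivWithinAt hu hZ hq
    (fun s => S.hasDerivAt (max s 0)) (fun s => S.hasDerivAt_deriv (max s 0))
    (fun s => I.hasDerivAt_primitive_comp S hb (max s 0)) fun s x hs => by
      have := I.hasDerivWithinAt_comp S ha0 hs x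
      simp only [max_eq_left hs]
      exact this.congr (fun r hr => by rw [max_eq_left hr]) (by rw [max_eq_left hs])
  simpa only [max_self, S.initial] using h

theorem eq_comp_of_isWeakSolution (hc : 0 < c) (hca : ∀ u ∈ Icc (0 : ℝ) 1, c ≤ a u)
    (ha : ContinuousOn a (Icc 0 1)) (hb : ContinuousOn b (Icc 0 1)) {F₀ : ℝ → ℝ}
    {F : ℝ → ℝ → ℝ} (hF₀ : ∀ x, J (w₀ x) = F₀ x)
    (hF : IsWeakSolution (primitive a) (primitive b) F₀ F) (hFmem : MemF F) {t : ℝ}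
    (ht : 0 ≤ t) : F t = fun x => J (W t x) := by
  obtain ⟨P, hP, hFP⟩ := hFmem.exists_continuous
  have hu := isBoundedFlow_cdfOf hP
  obtain ⟨_, hv⟩ := I.exists_isBoundedFlow_comp_jet S continuousOn_fst
  obtain ⟨_, hLa⟩ := exists_lipschitzWith_primitive_clampExtend ha
  obtain ⟨_, hLb⟩ := exists_lipschitzWith_primitive_clampExtend hb
  obtain ⟨_, hp⟩ := hu.exists_comp hLa.continuous
  obtain ⟨_, hq⟩ := hu.exists_comp hLb.continuous
  have hFdist := hF.isDistributionalSolution hp hq (fun s hs => (hFP s hs).symm)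
    (fun s hs x => by rw [hFP s hs, primitive_clampExtend a (cdfOf_mem_Icc _ x)])
    fun s hs x => by rw [hFP s hs, primitive_clampExtend b (cdfOf_mem_Icc _ x)]
  have hWdist := I.isDistributionalSolution S ha hb fun u hu => (hc.trans_le (hca u hu)).ne'
  simp only [hF₀] at hWdist
  have hae := hFdist.ae_eq hc hLa hLb (mul_self_le_mul_primitive_clampExtend_sub ha hca) hu hv
    hWdist ht
  simp only [max_eq_left ht] at hae
  rw [hFP t ht]
  refine eq_of_ae_eq_of_continuousWithinAt_Ici hae (fun x => ?_) fun x =>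
    (I.hasDerivAt_comp S t x).continuousAt.continuousWithinAt
  rw [cdfOf_eq_cdf]
  exact (ProbabilityTheory.cdf _).right_continuous x

end Jet

end IsPrimitiveInverse

theorem exists_lipschitzOnWith_of_hasDerivWithinAt {f f' : ℝ → ℝ} {s : Set ℝ} (hs : Convex ℝ s)
    (hsc : IsCompact s) (hf : ∀ x ∈ s, HasDerivWithinAt f (f' x) s x) (hf' : ContinuousOn f' s) :
    ∃ K, LipschitzOnWith K f s := by
  obtain ⟨M, hM⟩ := hsc.exists_bound_of_continuousOn hf'
  refine ⟨M.toNNReal, hs.lipschitzOnWith_of_nnnorm_hasDerivWithin_le hf fun x hx => ?_⟩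
  rw [← NNReal.coe_le_coe]
  exact (hM x hx).trans (Real.le_coe_toNNReal M)

theorem hasDerivAt_iteratedDeriv {f : ℝ → ℝ} {n k : ℕ} (hf : ContDiff ℝ n f) (hk : k < n) (x : ℝ) :
    HasDerivAt (iteratedDeriv k f) (iteratedDeriv (k + 1) f x) x := by
  rw [iteratedDeriv_succ]
  exact (hf.differentiable_iteratedDeriv k (mod_cast hk) x).hasDerivAt

theorem classical_regularity_of_probabilistic_solution_general {a a' b f f' : ℝ → ℝ} {c : ℝ}
    {K K' : NNReal} (hc : 0 < c) (hca : ∀ u ∈ Icc (0 : ℝ) 1, c ≤ a u)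
    (ha' : ∀ u ∈ Icc (0 : ℝ) 1, HasDerivWithinAt a (a' u) (Icc 0 1) u)
    (ha'K : LipschitzOnWith K a' (Icc 0 1)) (hbK : LipschitzOnWith K' b (Icc 0 1))
    {m : Measure ℝ} [IsProbabilityMeasure m] (hf : ∀ x, HasDerivAt (cdfOf m) (f x) x)
    (hf' : ∀ x, HasDerivAt f (f' x) x) (hfM : ∃ M, ∀ x, |f x| ≤ M) (hf'L : IsBoundedLipschitz f')
    {F : ℝ → ℝ → ℝ} (hF : IsWeakSolution (primitive a) (primitive b) (cdfOf m) F)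
    (hFmem : MemF F) : ∃ Ft Fx Fxx, IsClassicalCauchySolution a b (Ici 0) F Ft Fx Fxx := by
  obtain ⟨_, haK⟩ := exists_lipschitzOnWith_of_hasDerivWithinAt (convex_Icc 0 1) isCompact_Icc ha'
    ha'K.continuousOn
  have ha := haK.continuousOn
  have ha0 : ∀ u ∈ Icc (0 : ℝ) 1, 0 ≤ a u := fun u hu => hc.le.trans (hca u hu)
  have hmem := cdfOf_mem_Icc m
  have hw₀ : Continuous fun x => primitive a (cdfOf m x) := continuous_iff_continuousAt.2 fun x =>
    ((hasDerivWithinAt_primitive ha (hmem x)).comp_hasDerivAt x (hf x)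
      (.of_forall hmem)).continuousAt
  obtain ⟨J, I⟩ := exists_isPrimitiveInverse ha hc hca
  obtain ⟨_, _, _, H⟩ := exists_isParabolicCoeff hc hca haK hbK I.abs_sub_le
  obtain ⟨L, hL, hgrid⟩ := exists_isGridC21_primitive_comp ha0 haK ha' ha'K hmem hf hf' hfM hf'L
  obtain ⟨C, W, E, Z, S⟩ := H.exists_isClassicalSolution
    (primitive_mem_Icc ha ha0 (right_mem_Icc.2 zero_le_one)).1 hL hw₀ hgrid
  exact ⟨_, _, _, (I.isClassicalCauchySolution S ha hbK.continuousOn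
    (fun u hu => (hc.trans_le (hca u hu)).ne') ha' ha'K.continuousOn).congr fun t ht =>
    I.eq_comp_of_isWeakSolution S hc hca ha hbK.continuousOn (fun x => I.left _ (hmem x)) hF hFmem
      ht⟩

/-- Under (D3), (R2), a finite first moment of `m` and `H*m ∈ H^{3+β}(ℝ)`, the
probabilistic solution is `C^{1,2}` and bounded together with its derivatives on
every strip `[0,T] × ℝ`, and solves the Cauchy problem classically. -/
theorem classical_regularity_of_probabilistic_solution
    (a b : ℝ → ℝ)
    (ha : ContinuousOn a (Set.Icc 0 1)) (hb : ContinuousOn b (Set.Icc 0 1))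
    (ha0 : ∀ u ∈ Set.Icc (0:ℝ) 1, 0 ≤ a u)
    (hD3 : ∃ c > (0:ℝ), ∀ u ∈ Set.Icc (0:ℝ) 1, c ≤ a u)
    (β : NNReal) (hβ : 0 < β)
    (hR2a : ContDiffOn ℝ 2 a (Set.Icc 0 1))
    (hR2b : ContDiffOn ℝ 1 b (Set.Icc 0 1))
    (hR2hold : ∃ C : NNReal,
      HolderOnWith C β (iteratedDerivWithin 2 a (Set.Icc 0 1)) (Set.Icc 0 1) ∧
      HolderOnWith C β (derivWithin b (Set.Icc 0 1)) (Set.Icc 0 1))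
    (m : Measure ℝ) [IsProbabilityMeasure m]
    (hm : Integrable (fun x => |x|) m)
    (hm3 : ContDiff ℝ 3 (cdfOf m))
    (hmbd : ∀ k : ℕ, k ≤ 3 → ∃ M : ℝ, ∀ x : ℝ, |iteratedDeriv k (cdfOf m) x| ≤ M)
    (hmhold : ∃ C : NNReal, HolderWith C β (iteratedDeriv 3 (cdfOf m)))
    (F : ℝ → ℝ → ℝ)
    (hF : IsWeakSolution (primitive a) (primitive b) (cdfOf m) F) (hFmem : MemF F) :
    ∀ T : ℝ, 0 < T →
      ∃ Ft Fx Fxx : ℝ → ℝ → ℝ,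
        (∀ t ∈ Set.Icc (0:ℝ) T, ∀ x : ℝ,
          HasDerivWithinAt (fun s => F s x) (Ft t x) (Set.Icc 0 T) t ∧
          HasDerivAt (fun y => F t y) (Fx t x) x ∧
          HasDerivAt (fun y => Fx t y) (Fxx t x) x) ∧
        ContinuousOn (fun q : ℝ × ℝ => F q.1 q.2) (Set.Icc 0 T ×ˢ (Set.univ : Set ℝ)) ∧
        ContinuousOn (fun q : ℝ × ℝ => Ft q.1 q.2) (Set.Icc 0 T ×ˢ (Set.univ : Set ℝ)) ∧
        ContinuousOn (fun q : ℝ × ℝ => Fx q.1 q.2) (Set.Icc 0 T ×ˢ (Set.univ : Set ℝ)) ∧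
        ContinuousOn (fun q : ℝ × ℝ => Fxx q.1 q.2) (Set.Icc 0 T ×ˢ (Set.univ : Set ℝ)) ∧
        (∃ M : ℝ, ∀ t ∈ Set.Icc (0:ℝ) T, ∀ x : ℝ,
          |F t x| ≤ M ∧ |Ft t x| ≤ M ∧ |Fx t x| ≤ M ∧ |Fxx t x| ≤ M) ∧
        (∀ t ∈ Set.Icc (0:ℝ) T, ∀ x : ℝ,
          Ft t x = (1/2) * deriv (fun y => deriv (fun z => primitive a (F t z)) y) x
            - deriv (fun y => primitive b (F t y)) x) := by
  intro T _
  obtain ⟨c, hc, hca⟩ := hD3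
  have hunique := uniqueDiffOn_Icc (zero_lt_one' ℝ)
  obtain ⟨K, ha'⟩ := (hR2a.derivWithin hunique le_rfl).exists_lipschitzOnWith one_ne_zero
    (convex_Icc 0 1) isCompact_Icc
  obtain ⟨K', hb'⟩ := hR2b.exists_lipschitzOnWith one_ne_zero (convex_Icc 0 1) isCompact_Icc
  have hderiv : ∀ k < 3, ∀ x, HasDerivAt (iteratedDeriv k (cdfOf m))
      (iteratedDeriv (k + 1) (cdfOf m) x) x := fun k hk => hasDerivAt_iteratedDeriv hm3 hk
  obtain ⟨M₂, hM₂⟩ := hmbd 2 (by norm_num)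
  obtain ⟨M₃, hM₃⟩ := hmbd 3 le_rfl
  obtain ⟨Ft, Fx, Fxx, H⟩ := classical_regularity_of_probabilistic_solution_general hc hca
    (fun u hu => (hR2a.differentiableOn two_ne_zero u hu).hasDerivWithinAt) ha' hb'
    (by simpa only [iteratedDeriv_zero] using hderiv 0 (by norm_num)) (hderiv 1 (by norm_num))
    (hmbd 1 (by norm_num)) (.of_hasDerivAt hM₂ (hderiv 2 (by norm_num)) hM₃) hF hFmem
  have HT := H.mono (s' := Icc 0 T) fun _ ht => ht.1
  exact ⟨Ft, Fx, Fxx, fun t ht x =>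
    ⟨HT.hasDerivWithinAt_time t ht x, HT.hasDerivAt t ht x, HT.hasDerivAt_deriv t ht x⟩,
    HT.continuousOn, HT.continuousOn_time, HT.continuousOn_deriv, HT.continuousOn_deriv_deriv,
    HT.exists_bound, HT.equation⟩
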